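/- arXiv:math/0610942 — 2 statements merged into one kernel-verified Lean document; each statement's English description precedes it below -/
import Mathlib

section
/- Let d ≥ 6 be an integer, let ε ∈ (0,1), and set p = (4d+3)/7, q = (4d+3)/4 − ε, r = (4d+3)/3 − ε. Then for every C > 0 there is a constant A > 0 (depending only on d, ε, C) such that for every nonnegative measurable function f on ℝ^d one has ‖T[f]‖_{L^q(L^r),N} ≤ A ‖f‖_{L^p(ℝ^d)}. -/
open MeasureTheory ENNReal

noncomputable section

/-- `ℝ^n` with the Euclidean structure. We model `ℝ^d` as `Euc (d-1) × ℝ`. -/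
abbrev Euc (n : ℕ) := EuclideanSpace ℝ (Fin n)

/-- The local x-ray transform: `T[f](ξ,x) = ∫_0^1 f (x + t(ξ + e_d)) dt`. -/
def xrayT {n : ℕ} (f : Euc n × ℝ → ℝ≥0∞) (ξ x : Euc n) : ℝ≥0∞ :=
  ∫⁻ t in Set.Ioc (0:ℝ) 1, f (x + t • ξ, t)

/-- The Nikodym-order mixed norm `‖T[f]‖_{L^q(L^r),N}`. -/
def nikodymMixedNorm {n : ℕ} (q r C : ℝ) (f : Euc n × ℝ → ℝ≥0∞) : ℝ≥0∞ :=
  (∫⁻ x : Euc n, (∫⁻ ξ in Metric.ball (0 : Euc n) C, xrayT f ξ x ^ r) ^ (q / r)) ^ (1 / q)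

/-- `‖f‖_{L^p}` for a nonnegative (extended-real-valued) function. -/
def lpNorm {α : Type*} [MeasureSpace α] (p : ℝ) (f : α → ℝ≥0∞) : ℝ≥0∞ :=
  (∫⁻ z, f z ^ p) ^ (1 / p)



/-- Affine change of variables. -/
lemma lint_aff {n : ℕ} (f : Euc n → ℝ≥0∞) (hf : Measurable f) (c : ℝ) (hc : c ≠ 0) (a : Euc n) :
    ENNReal.ofReal (|c| ^ n) * ∫⁻ x, f (a + c • x) = ∫⁻ x, f x := by
  have h1 : ∫⁻ x, f (a + c • x) = ∫⁻ y, f (a + y) ∂(Measure.map (fun x : Euc n => c • x) volume) := by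
    rw [lintegral_map (by fun_prop) (by fun_prop)]
  rw [h1, Measure.map_addHaar_smul volume hc, lintegral_smul_measure, lintegral_add_left_eq_self,
    smul_eq_mul, ← mul_assoc, ← ENNReal.ofReal_mul (by positivity)]
  have : |c| ^ n * |(c ^ (Module.finrank ℝ (Euc n)))⁻¹| = 1 := by
    rw [finrank_euclideanSpace_fin, abs_inv, abs_pow]
    have : |c| ^ n ≠ 0 := by positivity
    field_simp
  rw [this]; simp

lemma lint_aff1 (f : ℝ → ℝ≥0∞) (hf : Measurable f) (c : ℝ) (hc : c ≠ 0) (a : ℝ) :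
    ENNReal.ofReal |c| * ∫⁻ x, f (a + c * x) = ∫⁻ x, f x := by
  have h1 : ∫⁻ x, f (a + c * x) = ∫⁻ y, f (a + y) ∂(Measure.map (fun x : ℝ => c * x) volume) := by
    rw [lintegral_map (by fun_prop) (by fun_prop)]
  rw [h1, Real.map_volume_mul_left hc, lintegral_smul_measure, lintegral_add_left_eq_self,
    smul_eq_mul, ← mul_assoc, ← ENNReal.ofReal_mul (by positivity)]
  have : |c| * |c⁻¹| = 1 := by
    rw [abs_inv]
    have : |c| ≠ 0 := by positivity
    field_simp
  rw [this]; simp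

/-- Cauchy-Schwarz for functions supported on a set. -/
lemma cs_set {α : Type*} [MeasurableSpace α] (ν : Measure α) (f : α → ℝ≥0∞) (hf : Measurable f)
    (S : Set α) (hS : MeasurableSet S) (h0 : ∀ x, x ∉ S → f x = 0) :
    (∫⁻ x, f x ∂ν) ^ 2 ≤ ν S * ∫⁻ x, f x ^ 2 ∂ν := by
  have h := ENNReal.lintegral_mul_le_Lp_mul_Lq ν (Real.HolderConjugate.two_two)
    (f := S.indicator 1) (g := f) ((measurable_one.indicator hS).aemeasurable) hf.aemeasurable
  have e1 : (∫⁻ x, ((S.indicator (1 : α → ℝ≥0∞)) * f) x ∂ν) = ∫⁻ x, f x ∂ν := by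
    apply lintegral_congr
    intro x
    by_cases hx : x ∈ S
    · simp [hx]
    · simp [hx, h0 x hx]
  have e2 : (∫⁻ x, (S.indicator (1 : α → ℝ≥0∞) x) ^ (2:ℝ) ∂ν) = ν S := by
    rw [← lintegral_indicator_one hS]
    apply lintegral_congr
    intro x
    by_cases hx : x ∈ S <;> simp [hx]
  rw [e1, e2] at h
  have e3 : ∀ y : ℝ≥0∞, (y ^ (1/2:ℝ)) ^ 2 = y := by
    intro y
    rw [← ENNReal.rpow_natCast, ← ENNReal.rpow_mul]; norm_num
  calc (∫⁻ x, f x ∂ν) ^ 2 ≤ (ν S ^ (1/2:ℝ) * (∫⁻ x, f x ^ (2:ℝ) ∂ν) ^ (1/2:ℝ)) ^ 2 := by gcongr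
    _ = ν S * ∫⁻ x, f x ^ 2 ∂ν := by
      rw [mul_pow, e3, e3]; simp

lemma cs_int {α : Type*} [MeasurableSpace α] (ν : Measure α) (f : α → ℝ≥0∞) (hf : Measurable f)
    (S : Set α) :
    (∫⁻ x in S, f x ∂ν) ^ 2 ≤ ν S * ∫⁻ x in S, f x ^ 2 ∂ν := by
  have := cs_set (ν.restrict S) f hf Set.univ MeasurableSet.univ (by simp)
  simpa using this


lemma dir_indep {n : ℕ} (t1 t0 b κ : ℝ) (hκ : κ ≠ 0) (hκ1 : κ ≠ 1) (h1 : b ≠ t1) (h2 : t0 ≠ t1)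
    (h3 : b ≠ t0) (a a' : ℝ) (ha : a = t1 + κ * (b - t1)) (ha' : a' = t1 + κ * (t0 - t1))
    (h4 : a ≠ t0) (p1 o p2 p1z oz p2z o' u v w : Euc n)
    (e1 : p1 = (o' - ((t1 - t0) / (a' - t0)) • o') + ((t1 - t0) / (a' - t0)) • w)
    (e2 : o = (-((a - t0) / (t1 - a))) • p1 + ((t1 - t0) / (t1 - a)) • u)
    (e3 : p2 = (o - ((b - t0) / (a - t0)) • o) + ((b - t0) / (a - t0)) • v)
    (e1z : p1z = ((t1 - t0) / (a' - t0)) • w)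
    (e2z : oz = (-((a - t0) / (t1 - a))) • p1z + ((t1 - t0) / (t1 - a)) • u)
    (e3z : p2z = (oz - ((b - t0) / (a - t0)) • oz) + ((b - t0) / (a - t0)) • v) :
    p2 - o' = p2z := by
  have k1 : t1 - a ≠ 0 := by
    rw [ha]; intro h
    have : κ * (b - t1) = 0 := by linarith
    rcases mul_eq_zero.mp this with h | h
    · exact hκ h
    · exact h1 (by linarith)
  have k2 : a' - t0 ≠ 0 := by
    rw [ha']; intro h
    have : (κ - 1) * (t0 - t1) = 0 := by linarith
    rcases mul_eq_zero.mp this with h | h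
    · exact hκ1 (by linarith)
    · exact h2 (by linarith)
  have k3 : a - t0 ≠ 0 := sub_ne_zero.mpr h4
  subst e1 e2 e3 e1z e2z e3z
  ext i
  simp only [PiLp.sub_apply, PiLp.add_apply, PiLp.smul_apply, smul_eq_mul]
  have key : (1 - (b - t0) / (a - t0)) * (-((a - t0) / (t1 - a))) * (1 - (t1 - t0) / (a' - t0)) = 1 := by
    field_simp
    subst ha ha'
    ring
  linear_combination (o' i) * key

lemma lint_sub_eq {n : ℕ} (t : ℝ) (v : Euc n) (f : Euc n → ℝ≥0∞) :
    ∫⁻ o, f (o - t • v) = ∫⁻ z, f z := lintegral_sub_right_eq_self f (t • v)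

set_option maxHeartbeats 1000000 in
/-- The core slice estimate. -/
lemma core {n : ℕ} (G : Set (Euc n × Euc n)) (hG : MeasurableSet G)
    (t1 t0 b κ : ℝ) (hκ : κ ≠ 0) (hκ1 : κ ≠ 1) (h1 : b ≠ t1) (h2 : t0 ≠ t1)
    (h3 : b ≠ t0) (a a' : ℝ) (ha : a = t1 + κ * (b - t1)) (ha' : a' = t1 + κ * (t0 - t1))
    (h4 : a ≠ t0) (E1 E0 Eb Ea Ea' : Set (Euc n)) (hE1 : MeasurableSet E1) (hE0 : MeasurableSet E0)
    (hEb : MeasurableSet Eb) (hEa : MeasurableSet Ea) (hEa' : MeasurableSet Ea')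
    (s1 : ∀ l ∈ G, l.2 + t1 • l.1 ∈ E1) (s0 : ∀ l ∈ G, l.2 + t0 • l.1 ∈ E0)
    (sb : ∀ l ∈ G, l.2 + b • l.1 ∈ Eb) (sa : ∀ l ∈ G, l.2 + a • l.1 ∈ Ea)
    (sa' : ∀ l ∈ G, l.2 + a' • l.1 ∈ Ea') (μ : ℝ≥0∞)
    (hμ : ∀ v, volume {z | (v, z) ∈ G} ≤ μ) :
    ENNReal.ofReal ((|b - t0| * |a - t0| * |t1 - a| * |a' - t0|) ^ n) * volume G ^ 4 ≤
      volume E0 ^ 2 * volume E1 * volume Eb * volume Ea ^ 2 * volume Ea' * μ := by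
  have k1 : t1 - a ≠ 0 := by
    rw [ha]; intro h
    have : κ * (b - t1) = 0 := by linarith
    rcases mul_eq_zero.mp this with h | h
    · exact hκ h
    · exact h1 (by linarith)
  have k2 : a' - t0 ≠ 0 := by
    rw [ha']; intro h
    have : (κ - 1) * (t0 - t1) = 0 := by linarith
    rcases mul_eq_zero.mp this with h | h
    · exact hκ1 (by linarith)
    · exact h2 (by linarith)
  have k3 : a - t0 ≠ 0 := sub_ne_zero.mpr h4
  have k4 : t1 - t0 ≠ 0 := sub_ne_zero.mpr (Ne.symm h2)
  have k5 : b - t0 ≠ 0 := sub_ne_zero.mpr h3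
  set χ : Euc n → Euc n → ℝ≥0∞ := fun o v => G.indicator 1 (v, o - t0 • v) with hχ
  have hχm : Measurable (Function.uncurry χ) := by
    have : Measurable (G.indicator (1 : Euc n × Euc n → ℝ≥0∞)) := measurable_one.indicator hG
    exact this.comp (by fun_prop : Measurable fun p : Euc n × Euc n => (p.2, p.1 - t0 • p.2))
  have hχm' : ∀ {β : Type} [MeasurableSpace β] (f g : β → Euc n), Measurable f → Measurable g →
      Measurable fun x => χ (f x) (g x) := by
    intro β _ f g hf hg
    exact hχm.comp (hf.prodMk hg)
  have hχ1 : ∀ o v, χ o v ≤ 1 := by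
    intro o v
    simp only [hχ]
    by_cases h : (v, o - t0 • v) ∈ G <;> simp [h]
  have hχs : ∀ (t : ℝ) (S : Set (Euc n)), (∀ l ∈ G, l.2 + t • l.1 ∈ S) → ∀ o v,
      χ o v ≤ S.indicator 1 (o + (t - t0) • v) := by
    intro t S hS o v
    simp only [hχ]
    by_cases h : (v, o - t0 • v) ∈ G
    · have := hS _ h
      have e : o - t0 • v + t • v = o + (t - t0) • v := by module
      simp only [e] at this
      simp [h, this]
    · simp [h]
  set m : Euc n → ℝ≥0∞ := fun o => ∫⁻ v, χ o v with hm
  have hmm : Measurable m := hχm.lintegral_prod_right'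
  have hGm : volume G = ∫⁻ o, m o := by
    simp only [hm]
    rw [lintegral_lintegral_swap hχm.aemeasurable]
    simp only [hχ]
    have : ∀ v, ∫⁻ o, G.indicator (1 : Euc n × Euc n → ℝ≥0∞) (v, o - t0 • v) =
        ∫⁻ z, G.indicator (1 : Euc n × Euc n → ℝ≥0∞) (v, z) := fun v =>
      lint_sub_eq t0 v (fun z => G.indicator (1 : Euc n × Euc n → ℝ≥0∞) (v, z))
    simp only [this]
    rw [← lintegral_indicator_one hG, Measure.volume_eq_prod,
      lintegral_prod _ ((measurable_one.indicator hG).aemeasurable)]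
  have cs1 : volume G ^ 2 ≤ volume E0 * ∫⁻ o, m o ^ 2 := by
    rw [hGm]
    refine cs_set volume m hmm E0 hE0 ?_
    intro o ho
    simp only [hm]
    rw [← lintegral_zero (μ := (volume : Measure (Euc n)))]
    refine lintegral_congr fun v => ?_
    have := hχs t0 E0 s0 o v
    simp only [sub_self, zero_smul, add_zero] at this
    simpa [ho] using this
  set P : Euc n × Euc n → ℝ≥0∞ := fun p => ∫⁻ o, χ o ((t1 - t0)⁻¹ • (p.1 - o)) *
    χ o ((b - t0)⁻¹ • (p.2 - o)) with hP
  have hPm : Measurable P := by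
    simp only [hP]
    refine Measurable.lintegral_prod_right' (f := fun q : (Euc n × Euc n) × Euc n =>
      χ q.2 ((t1 - t0)⁻¹ • (q.1.1 - q.2)) * χ q.2 ((b - t0)⁻¹ • (q.1.2 - q.2))) ?_
    exact (hχm' _ _ (by fun_prop) (by fun_prop)).mul (hχm' _ _ (by fun_prop) (by fun_prop))
  have cs2 : (∫⁻ p, P p) ^ 2 ≤ (volume E1 * volume Eb) * ∫⁻ p, P p ^ 2 := by
    have := cs_set volume P hPm (E1 ×ˢ Eb) (hE1.prod hEb) ?_
    · rwa [Measure.volume_eq_prod, Measure.prod_prod] at this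
    · rintro ⟨p1, p2⟩ hp
      simp only [hP]
      rw [← lintegral_zero (μ := (volume : Measure (Euc n)))]
      refine lintegral_congr fun o => ?_
      have q1 := hχs t1 E1 s1 o ((t1 - t0)⁻¹ • (p1 - o))
      have q2 := hχs b Eb sb o ((b - t0)⁻¹ • (p2 - o))
      rw [smul_inv_smul₀ k4, add_sub_cancel] at q1
      rw [smul_inv_smul₀ k5, add_sub_cancel] at q2
      simp only [Set.mem_prod, not_and_or] at hp
      rcases hp with hp | hp
      · have : χ o ((t1 - t0)⁻¹ • (p1 - o)) = 0 := by simpa [hp] using q1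
        simp [this]
      · have : χ o ((b - t0)⁻¹ • (p2 - o)) = 0 := by simpa [hp] using q2
        simp [this]
  have aff : ∀ (c : ℝ), c ≠ 0 → ∀ o, ∫⁻ p, χ o (c⁻¹ • (p - o)) = ENNReal.ofReal (|c| ^ n) * m o := by
    intro c hc o
    have := lint_aff (fun p => χ o (c⁻¹ • (p - o))) (hχm' _ _ (by fun_prop) (by fun_prop)) c hc o
    rw [← this]
    simp only [hm, add_sub_cancel_left, inv_smul_smul₀ hc]
  have intP : ∫⁻ p, P p = ENNReal.ofReal (|t1 - t0| ^ n) * ENNReal.ofReal (|b - t0| ^ n) *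
      ∫⁻ o, m o ^ 2 := by
    simp only [hP]
    rw [lintegral_lintegral_swap ((hχm' _ _ (by fun_prop) (by fun_prop)).mul
        (hχm' _ _ (by fun_prop) (by fun_prop))).aemeasurable]
    rw [← lintegral_const_mul _ (by fun_prop)]
    apply lintegral_congr
    intro o
    rw [Measure.volume_eq_prod, lintegral_prod_mul (f := fun p1 => χ o ((t1 - t0)⁻¹ • (p1 - o)))
      (g := fun p2 => χ o ((b - t0)⁻¹ • (p2 - o)))
      (hχm' _ _ (by fun_prop) (by fun_prop)).aemeasurable
      (hχm' _ _ (by fun_prop) (by fun_prop)).aemeasurable, aff _ k4, aff _ k5]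
    ring
  have sq : ∫⁻ p, P p ^ 2 ≤ ENNReal.ofReal (|(b - t0) / (a - t0)| ^ n) *
      ENNReal.ofReal (|(t1 - t0) / (t1 - a)| ^ n) * ENNReal.ofReal (|(t1 - t0) / (a' - t0)| ^ n) *
      (volume Ea ^ 2 * volume Ea' * μ) := by
    set φ : Euc n → ℝ≥0∞ := Ea.indicator 1 with hφ
    set φ' : Euc n → ℝ≥0∞ := Ea'.indicator 1 with hφ'
    have hφm : Measurable φ := measurable_one.indicator hEa
    have hφm' : Measurable φ' := measurable_one.indicator hEa'
    set H : Euc n → Euc n → Euc n → Euc n → ℝ≥0∞ := fun o' p1 o p2 =>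
      φ (o + ((a - t0) / (t1 - t0)) • (p1 - o)) * φ (o + ((a - t0) / (b - t0)) • (p2 - o)) *
      φ' (o' + ((a' - t0) / (t1 - t0)) • (p1 - o')) * χ o' ((b - t0)⁻¹ • (p2 - o')) with hH
    have hHm : ∀ {β : Type} [MeasurableSpace β] (f1 f2 f3 f4 : β → Euc n), Measurable f1 →
        Measurable f2 → Measurable f3 → Measurable f4 →
        Measurable fun x => H (f1 x) (f2 x) (f3 x) (f4 x) := by
      intro β _ f1 f2 f3 f4 m1 m2 m3 m4
      simp only [hH]
      refine (((hφm.comp (by fun_prop)).mul (hφm.comp (by fun_prop))).mul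
        (hφm'.comp (by fun_prop))).mul (hχm' _ _ m1 (by fun_prop))
    have hPH : ∀ p, P p ^ 2 ≤ ∫⁻ o', ∫⁻ o, H o' p.1 o p.2 := by
      intro p
      simp only [hP]
      have mA : Measurable fun o => χ o ((t1 - t0)⁻¹ • (p.1 - o)) * χ o ((b - t0)⁻¹ • (p.2 - o)) :=
        (hχm' _ _ (by fun_prop) (by fun_prop)).mul (hχm' _ _ (by fun_prop) (by fun_prop))
      rw [pow_two, ← lintegral_mul_const _ mA]
      refine lintegral_mono fun o' => ?_
      rw [← lintegral_const_mul _ mA]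
      refine lintegral_mono fun o => ?_
      have q1 := hχs a Ea sa o ((t1 - t0)⁻¹ • (p.1 - o))
      have q2 := hχs a Ea sa o ((b - t0)⁻¹ • (p.2 - o))
      have q3 := hχs a' Ea' sa' o' ((t1 - t0)⁻¹ • (p.1 - o'))
      rw [smul_smul, ← div_eq_mul_inv] at q1 q2 q3
      simp only [hH]
      calc _ = χ o ((t1 - t0)⁻¹ • (p.1 - o)) * χ o ((b - t0)⁻¹ • (p.2 - o)) *
            χ o' ((t1 - t0)⁻¹ • (p.1 - o')) * χ o' ((b - t0)⁻¹ • (p.2 - o')) := by ring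
        _ ≤ _ := by gcongr
    have step1 : ∫⁻ p, P p ^ 2 ≤ ∫⁻ o', ∫⁻ p1, ∫⁻ o, ∫⁻ p2, H o' p1 o p2 := by
      calc ∫⁻ p, P p ^ 2 ≤ ∫⁻ p : Euc n × Euc n, ∫⁻ o', ∫⁻ o, H o' p.1 o p.2 := lintegral_mono hPH
        _ = ∫⁻ o', ∫⁻ p : Euc n × Euc n, ∫⁻ o, H o' p.1 o p.2 := by
          refine lintegral_lintegral_swap (f := fun (p : Euc n × Euc n) o' => ∫⁻ o, H o' p.1 o p.2) ?_
          refine Measurable.aemeasurable (Measurable.lintegral_prod_right'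
            (f := fun q : ((Euc n × Euc n) × Euc n) × Euc n => H q.1.2 q.1.1.1 q.2 q.1.1.2)
            (hHm _ _ _ _ (by fun_prop) (by fun_prop) (by fun_prop) (by fun_prop)))
        _ = _ := by
          refine lintegral_congr fun o' => ?_
          rw [Measure.volume_eq_prod, lintegral_prod _ (Measurable.aemeasurable
            (Measurable.lintegral_prod_right'
            (f := fun q : (Euc n × Euc n) × Euc n => H o' q.1.1 q.2 q.1.2)
            (hHm _ _ _ _ (by fun_prop) (by fun_prop) (by fun_prop) (by fun_prop))))]
          refine lintegral_congr fun p1 => ?_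
          exact lintegral_lintegral_swap (f := fun p2 o => H o' p1 o p2)
            (hHm (β := Euc n × Euc n) _ _ _ _ (by fun_prop) (by fun_prop) (by fun_prop)
              (by fun_prop)).aemeasurable
    set K3 := ENNReal.ofReal (|(b - t0) / (a - t0)| ^ n)
    set K2 := ENNReal.ofReal (|(t1 - t0) / (t1 - a)| ^ n)
    set K1 := ENNReal.ofReal (|(t1 - t0) / (a' - t0)| ^ n)
    set dir : Euc n → Euc n → Euc n → Euc n := fun w u v =>
      (((-((a - t0) / (t1 - a))) • (((t1 - t0) / (a' - t0)) • w) + ((t1 - t0) / (t1 - a)) • u) -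
        ((b - t0) / (a - t0)) • ((-((a - t0) / (t1 - a))) • (((t1 - t0) / (a' - t0)) • w) +
          ((t1 - t0) / (t1 - a)) • u)) + ((b - t0) / (a - t0)) • v with hdir
    have hdirm : Measurable fun q : Euc n × Euc n × Euc n => dir q.1 q.2.1 q.2.2 := by
      simp only [hdir]; fun_prop
    set H' : Euc n → Euc n → Euc n → Euc n → ℝ≥0∞ := fun o' w u v =>
      φ u * φ v * φ' w * χ o' ((b - t0)⁻¹ • dir w u v) with hH'
    have hHm' : ∀ {β : Type} [MeasurableSpace β] (f1 f2 f3 f4 : β → Euc n), Measurable f1 →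
        Measurable f2 → Measurable f3 → Measurable f4 →
        Measurable fun x => H' (f1 x) (f2 x) (f3 x) (f4 x) := by
      intro β _ f1 f2 f3 f4 m1 m2 m3 m4
      simp only [hH']
      refine (((hφm.comp m3).mul (hφm.comp m4)).mul
        (hφm'.comp m2)).mul (hχm' _ _ m1 ?_)
      exact (hdirm.comp (m2.prodMk (m3.prodMk m4))).const_smul ((b - t0)⁻¹)
    have step2 : ∀ o', ∫⁻ p1, ∫⁻ o, ∫⁻ p2, H o' p1 o p2 =
        K3 * K2 * K1 * ∫⁻ w, ∫⁻ u, ∫⁻ v, H' o' w u v := by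
      intro o'
      have c3 : (b - t0) / (a - t0) ≠ 0 := div_ne_zero k5 k3
      have c2 : (t1 - t0) / (t1 - a) ≠ 0 := div_ne_zero k4 k1
      have c1 : (t1 - t0) / (a' - t0) ≠ 0 := div_ne_zero k4 k2
      have A3 : ∀ p1 o, ∫⁻ p2, H o' p1 o p2 = K3 * ∫⁻ v, H o' p1 o
          ((o - ((b - t0) / (a - t0)) • o) + ((b - t0) / (a - t0)) • v) := fun p1 o =>
        (lint_aff (fun p2 => H o' p1 o p2) (hHm _ _ _ _ (by fun_prop) (by fun_prop) (by fun_prop)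
          (by fun_prop)) _ c3 _).symm
      simp only [A3]
      have A2 : ∀ p1, ∫⁻ o, K3 * ∫⁻ v, H o' p1 o
          ((o - ((b - t0) / (a - t0)) • o) + ((b - t0) / (a - t0)) • v) =
          K3 * (K2 * ∫⁻ u, ∫⁻ v, H o' p1 ((-((a - t0) / (t1 - a))) • p1 + ((t1 - t0) / (t1 - a)) • u)
          ((((-((a - t0) / (t1 - a))) • p1 + ((t1 - t0) / (t1 - a)) • u) - ((b - t0) / (a - t0)) • ((-((a - t0) / (t1 - a))) • p1 + ((t1 - t0) / (t1 - a)) • u)) + ((b - t0) / (a - t0)) • v)) := by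
        intro p1
        have mm : Measurable fun o => ∫⁻ v, H o' p1 o
          ((o - ((b - t0) / (a - t0)) • o) + ((b - t0) / (a - t0)) • v) :=
          Measurable.lintegral_prod_right' (f := fun q : Euc n × Euc n => H o' p1 q.1
            ((q.1 - ((b - t0) / (a - t0)) • q.1) + ((b - t0) / (a - t0)) • q.2))
            (hHm _ _ _ _ (by fun_prop) (by fun_prop) (by fun_prop) (by fun_prop))
        rw [lintegral_const_mul _ mm]
        congr 1
        exact (lint_aff _ mm _ c2 _).symm
      simp only [A2]
      set R : Euc n → ℝ≥0∞ := fun p1 => ∫⁻ u, ∫⁻ v, H o' p1 ((-((a - t0) / (t1 - a))) • p1 + ((t1 - t0) / (t1 - a)) • u)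
          ((((-((a - t0) / (t1 - a))) • p1 + ((t1 - t0) / (t1 - a)) • u) - ((b - t0) / (a - t0)) • ((-((a - t0) / (t1 - a))) • p1 + ((t1 - t0) / (t1 - a)) • u)) + ((b - t0) / (a - t0)) • v) with hR
      have mR : Measurable R := by
        refine Measurable.lintegral_prod_right' (f := fun q : Euc n × Euc n => ∫⁻ v, H o' q.1 ((-((a - t0) / (t1 - a))) • q.1 + ((t1 - t0) / (t1 - a)) • q.2)
          ((((-((a - t0) / (t1 - a))) • q.1 + ((t1 - t0) / (t1 - a)) • q.2) - ((b - t0) / (a - t0)) • ((-((a - t0) / (t1 - a))) • q.1 + ((t1 - t0) / (t1 - a)) • q.2)) + ((b - t0) / (a - t0)) • v)) ?_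
        refine Measurable.lintegral_prod_right' (f := fun s : (Euc n × Euc n) × Euc n => H o' s.1.1 ((-((a - t0) / (t1 - a))) • s.1.1 + ((t1 - t0) / (t1 - a)) • s.1.2)
          ((((-((a - t0) / (t1 - a))) • s.1.1 + ((t1 - t0) / (t1 - a)) • s.1.2) - ((b - t0) / (a - t0)) • ((-((a - t0) / (t1 - a))) • s.1.1 + ((t1 - t0) / (t1 - a)) • s.1.2)) + ((b - t0) / (a - t0)) • s.2)) ?_
        exact hHm _ _ _ _ (by fun_prop) (by fun_prop) (by fun_prop) (by fun_prop)
      have A1 := lint_aff R mR _ c1 (o' - ((t1 - t0) / (a' - t0)) • o')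
      change ∫⁻ p1, K3 * (K2 * R p1) = _
      rw [lintegral_const_mul _ (by fun_prop), lintegral_const_mul _ mR, ← A1]
      have : ∀ x y z w : ℝ≥0∞, x * (y * (z * w)) = x * y * z * w := by intros; ring
      rw [this]
      congr 1
      refine lintegral_congr fun w => lintegral_congr fun u => lintegral_congr fun v => ?_
      set p1 := (o' - ((t1 - t0) / (a' - t0)) • o') + ((t1 - t0) / (a' - t0)) • w with hp1
      set o := (-((a - t0) / (t1 - a))) • p1 + ((t1 - t0) / (t1 - a)) • u with ho
      set p2 := (o - ((b - t0) / (a - t0)) • o) + ((b - t0) / (a - t0)) • v with hp2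
      have d1 := dir_indep t1 t0 b κ hκ hκ1 h1 h2 h3 a a' ha ha' h4 p1 o p2 _ _ _ o' u v w hp1 ho hp2
        rfl rfl rfl
      simp only [hH, hH']
      have f1 : o + ((a - t0) / (t1 - t0)) • (p1 - o) = u := by
        ext i
        simp only [ho, PiLp.sub_apply, PiLp.add_apply, PiLp.smul_apply, smul_eq_mul]
        field_simp
        ring
      have f2 : o + ((a - t0) / (b - t0)) • (p2 - o) = v := by
        ext i
        simp only [hp2, PiLp.sub_apply, PiLp.add_apply, PiLp.smul_apply, smul_eq_mul]
        field_simp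
        ring
      have f3 : o' + ((a' - t0) / (t1 - t0)) • (p1 - o') = w := by
        ext i
        simp only [hp1, PiLp.sub_apply, PiLp.add_apply, PiLp.smul_apply, smul_eq_mul]
        field_simp
        ring
      rw [f1, f2, f3, d1]
    have step3 : ∫⁻ o', ∫⁻ w, ∫⁻ u, ∫⁻ v, H' o' w u v =
        ∫⁻ w, ∫⁻ u, ∫⁻ v, ∫⁻ o', H' o' w u v := by
      rw [lintegral_lintegral_swap (f := fun o' w => ∫⁻ u, ∫⁻ v, H' o' w u v)]
      · refine lintegral_congr fun w => ?_
        rw [lintegral_lintegral_swap (f := fun o' u => ∫⁻ v, H' o' w u v)]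
        · refine lintegral_congr fun u => ?_
          rw [lintegral_lintegral_swap (f := fun o' v => H' o' w u v)]
          exact (hHm' (β := Euc n × Euc n) _ _ _ _ (by fun_prop) (by fun_prop) (by fun_prop)
              (by fun_prop)).aemeasurable
        · exact Measurable.aemeasurable (Measurable.lintegral_prod_right'
            (f := fun q : (Euc n × Euc n) × Euc n => H' q.1.1 w q.1.2 q.2)
            (hHm' _ _ _ _ (by fun_prop) (by fun_prop) (by fun_prop) (by fun_prop)))
      · refine Measurable.aemeasurable (Measurable.lintegral_prod_right'
            (f := fun q : (Euc n × Euc n) × Euc n => ∫⁻ v, H' q.1.1 q.1.2 q.2 v) ?_)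
        exact Measurable.lintegral_prod_right'
            (f := fun s : ((Euc n × Euc n) × Euc n) × Euc n => H' s.1.1.1 s.1.1.2 s.1.2 s.2)
            (hHm' _ _ _ _ (by fun_prop) (by fun_prop) (by fun_prop) (by fun_prop))
    have step4 : ∀ w u v, ∫⁻ o', H' o' w u v ≤ φ u * φ v * φ' w * μ := by
      intro w u v
      simp only [hH']
      rw [lintegral_const_mul _ (hχm' _ _ (by fun_prop) (by fun_prop))]
      gcongr
      set e := (b - t0)⁻¹ • dir w u v
      refine le_trans (le_of_eq ?_) (hμ e)
      simp only [hχ]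
      rw [lint_sub_eq t0 e (fun z => G.indicator (1 : Euc n × Euc n → ℝ≥0∞) (e, z))]
      exact lintegral_indicator_one (μ := (volume : Measure (Euc n))) (measurable_prodMk_left (x := e) hG)
    have iφ : ∫⁻ u, φ u = volume Ea := lintegral_indicator_one hEa
    have iφ' : ∫⁻ u, φ' u = volume Ea' := lintegral_indicator_one hEa'
    calc ∫⁻ p, P p ^ 2 ≤ ∫⁻ o', ∫⁻ p1, ∫⁻ o, ∫⁻ p2, H o' p1 o p2 := step1
      _ = K3 * K2 * K1 * ∫⁻ w, ∫⁻ u, ∫⁻ v, ∫⁻ o', H' o' w u v := by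
        simp only [step2]
        rw [lintegral_const_mul, step3]
        refine Measurable.lintegral_prod_right'
            (f := fun q : Euc n × Euc n => ∫⁻ u, ∫⁻ v, H' q.1 q.2 u v) ?_
        refine Measurable.lintegral_prod_right'
            (f := fun q : (Euc n × Euc n) × Euc n => ∫⁻ v, H' q.1.1 q.1.2 q.2 v) ?_
        exact Measurable.lintegral_prod_right'
            (f := fun s : ((Euc n × Euc n) × Euc n) × Euc n => H' s.1.1.1 s.1.1.2 s.1.2 s.2)
            (hHm' _ _ _ _ (by fun_prop) (by fun_prop) (by fun_prop) (by fun_prop))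
      _ ≤ K3 * K2 * K1 * ∫⁻ w, ∫⁻ u, ∫⁻ v, φ u * φ v * φ' w * μ := by
        gcongr with w u v
        exact step4 w u v
      _ = K3 * K2 * K1 * (volume Ea ^ 2 * volume Ea' * μ) := by
        congr 1
        have e1 : ∀ w u, ∫⁻ v, φ u * φ v * φ' w * μ = φ u * (volume Ea * φ' w * μ) := by
          intro w u
          rw [← iφ, ← lintegral_mul_const _ hφm, ← lintegral_mul_const _ (by fun_prop),
            ← lintegral_const_mul _ (by fun_prop)]
          refine lintegral_congr fun v => by ring
        simp only [e1]
        have e2 : ∀ w, ∫⁻ u, φ u * (volume Ea * φ' w * μ) = φ' w * (volume Ea ^ 2 * μ) := by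
          intro w
          rw [lintegral_mul_const _ hφm, iφ]; ring
        simp only [e2]
        rw [lintegral_mul_const _ hφm', iφ']; ring
  have fin : ENNReal.ofReal (|(b - t0) / (a - t0)| ^ n) *
      ENNReal.ofReal (|(t1 - t0) / (t1 - a)| ^ n) * ENNReal.ofReal (|(t1 - t0) / (a' - t0)| ^ n) *
      ENNReal.ofReal ((|b - t0| * |a - t0| * |t1 - a| * |a' - t0|) ^ n) =
      (ENNReal.ofReal (|t1 - t0| ^ n) * ENNReal.ofReal (|b - t0| ^ n)) ^ 2 := by
    rw [← ENNReal.ofReal_mul (by positivity), ← ENNReal.ofReal_mul (by positivity),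
      ← ENNReal.ofReal_mul (by positivity), ← ENNReal.ofReal_mul (by positivity),
      ← ENNReal.ofReal_pow (by positivity)]
    congr 1
    have r1 : |a - t0| ≠ 0 := abs_ne_zero.mpr k3
    have r2 : |t1 - a| ≠ 0 := abs_ne_zero.mpr k1
    have r3 : |a' - t0| ≠ 0 := abs_ne_zero.mpr k2
    rw [← mul_pow, ← mul_pow, ← mul_pow, ← mul_pow, ← pow_mul, mul_comm n 2, pow_mul]
    congr 1
    rw [abs_div, abs_div, abs_div]
    field_simp
  have kne : ENNReal.ofReal (|(b - t0) / (a - t0)| ^ n) *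
      ENNReal.ofReal (|(t1 - t0) / (t1 - a)| ^ n) * ENNReal.ofReal (|(t1 - t0) / (a' - t0)| ^ n) ≠ 0 := by
    have q1 : 0 < |(b - t0) / (a - t0)| ^ n := by positivity
    have q2 : 0 < |(t1 - t0) / (t1 - a)| ^ n := by positivity
    have q3 : 0 < |(t1 - t0) / (a' - t0)| ^ n := by positivity
    exact mul_ne_zero (mul_ne_zero (ENNReal.ofReal_pos.mpr q1).ne' (ENNReal.ofReal_pos.mpr q2).ne')
      (ENNReal.ofReal_pos.mpr q3).ne'
  have ktop : ENNReal.ofReal (|(b - t0) / (a - t0)| ^ n) *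
      ENNReal.ofReal (|(t1 - t0) / (t1 - a)| ^ n) * ENNReal.ofReal (|(t1 - t0) / (a' - t0)| ^ n) ≠ ⊤ := by
    finiteness
  rw [← ENNReal.mul_le_mul_iff_right kne ktop, ← mul_assoc, fin]
  set K := ENNReal.ofReal (|(b - t0) / (a - t0)| ^ n) *
      ENNReal.ofReal (|(t1 - t0) / (t1 - a)| ^ n) * ENNReal.ofReal (|(t1 - t0) / (a' - t0)| ^ n)
  set L := ENNReal.ofReal (|t1 - t0| ^ n) * ENNReal.ofReal (|b - t0| ^ n)
  calc L ^ 2 * volume G ^ 4 = (L * volume G ^ 2) ^ 2 := by ring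
    _ ≤ (L * (volume E0 * ∫⁻ o, m o ^ 2)) ^ 2 := by gcongr
    _ = volume E0 ^ 2 * (∫⁻ p, P p) ^ 2 := by rw [intP]; ring
    _ ≤ volume E0 ^ 2 * ((volume E1 * volume Eb) * (K * (volume Ea ^ 2 * volume Ea' * μ))) := by
      gcongr; exact cs2.trans (by gcongr)
    _ = _ := by ring


/-- indicator as an `ℝ≥0∞`-valued function -/
def ind {α : Type*} (S : Set α) : α → ℝ≥0∞ := S.indicator 1

lemma ind_meas {α : Type*} [MeasurableSpace α] {S : Set α} (hS : MeasurableSet S) :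
    Measurable (ind S) := measurable_one.indicator hS

lemma ind_of_mem {α : Type*} {S : Set α} {x : α} (h : x ∈ S) : ind S x = 1 := by
  simp [ind, h]

lemma ind_of_not_mem {α : Type*} {S : Set α} {x : α} (h : x ∉ S) : ind S x = 0 := by
  simp [ind, h]

lemma ind_le_one {α : Type*} (S : Set α) (x : α) : ind S x ≤ 1 := by
  by_cases h : x ∈ S
  · simp [ind, h]
  · simp [ind, h]

lemma lint_ind {α : Type*} [MeasurableSpace α] (ν : Measure α) {S : Set α} (hS : MeasurableSet S) :
    ∫⁻ x, ind S x ∂ν = ν S := lintegral_indicator_one hS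

/-- the far pairs weight -/
def far (δ : ℝ) (b b' : ℝ) : ℝ≥0∞ := ind {p : ℝ × ℝ | δ ≤ |p.1 - p.2|} (b, b')

lemma far_meas (δ : ℝ) : Measurable fun p : ℝ × ℝ => far δ p.1 p.2 := by
  have : MeasurableSet {p : ℝ × ℝ | δ ≤ |p.1 - p.2|} := by
    apply measurableSet_le <;> fun_prop
  exact ind_meas this

lemma energy_fix (A Bs : Set ℝ) (hA : MeasurableSet A) (hB : MeasurableSet Bs)
    (t1 ℓ lam : ℝ) (hℓ : 0 < ℓ) (hlam : 0 < lam)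
    (h1 : ∀ x ∈ A, |x - t1| ≤ 1) (h2 : ∀ x ∈ Bs, ℓ ≤ |x - t1|) (h2' : ∀ x ∈ Bs, |x - t1| ≤ 1)
    (hB1 : volume Bs ≤ 1)
    (vA : ENNReal.ofReal lam ≤ volume A) (vB : ENNReal.ofReal lam ≤ volume Bs) :
    ENNReal.ofReal (lam ^ 4 * ℓ / 4) ≤ ∫⁻ b, ∫⁻ b', ∫⁻ κ, far (lam ^ 2 * ℓ / 8) b b' *
      (ind Bs b * ind A (t1 + κ * (b - t1))) * (ind Bs b' * ind A (t1 + κ * (b' - t1))) := by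
  set δ := lam ^ 2 * ℓ / 8 with hδ
  have hδ0 : 0 < δ := by positivity
  have mA := ind_meas hA
  have mB := ind_meas hB
  set F : ℝ → ℝ → ℝ≥0∞ := fun κ b => ind Bs b * ind A (t1 + κ * (b - t1)) with hF
  have mF : ∀ {β : Type} [MeasurableSpace β] (f g : β → ℝ), Measurable f → Measurable g →
      Measurable fun x => F (f x) (g x) := by
    intro β _ f g hf hg
    exact (mB.comp hg).mul (mA.comp (by fun_prop))
  set H : ℝ → ℝ≥0∞ := fun κ => ∫⁻ b, F κ b with hH
  have mH : Measurable H := Measurable.lintegral_prod_right' (f := fun p : ℝ × ℝ => F p.1 p.2)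
    (mF _ _ measurable_fst measurable_snd)
  have H1 : ∀ κ, H κ ≤ 1 := by
    intro κ
    refine le_trans (lintegral_mono (g := ind Bs) fun b => ?_) ((lint_ind _ hB).trans_le hB1)
    calc _ ≤ ind Bs b * 1 := by simp only [hF]; gcongr; exact ind_le_one _ _
      _ = _ := mul_one _
  have Fz : ∀ κ b, κ ∉ Set.Icc (-(1/ℓ)) (1/ℓ) → F κ b = 0 := by
    intro κ b hκ
    simp only [hF]
    by_cases hb : b ∈ Bs
    · by_cases ha : t1 + κ * (b - t1) ∈ A
      · exfalso; apply hκ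
        have := h1 _ ha
        rw [add_sub_cancel_left, abs_mul] at this
        have h3 := h2 b hb
        rw [Set.mem_Icc, ← abs_le, le_div_iff₀ hℓ]
        nlinarith [abs_nonneg κ]
      · simp [ind_of_not_mem ha]
    · simp [ind_of_not_mem hb]
  have Hz : ∀ κ, κ ∉ Set.Icc (-(1/ℓ)) (1/ℓ) → H κ = 0 := by
    intro κ hκ
    simp only [hH, Fz κ _ hκ, lintegral_zero]
  set h := ∫⁻ κ, H κ with hh
  have cs : h ^ 2 ≤ ENNReal.ofReal (2 / ℓ) * ∫⁻ κ, H κ ^ 2 := by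
    have := cs_set volume H mH (Set.Icc (-(1/ℓ)) (1/ℓ)) measurableSet_Icc Hz
    rw [Real.volume_Icc] at this
    convert this using 3
    ring
  have hfin : h ≠ ⊤ := by
    have : h ≤ volume (Set.Icc (-(1/ℓ)) (1/ℓ)) := by
      rw [← lint_ind volume measurableSet_Icc]
      refine lintegral_mono fun κ => ?_
      by_cases hκ : κ ∈ Set.Icc (-(1/ℓ)) (1/ℓ)
      · rw [ind_of_mem hκ]; exact H1 κ
      · rw [Hz κ hκ]; exact zero_le
    refine ne_top_of_le_ne_top ?_ this
    rw [Real.volume_Icc]; exact ofReal_ne_top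
  have hmin : ENNReal.ofReal (lam ^ 2) ≤ h := by
    have e : h = ∫⁻ b, ∫⁻ κ, F κ b := by
      simp only [hh, hH]
      exact lintegral_lintegral_swap (mF _ _ measurable_fst measurable_snd).aemeasurable
    rw [e]
    calc ENNReal.ofReal (lam ^ 2) = ENNReal.ofReal lam * ENNReal.ofReal lam := by
          rw [← ENNReal.ofReal_mul hlam.le, pow_two]
      _ ≤ volume Bs * volume A := by gcongr
      _ = ∫⁻ b, ind Bs b * volume A := by rw [lintegral_mul_const _ mB, lint_ind _ hB]
      _ ≤ _ := by
        refine lintegral_mono fun b => ?_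
        by_cases hb : b ∈ Bs
        · simp only [hF, ind_of_mem hb, one_mul]
          have h3 := h2 b hb
          have hc : b - t1 ≠ 0 := by
            intro h0; rw [h0, abs_zero] at h3; linarith
          have := lint_aff1 (ind A) mA (b - t1) hc t1
          rw [lint_ind _ hA] at this
          rw [← this]
          calc _ ≤ 1 * ∫⁻ x, ind A (t1 + (b - t1) * x) := by
                gcongr
                rw [← ENNReal.ofReal_one]
                exact ENNReal.ofReal_le_ofReal (h2' b hb)
            _ = _ := by rw [one_mul]; refine lintegral_congr fun x => by rw [mul_comm]
        · simp [ind_of_not_mem hb]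
  set Y := ∫⁻ b, ∫⁻ b', ∫⁻ κ, far δ b b' * F κ b * F κ b' with hY
  have split : ∫⁻ κ, H κ ^ 2 ≤ ENNReal.ofReal (2 * δ) * h + Y := by
    have eY : Y = ∫⁻ κ, ∫⁻ b, ∫⁻ b', far δ b b' * F κ b * F κ b' := by
      have mfar := far_meas δ
      have e1 : ∀ b, ∫⁻ b', ∫⁻ κ, far δ b b' * F κ b * F κ b' =
          ∫⁻ κ, ∫⁻ b', far δ b b' * F κ b * F κ b' := by
        intro b
        refine lintegral_lintegral_swap (f := fun b' κ => far δ b b' * F κ b * F κ b') ?_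
        exact (((mfar.comp (by fun_prop : Measurable fun p : ℝ × ℝ => (b, p.1))).mul
          (mF _ _ (by fun_prop) (by fun_prop))).mul (mF _ _ (by fun_prop) (by fun_prop))).aemeasurable
      simp only [hY, e1]
      refine lintegral_lintegral_swap (f := fun b κ => ∫⁻ b', far δ b b' * F κ b * F κ b') ?_
      refine (Measurable.lintegral_prod_right' (f := fun p : (ℝ × ℝ) × ℝ =>
        far δ p.1.1 p.2 * F p.1.2 p.1.1 * F p.1.2 p.2) ?_).aemeasurable
      exact (((mfar.comp (by fun_prop : Measurable fun p : (ℝ × ℝ) × ℝ => (p.1.1, p.2))).mul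
          (mF _ _ (by fun_prop) (by fun_prop))).mul (mF _ _ (by fun_prop) (by fun_prop)))
    have mκ : ∀ κ, Measurable (F κ) := fun κ => mF _ _ measurable_const measurable_id
    rw [eY, hh, ← lintegral_const_mul _ mH, ← lintegral_add_left (by fun_prop)]
    refine lintegral_mono fun κ => ?_
    simp only [hH]
    rw [pow_two, ← lintegral_mul_const _ (mκ κ), ← lintegral_const_mul _ (mκ κ),
      ← lintegral_add_left ((mκ κ).const_mul _)]
    refine lintegral_mono fun b => ?_
    rw [← lintegral_const_mul _ (mκ κ)]
    have near : ∫⁻ b', ind (Set.Ioo (b - δ) (b + δ)) b' = ENNReal.ofReal (2 * δ) := by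
      rw [lint_ind _ measurableSet_Ioo, Real.volume_Ioo]; congr 1; ring
    rw [← near, ← lintegral_mul_const _ (ind_meas measurableSet_Ioo), ← lintegral_add_left
      ((ind_meas measurableSet_Ioo).mul_const _)]
    refine lintegral_mono fun b' => ?_
    by_cases hb : δ ≤ |b - b'|
    · have : far δ b b' = 1 := ind_of_mem (S := {p : ℝ × ℝ | δ ≤ |p.1 - p.2|}) hb
      rw [this, one_mul]
      exact le_add_self
    · have : b' ∈ Set.Ioo (b - δ) (b + δ) := by
        rw [not_le, abs_lt] at hb
        constructor <;> linarith
      rw [ind_of_mem this, one_mul]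
      refine le_trans ?_ le_self_add
      calc F κ b * F κ b' ≤ F κ b * 1 := by
            gcongr
            simp only [hF]
            exact mul_le_one' (ind_le_one _ _) (ind_le_one _ _)
        _ = _ := mul_one _
  change _ ≤ Y
  by_cases hYt : Y = ⊤
  · rw [hYt]; exact le_top
  have c2 : h ^ 2 ≤ ENNReal.ofReal (2 / ℓ) * (ENNReal.ofReal (2 * δ) * h + Y) :=
    cs.trans (by gcongr)
  lift h to NNReal using hfin with hr
  lift Y to NNReal using hYt with Yr
  have hr0 : lam ^ 2 ≤ hr := by
    rw [ENNReal.ofReal_le_iff_le_toReal (by simp)] at hmin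
    simpa using hmin
  have c3 : (hr:ℝ) ^ 2 ≤ 2 / ℓ * (2 * δ * hr + Yr) := by
    have := ENNReal.toReal_mono (by finiteness) c2
    rwa [ENNReal.toReal_mul, ENNReal.toReal_add (by finiteness) (by finiteness), ENNReal.toReal_mul,
      ENNReal.toReal_ofReal (by positivity), ENNReal.toReal_ofReal (by positivity),
      ENNReal.toReal_pow] at this
  apply ENNReal.ofReal_le_of_le_toReal
  simp only [ENNReal.coe_toReal]
  have c4 : ℓ * (hr:ℝ)^2 ≤ 2 * (2 * δ * hr + Yr) := by
    have := mul_le_mul_of_nonneg_left c3 hℓ.le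
    have e : ℓ * (2 / ℓ * (2 * δ * hr + Yr)) = 2 * (2 * δ * hr + Yr) := by
      field_simp
    rwa [e] at this
  rw [hδ] at c4
  have hl2 : 0 < lam ^ 2 := by positivity
  have hrp : (0:ℝ) < hr := lt_of_lt_of_le hl2 hr0
  have c5 : lam ^ 2 * ℓ * hr ≤ ℓ * (hr:ℝ)^2 := by
    have := mul_le_mul_of_nonneg_right hr0 (by positivity : 0 ≤ ℓ * hr)
    nlinarith
  have c6 : ℓ * lam ^ 4 ≤ ℓ * (hr:ℝ)^2 := by
    gcongr
    nlinarith
  nlinarith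

lemma energy (A Bs T : Set ℝ) (hA : MeasurableSet A) (hB : MeasurableSet Bs) (hT : MeasurableSet T)
    (ℓ lam : ℝ) (hℓ : 0 < ℓ) (hlam : 0 < lam)
    (A1 : A ⊆ Set.Ico 0 1) (B1 : Bs ⊆ Set.Ico 0 1) (T1 : T ⊆ Set.Ico 0 1)
    (h2 : ∀ x ∈ Bs, ∀ t ∈ T, ℓ ≤ |x - t|) 
    (vA : ENNReal.ofReal lam ≤ volume A) (vB : ENNReal.ofReal lam ≤ volume Bs)
    (vT : ENNReal.ofReal lam ≤ volume T) :
    ENNReal.ofReal (lam ^ 5 * ℓ / 4) ≤ ∫⁻ t1, ∫⁻ b, ∫⁻ b', ∫⁻ κ, ind T t1 * (far (lam ^ 2 * ℓ / 8) b b' *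
      (ind Bs b * ind A (t1 + κ * (b - t1))) * (ind Bs b' * ind A (t1 + κ * (b' - t1)))) := by
  have hd : ∀ x ∈ Set.Ico (0:ℝ) 1, ∀ y ∈ Set.Ico (0:ℝ) 1, |x - y| ≤ 1 := by
    intro x hx y hy
    rw [abs_le]; constructor <;> linarith [hx.1, hx.2, hy.1, hy.2]
  calc ENNReal.ofReal (lam ^ 5 * ℓ / 4) = ENNReal.ofReal lam * ENNReal.ofReal (lam ^ 4 * ℓ / 4) := by
        rw [← ENNReal.ofReal_mul hlam.le]; congr 1; ring
    _ ≤ volume T * ENNReal.ofReal (lam ^ 4 * ℓ / 4) := by gcongr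
    _ = ∫⁻ t1, ind T t1 * ENNReal.ofReal (lam ^ 4 * ℓ / 4) := by
      rw [lintegral_mul_const _ (ind_meas hT), lint_ind _ hT]
    _ ≤ _ := by
      refine lintegral_mono fun t1 => ?_
      by_cases ht : t1 ∈ T
      · simp only [ind_of_mem ht, one_mul]
        refine energy_fix A Bs hA hB t1 ℓ lam hℓ hlam (fun x hx => hd x (A1 hx) _ (T1 ht))
          (fun x hx => h2 x hx t1 ht) (fun x hx => hd x (B1 hx) _ (T1 ht)) ?_ vA vB
        calc volume Bs ≤ volume (Set.Ico (0:ℝ) 1) := measure_mono B1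
          _ = 1 := by simp
      · simp [ind_of_not_mem ht]


lemma jensen01 {α : Type*} [MeasurableSpace α] (ν : Measure α) (hν : ν Set.univ ≤ 1)
    (M : α → ℝ≥0∞) (hM : Measurable M) (s : ℝ) (hs : 0 < s) (hs1 : s < 1) :
    ∫⁻ t, M t ^ s ∂ν ≤ (∫⁻ t, M t ∂ν) ^ s := by
  have hc : Real.HolderConjugate (1 / s) (1 / (1 - s)) := by
    have : 0 < 1 - s := by linarith
    rw [Real.holderConjugate_iff]
    constructor
    · rw [lt_div_iff₀ hs]; linarith
    · rw [one_div, one_div, inv_inv, inv_inv]; ring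
  have := ENNReal.lintegral_mul_le_Lp_mul_Lq ν hc (f := fun t => M t ^ s) (g := fun _ => 1)
    (hM.pow_const s).aemeasurable measurable_const.aemeasurable
  simp only [Pi.mul_apply, mul_one, ENNReal.one_rpow, lintegral_const, one_mul, one_div, inv_inv,
    ← ENNReal.rpow_mul, mul_inv_cancel₀ hs.ne', ENNReal.rpow_one] at this
  refine this.trans ?_
  calc _ ≤ (∫⁻ t, M t ∂ν) ^ s * 1 := by
        gcongr
        calc ν Set.univ ^ (1 - s) ≤ 1 ^ (1 - s) := by
              apply ENNReal.rpow_le_rpow hν; linarith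
          _ = 1 := by simp
    _ = _ := mul_one _

lemma swap4 {α : Type} [MeasureSpace α] [SFinite (volume : Measure α)]
    (F : α → ℝ → ℝ → ℝ → ℝ → ℝ≥0∞)
    (hF : Measurable fun p : α × ℝ × ℝ × ℝ × ℝ => F p.1 p.2.1 p.2.2.1 p.2.2.2.1 p.2.2.2.2) :
    ∫⁻ l, ∫⁻ a, ∫⁻ b, ∫⁻ c, ∫⁻ d, F l a b c d = ∫⁻ a, ∫⁻ b, ∫⁻ c, ∫⁻ d, ∫⁻ l, F l a b c d := by
  have hF' : ∀ {β : Type} [MeasurableSpace β] (f0 : β → α) (f1 f2 f3 f4 : β → ℝ), Measurable f0 →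
      Measurable f1 → Measurable f2 → Measurable f3 → Measurable f4 →
      Measurable fun x => F (f0 x) (f1 x) (f2 x) (f3 x) (f4 x) := by
    intro β _ f0 f1 f2 f3 f4 m0 m1 m2 m3 m4
    exact hF.comp (m0.prodMk (m1.prodMk (m2.prodMk (m3.prodMk m4))))
  rw [lintegral_lintegral_swap (f := fun l a => ∫⁻ b, ∫⁻ c, ∫⁻ d, F l a b c d)]
  · refine lintegral_congr fun a => ?_
    rw [lintegral_lintegral_swap (f := fun l b => ∫⁻ c, ∫⁻ d, F l a b c d)]
    · refine lintegral_congr fun b => ?_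
      rw [lintegral_lintegral_swap (f := fun l c => ∫⁻ d, F l a b c d)]
      · refine lintegral_congr fun c => ?_
        rw [lintegral_lintegral_swap (f := fun l d => F l a b c d)]
        exact (hF' (β := α × ℝ) _ _ _ _ _ (by fun_prop) (by fun_prop) (by fun_prop) (by fun_prop)
          (by fun_prop)).aemeasurable
      · refine Measurable.aemeasurable ?_
        refine Measurable.lintegral_prod_right' (f := fun q : (α × ℝ) × ℝ => F q.1.1 a b q.1.2 q.2) ?_
        exact (hF' _ _ _ _ _ (by fun_prop) (by fun_prop) (by fun_prop) (by fun_prop)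
          (by fun_prop))
    · refine Measurable.aemeasurable ?_
      refine Measurable.lintegral_prod_right' (f := fun q : (α × ℝ) × ℝ => ∫⁻ d, F q.1.1 a q.1.2 q.2 d) ?_
      refine Measurable.lintegral_prod_right' (f := fun q : ((α × ℝ) × ℝ) × ℝ => F q.1.1.1 a q.1.1.2 q.1.2 q.2) ?_
      exact (hF' _ _ _ _ _ (by fun_prop) (by fun_prop) (by fun_prop) (by fun_prop)
          (by fun_prop))
  · refine Measurable.aemeasurable ?_
    refine Measurable.lintegral_prod_right' (f := fun q : (α × ℝ) × ℝ => ∫⁻ c, ∫⁻ d, F q.1.1 q.1.2 q.2 c d) ?_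
    refine Measurable.lintegral_prod_right' (f := fun q : ((α × ℝ) × ℝ) × ℝ => ∫⁻ d, F q.1.1.1 q.1.1.2 q.1.2 q.2 d) ?_
    refine Measurable.lintegral_prod_right' (f := fun q : (((α × ℝ) × ℝ) × ℝ) × ℝ => F q.1.1.1.1 q.1.1.1.2 q.1.1.2 q.1.2 q.2) ?_
    exact (hF' _ _ _ _ _ (by fun_prop) (by fun_prop) (by fun_prop) (by fun_prop)
          (by fun_prop))

/-- the singular kernel -/
def ker (x : ℝ) : ℝ≥0∞ := ind (Set.Ioo (-1:ℝ) 1) x * ENNReal.ofReal (|x| ^ (-(1/2) : ℝ))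

lemma ker_meas : Measurable ker := by
  unfold ker
  have := ind_meas (S := Set.Ioo (-1:ℝ) 1) measurableSet_Ioo
  fun_prop

lemma ker_fin : ∫⁻ x, ker x ≠ ⊤ := by
  have h1 : IntegrableOn (fun x : ℝ => x ^ (-(1/2) : ℝ)) (Set.Ioo 0 1) :=
    (intervalIntegral.integrableOn_Ioo_rpow_iff (by norm_num)).mpr (by norm_num)
  have hp : ∫⁻ x in Set.Ioo (0:ℝ) 1, ENNReal.ofReal (|x| ^ (-(1/2) : ℝ)) ≠ ⊤ := by
    have := h1.2
    rw [hasFiniteIntegral_iff_ofReal] at this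
    · refine ne_of_lt (lt_of_le_of_lt (le_of_eq ?_) this)
      refine setLIntegral_congr_fun measurableSet_Ioo fun x hx => ?_
      simp only [abs_of_pos hx.1]
    · refine (ae_restrict_iff' measurableSet_Ioo).mpr (Filter.Eventually.of_forall fun x hx => ?_)
      exact Real.rpow_nonneg hx.1.le _
  set φ : ℝ → ℝ≥0∞ := fun x => ind (Set.Ioo (0:ℝ) 1) x * ENNReal.ofReal (|x| ^ (-(1/2) : ℝ)) with hφ
  have mφ : Measurable φ := by
    have := ind_meas (S := Set.Ioo (0:ℝ) 1) measurableSet_Ioo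
    fun_prop
  have hφi : ∫⁻ x, φ x ≠ ⊤ := by
    rw [← lintegral_indicator measurableSet_Ioo] at hp
    convert hp using 3 with x
    by_cases hx : x ∈ Set.Ioo (0:ℝ) 1
    · simp only [hφ, ind_of_mem hx, one_mul, Set.indicator_of_mem hx]
    · simp only [hφ, ind_of_not_mem hx, zero_mul, Set.indicator_of_notMem hx]
  have hle : ∀ x, ker x ≤ φ x + φ (-x) + ind {0} x * ⊤ := by
    intro x
    rcases lt_trichotomy x 0 with h | h | h
    · by_cases hx : x ∈ Set.Ioo (-1:ℝ) 1
      · have : -x ∈ Set.Ioo (0:ℝ) 1 := ⟨by linarith, by linarith [hx.1]⟩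
        simp only [ker, hφ, ind_of_mem hx, ind_of_mem this, abs_neg]
        exact le_add_right le_add_self
      · simp only [ker, ind_of_not_mem hx, zero_mul]; exact zero_le
    · subst h
      rw [ind_of_mem (by simp)]; simp
    · by_cases hx : x ∈ Set.Ioo (-1:ℝ) 1
      · have : x ∈ Set.Ioo (0:ℝ) 1 := ⟨by linarith, by linarith [hx.2]⟩
        simp only [ker, hφ, ind_of_mem hx, ind_of_mem this]
        exact le_add_right le_self_add
      · simp only [ker, ind_of_not_mem hx, zero_mul]; exact zero_le
  refine ne_top_of_le_ne_top ?_ (lintegral_mono hle)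
  have m0 := ind_meas (S := ({0} : Set ℝ)) (measurableSet_singleton 0)
  rw [lintegral_add_left (by fun_prop), lintegral_add_left mφ, lintegral_mul_const _ m0,
    lint_ind _ (measurableSet_singleton 0), lintegral_neg_eq_self φ]
  simp only [Real.volume_singleton, zero_mul, add_zero]
  finiteness


/-- slice measure -/
def sl {n : ℕ} (E : Set (Euc n × ℝ)) (t : ℝ) : ℝ≥0∞ := volume {w | (w, t) ∈ E}

lemma sl_meas {n : ℕ} {E : Set (Euc n × ℝ)} (hE : MeasurableSet E) : Measurable (sl E) :=
  measurable_measure_prodMk_right hE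

lemma sl_int {n : ℕ} {E : Set (Euc n × ℝ)} (hE : MeasurableSet E) : ∫⁻ t, sl E t = volume E := by
  rw [Measure.volume_eq_prod, Measure.prod_apply_symm hE]
  rfl

lemma sl_pow {n : ℕ} {E : Set (Euc n × ℝ)} (hE : MeasurableSet E) (I : Set ℝ) (hI : MeasurableSet I)
    (h1 : I ⊆ Set.Ico 0 1) (s : ℝ) (hs : 0 < s) (hs1 : s < 1) :
    ∫⁻ t, ind I t * sl E t ^ s ≤ volume E ^ s := by
  have e : ∫⁻ t, ind I t * sl E t ^ s = ∫⁻ t in I, sl E t ^ s := by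
    rw [← lintegral_indicator hI]
    refine lintegral_congr fun t => ?_
    by_cases ht : t ∈ I
    · simp [ind_of_mem ht, ht]
    · simp [ind_of_not_mem ht, ht]
  rw [e]
  have hI1 : (volume.restrict I) Set.univ ≤ 1 := by
    rw [Measure.restrict_apply_univ]
    calc volume I ≤ volume (Set.Ico (0:ℝ) 1) := measure_mono h1
      _ = 1 := by simp
  refine (jensen01 _ hI1 _ (sl_meas hE) s hs hs1).trans ?_
  rw [← sl_int hE]
  gcongr
  exact Measure.restrict_le_self

lemma amgm34 (x y : ℝ≥0∞) : x ^ (1/2:ℝ) * y ^ (1/4:ℝ) ≤ x ^ (3/4:ℝ) + y ^ (3/4:ℝ) := by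
  rcases le_total x y with h | h
  · calc _ ≤ y ^ (1/2:ℝ) * y ^ (1/4:ℝ) := by gcongr
      _ = y ^ (3/4:ℝ) := by rw [← ENNReal.rpow_add_of_nonneg _ _ (by norm_num) (by norm_num)]; norm_num
      _ ≤ _ := le_add_self
  · calc _ ≤ x ^ (1/2:ℝ) * x ^ (1/4:ℝ) := by gcongr
      _ = x ^ (3/4:ℝ) := by rw [← ENNReal.rpow_add_of_nonneg _ _ (by norm_num) (by norm_num)]; norm_num
      _ ≤ _ := le_self_add

/-- solving the core inequality for the volume -/
lemma solve4 (V R : ℝ≥0∞) (x y : ℝ) (hy : 0 < y) (hx : y ≤ x) (h : ENNReal.ofReal x * V ^ 4 ≤ R) :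
    V ≤ ENNReal.ofReal (y ^ (-(1/4) : ℝ)) * R ^ (1/4 : ℝ) := by
  have hx0 : 0 < x := lt_of_lt_of_le hy hx
  have h1 : (ENNReal.ofReal y * V ^ 4) ^ (1/4:ℝ) ≤ R ^ (1/4:ℝ) := by
    gcongr; exact le_trans (by gcongr) h
  have e : (V ^ 4) ^ (1/4:ℝ) = V := by
    rw [← ENNReal.rpow_natCast, ← ENNReal.rpow_mul]; norm_num
  rw [ENNReal.mul_rpow_of_nonneg _ _ (by norm_num), e, ENNReal.ofReal_rpow_of_pos hy] at h1
  have e2 : ENNReal.ofReal (y ^ (-(1/4) : ℝ)) * ENNReal.ofReal (y ^ (1/4:ℝ)) = 1 := by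
    rw [← ENNReal.ofReal_mul (by positivity), ← Real.rpow_add hy]; norm_num
  calc V = ENNReal.ofReal (y ^ (-(1/4) : ℝ)) * (ENNReal.ofReal (y ^ (1/4:ℝ)) * V) := by
        rw [← mul_assoc, e2, one_mul]
    _ ≤ _ := by gcongr

/-- bound for one configuration of times -/
lemma sigma_bound {n : ℕ} (hn : 2 ≤ n) (G : Set (Euc n × Euc n)) (hG : MeasurableSet G)
    (E : Set (Euc n × ℝ)) (hE : MeasurableSet E) (μ : ℝ≥0∞)
    (hμ : ∀ v, volume {z | (v, z) ∈ G} ≤ μ) (ℓ δ : ℝ) (hℓ : 0 < ℓ) (hδ : 0 < δ)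
    (t1 b b' κ a a' : ℝ) (ha : a = t1 + κ * (b - t1)) (ha' : a' = t1 + κ * (b' - t1))
    (d1 : ℓ ≤ |b - t1|) (d2 : ℓ ≤ |b' - t1|) (d3 : ℓ ≤ |a - t1|) 
    (d5 : ℓ ≤ |a - b|) (d6 : ℓ ≤ |a - b'|) (d7 : ℓ ≤ |a' - b'|) (d8 : δ ≤ |b - b'|)
    (d9 : |b - b'| < 1)
    (s : ∀ l ∈ G, ∀ t ∈ ({t1, b, b', a, a'} : Set ℝ), (l.2 + t • l.1, t) ∈ E) :
    volume G ≤ ENNReal.ofReal (δ ^ (-((n:ℝ)/4 - 1/2)) * ℓ ^ (-(3 * (n:ℝ)/4))) * μ ^ (1/4:ℝ) *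
      (ker (b - b') * (sl E t1 ^ (1/4:ℝ) * (sl E b ^ (3/4:ℝ) + sl E b' ^ (3/4:ℝ)) *
        (sl E a ^ (3/4:ℝ) + sl E a' ^ (3/4:ℝ)))) := by
  have pos : ∀ {x y : ℝ}, ℓ ≤ |x - y| → x ≠ y := by
    intro x y h he; rw [he, sub_self, abs_zero] at h; linarith
  have hms : ∀ t : ℝ, MeasurableSet {w : Euc n | (w, t) ∈ E} := fun t => measurable_prodMk_right hE
  have hκ : κ ≠ 0 := by
    rintro rfl; apply pos d3; rw [ha]; ring
  have hκ1 : κ ≠ 1 := by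
    rintro rfl; apply pos d5; rw [ha]; ring
  have hbb : b ≠ b' := by
    intro he; rw [he, sub_self, abs_zero] at d8; linarith
  have c := core G hG t1 b' b κ hκ hκ1 (pos d1) (pos d2) hbb a a' ha ha' (pos d6)
    {w | (w, t1) ∈ E} {w | (w, b') ∈ E} {w | (w, b) ∈ E} {w | (w, a) ∈ E} {w | (w, a') ∈ E}
    (hms _) (hms _) (hms _) (hms _) (hms _)
    (fun l hl => s l hl t1 (by simp)) (fun l hl => s l hl b' (by simp))
    (fun l hl => s l hl b (by simp)) (fun l hl => s l hl a (by simp))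
    (fun l hl => s l hl a' (by simp)) μ hμ
  have hbp : 0 < |b - b'| := lt_of_lt_of_le hδ d8
  set y : ℝ := (|b - b'| * ℓ * ℓ * ℓ) ^ n with hy
  have hyp : 0 < y := by positivity
  have hyx : y ≤ (|b - b'| * |a - b'| * |t1 - a| * |a' - b'|) ^ n := by
    rw [hy]
    have : ℓ ≤ |t1 - a| := by rwa [abs_sub_comm]
    gcongr
  have s4 := solve4 _ _ _ y hyp hyx c
  refine s4.trans ?_
  have yb : y ^ (-(1/4):ℝ) ≤ δ ^ (-((n:ℝ)/4 - 1/2)) * ℓ ^ (-(3 * (n:ℝ)/4)) * |b - b'| ^ (-(1/2):ℝ) := by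
    have e1 : y ^ (-(1/4):ℝ) = |b - b'| ^ (-((n:ℝ)/4 - 1/2)) * ℓ ^ (-(3 * (n:ℝ)/4)) * |b - b'| ^ (-(1/2):ℝ) := by
      have : |b - b'| * ℓ * ℓ * ℓ = |b - b'| * ℓ ^ 3 := by ring
      rw [hy, this, ← Real.rpow_natCast, ← Real.rpow_mul (by positivity), Real.mul_rpow (by positivity) (by positivity),
        ← Real.rpow_natCast, ← Real.rpow_mul (by positivity), mul_right_comm, ← Real.rpow_add hbp]
      congr 2
      · ring
      · push_cast; ring
    rw [e1]
    have : |b - b'| ^ (-((n:ℝ)/4 - 1/2)) ≤ δ ^ (-((n:ℝ)/4 - 1/2)) := by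
      apply Real.rpow_le_rpow_of_nonpos hδ d8
      have : (2:ℝ) ≤ n := by exact_mod_cast hn
      linarith
    gcongr
  have kb : ker (b - b') = ENNReal.ofReal (|b - b'| ^ (-(1/2):ℝ)) := by
    rw [ker, ind_of_mem (Set.mem_Ioo.mpr (abs_lt.mp d9)), one_mul]
  change _ * (sl E b' ^ 2 * sl E t1 * sl E b * sl E a ^ 2 * sl E a' * μ) ^ (1/4:ℝ) ≤ _
  have e3 : (sl E b' ^ 2 * sl E t1 * sl E b * sl E a ^ 2 * sl E a' * μ) ^ (1/4:ℝ) =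
      μ ^ (1/4:ℝ) * (sl E t1 ^ (1/4:ℝ) * (sl E b' ^ (1/2:ℝ) * sl E b ^ (1/4:ℝ)) *
        (sl E a ^ (1/2:ℝ) * sl E a' ^ (1/4:ℝ))) := by
    have q : ∀ x : ℝ≥0∞, (x ^ 2) ^ (1/4:ℝ) = x ^ (1/2:ℝ) := by
      intro x
      rw [← ENNReal.rpow_natCast, ← ENNReal.rpow_mul]; norm_num
    simp only [ENNReal.mul_rpow_of_nonneg _ _ (by norm_num : (0:ℝ) ≤ 1/4), q]
    ring
  rw [e3]
  calc _ ≤ ENNReal.ofReal (δ ^ (-((n:ℝ)/4 - 1/2)) * ℓ ^ (-(3 * (n:ℝ)/4)) * |b - b'| ^ (-(1/2):ℝ)) *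
      (μ ^ (1/4:ℝ) * (sl E t1 ^ (1/4:ℝ) * (sl E b' ^ (3/4:ℝ) + sl E b ^ (3/4:ℝ)) *
        (sl E a ^ (3/4:ℝ) + sl E a' ^ (3/4:ℝ)))) := by
        gcongr
        · exact amgm34 _ _
        · exact amgm34 _ _
    _ = _ := by
      rw [ENNReal.ofReal_mul (by positivity), kb]; ring


/-- times at which the line `l` lies in `E` -/
def tau {n : ℕ} (E : Set (Euc n × ℝ)) (l : Euc n × Euc n) : Set ℝ := {t | (l.2 + t • l.1, t) ∈ E}

lemma tau_ind_meas {n : ℕ} {E : Set (Euc n × ℝ)} (hE : MeasurableSet E) {I : Set ℝ}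
    (hI : MeasurableSet I) {β : Type} [MeasurableSpace β] (f : β → Euc n × Euc n) (g : β → ℝ)
    (hf : Measurable f) (hg : Measurable g) : Measurable fun x => ind (I ∩ tau E (f x)) (g x) := by
  have e : (fun x => ind (I ∩ tau E (f x)) (g x)) =
      fun x => ind I (g x) * ind E ((f x).2 + (g x) • (f x).1, g x) := by
    funext x
    by_cases h1 : g x ∈ I
    · by_cases h2 : ((f x).2 + (g x) • (f x).1, g x) ∈ E
      · rw [ind_of_mem h1, ind_of_mem h2, ind_of_mem (show g x ∈ I ∩ tau E (f x) from ⟨h1, h2⟩), one_mul]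
      · rw [ind_of_not_mem h2, ind_of_not_mem (fun h => h2 h.2), mul_zero]
    · rw [ind_of_not_mem h1, ind_of_not_mem (fun h => h1 h.1), zero_mul]
  rw [e]
  exact ((ind_meas hI).comp hg).mul ((ind_meas hE).comp (by fun_prop))

lemma tau_meas {n : ℕ} {E : Set (Euc n × ℝ)} (hE : MeasurableSet E) (l : Euc n × Euc n) :
    MeasurableSet (tau E l) := by
  have : Measurable fun t : ℝ => (l.2 + t • l.1, t) := by fun_prop
  exact this hE

set_option maxHeartbeats 1000000 in
lemma triple_aux {n : ℕ} (hn : 2 ≤ n) (ℓ : ℝ) (hℓ : 0 < ℓ) 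
    (I1 I2 I3 : Set ℝ) (hI1 : MeasurableSet I1) (hI2 : MeasurableSet I2)
    (hI3 : MeasurableSet I3) (s1 : I1 ⊆ Set.Ico 0 1) (s2 : I2 ⊆ Set.Ico 0 1) (s3 : I3 ⊆ Set.Ico 0 1)
    (d12 : ∀ x ∈ I1, ∀ y ∈ I2, ℓ ≤ |x - y|) (d13 : ∀ x ∈ I1, ∀ y ∈ I3, ℓ ≤ |x - y|)
    (d23 : ∀ x ∈ I2, ∀ y ∈ I3, ℓ ≤ |x - y|)
    (E : Set (Euc n × ℝ)) (hE : MeasurableSet E) (G : Set (Euc n × Euc n)) (hG : MeasurableSet G)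
    (μ : ℝ≥0∞) (lam : ℝ) (hlam : 0 < lam) (hμ : ∀ v, volume {z | (v, z) ∈ G} ≤ μ)
    (m1 : ∀ l ∈ G, ENNReal.ofReal lam ≤ volume (I1 ∩ tau E l))
    (m2 : ∀ l ∈ G, ENNReal.ofReal lam ≤ volume (I2 ∩ tau E l))
    (m3 : ∀ l ∈ G, ENNReal.ofReal lam ≤ volume (I3 ∩ tau E l)) :
    ENNReal.ofReal (lam ^ 5 * ℓ / 4) * volume G ≤
      ENNReal.ofReal ((lam ^ 2 * ℓ / 8) ^ (-((n:ℝ)/4 - 1/2)) * ℓ ^ (-(3 * (n:ℝ)/4))) * μ ^ (1/4:ℝ) *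
      (4 * ENNReal.ofReal (1/ℓ) * ∫⁻ x, ker x) * volume E ^ (7/4:ℝ) := by
  set δ := lam ^ 2 * ℓ / 8 with hδ
  have hδ0 : 0 < δ := by positivity
  set C1 := ENNReal.ofReal (δ ^ (-((n:ℝ)/4 - 1/2)) * ℓ ^ (-(3 * (n:ℝ)/4))) * μ ^ (1/4:ℝ) with hC1
  set W0 := ∫⁻ x, ker x with hW0
  set F : Euc n × Euc n → ℝ → ℝ → ℝ → ℝ → ℝ≥0∞ := fun l t1 b b' κ =>
    ind G l * (ind (I3 ∩ tau E l) t1 * (far δ b b' *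
      (ind (I2 ∩ tau E l) b * ind (I1 ∩ tau E l) (t1 + κ * (b - t1))) *
      (ind (I2 ∩ tau E l) b' * ind (I1 ∩ tau E l) (t1 + κ * (b' - t1))))) with hF
  have mF : Measurable fun p : (Euc n × Euc n) × ℝ × ℝ × ℝ × ℝ =>
      F p.1 p.2.1 p.2.2.1 p.2.2.2.1 p.2.2.2.2 := by
    simp only [hF]
    refine ((ind_meas hG).comp (by fun_prop)).mul ((tau_ind_meas hE hI3 _ _ (by fun_prop)
      (by fun_prop)).mul (((Measurable.mul ?_ ?_)).mul ?_))
    · exact (far_meas δ).comp (by fun_prop : Measurable fun p : (Euc n × Euc n) × ℝ × ℝ × ℝ × ℝ =>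
        (p.2.2.1, p.2.2.2.1))
    · exact (tau_ind_meas hE hI2 _ _ (by fun_prop) (by fun_prop)).mul
        (tau_ind_meas hE hI1 _ _ (by fun_prop) (by fun_prop))
    · exact (tau_ind_meas hE hI2 _ _ (by fun_prop) (by fun_prop)).mul
        (tau_ind_meas hE hI1 _ _ (by fun_prop) (by fun_prop))
  have low : ENNReal.ofReal (lam ^ 5 * ℓ / 4) * volume G ≤
      ∫⁻ l, ∫⁻ t1, ∫⁻ b, ∫⁻ b', ∫⁻ κ, F l t1 b b' κ := by
    rw [← lint_ind volume hG, ← lintegral_const_mul _ (ind_meas hG)]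
    refine lintegral_mono fun l => ?_
    by_cases hl : l ∈ G
    · simp only [hF, ind_of_mem hl, one_mul, mul_one]
      exact energy (I1 ∩ tau E l) (I2 ∩ tau E l) (I3 ∩ tau E l) (hI1.inter (tau_meas hE l))
        (hI2.inter (tau_meas hE l)) (hI3.inter (tau_meas hE l)) ℓ lam hℓ hlam
        (Set.inter_subset_left.trans s1) (Set.inter_subset_left.trans s2)
        (Set.inter_subset_left.trans s3) (fun x hx y hy => d23 x hx.1 y hy.1) (m1 l hl) (m2 l hl)
        (m3 l hl)
    · simp [ind_of_not_mem hl]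
  rw [swap4 F mF] at low
  refine low.trans ?_
  set g1 : ℝ → ℝ≥0∞ := fun t => ind I1 t * sl E t ^ (3/4:ℝ) with hg1
  set g2 : ℝ → ℝ≥0∞ := fun t => ind I2 t * sl E t ^ (3/4:ℝ) with hg2
  set g3 : ℝ → ℝ≥0∞ := fun t => ind I3 t * sl E t ^ (1/4:ℝ) with hg3
  have msl := sl_meas hE
  have mi1 := ind_meas hI1
  have mi2 := ind_meas hI2
  have mi3 := ind_meas hI3
  have mk := ker_meas
  have mg1 : Measurable g1 := by fun_prop
  have mg2 : Measurable g2 := by fun_prop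
  have mg3 : Measurable g3 := by fun_prop
  have ig1 : ∫⁻ t, g1 t ≤ volume E ^ (3/4:ℝ) := sl_pow hE I1 hI1 s1 _ (by norm_num) (by norm_num)
  have ig2 : ∫⁻ t, g2 t ≤ volume E ^ (3/4:ℝ) := sl_pow hE I2 hI2 s2 _ (by norm_num) (by norm_num)
  have ig3 : ∫⁻ t, g3 t ≤ volume E ^ (1/4:ℝ) := sl_pow hE I3 hI3 s3 _ (by norm_num) (by norm_num)
  have pw : ∀ t1 b b' κ, ∫⁻ l, F l t1 b b' κ ≤ C1 * (ker (b - b') * (g3 t1 * (g2 b + g2 b') *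
      ind I2 b * ind I2 b' * (g1 (t1 + κ * (b - t1)) + g1 (t1 + κ * (b' - t1))))) := by
    intro t1 b b' κ
    set a := t1 + κ * (b - t1) with ha
    set a' := t1 + κ * (b' - t1) with ha'
    by_cases hS : t1 ∈ I3 ∧ b ∈ I2 ∧ b' ∈ I2 ∧ a ∈ I1 ∧ a' ∈ I1 ∧ δ ≤ |b - b'|
    · obtain ⟨k1, k2, k3, k4, k5, k6⟩ := hS
      set Gs : Set (Euc n × Euc n) := {l | l ∈ G ∧ t1 ∈ tau E l ∧ b ∈ tau E l ∧ b' ∈ tau E l ∧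
        a ∈ tau E l ∧ a' ∈ tau E l} with hGs
      have mt : ∀ t : ℝ, MeasurableSet {l : Euc n × Euc n | t ∈ tau E l} := by
        intro t
        have : Measurable fun l : Euc n × Euc n => (l.2 + t • l.1, t) := by fun_prop
        exact this hE
      have mGs : MeasurableSet Gs := hG.inter ((mt _).inter ((mt _).inter ((mt _).inter
        ((mt _).inter (mt _)))))
      have e : ∫⁻ l, F l t1 b b' κ ≤ volume Gs := by
        rw [← lint_ind volume mGs]
        refine lintegral_mono fun l => ?_
        by_cases hl : l ∈ Gs
        · rw [ind_of_mem hl]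
          simp only [hF]
          exact mul_le_one' (ind_le_one _ _) (mul_le_one' (ind_le_one _ _) (mul_le_one'
            (mul_le_one' (ind_le_one _ _) (mul_le_one' (ind_le_one _ _) (ind_le_one _ _)))
            (mul_le_one' (ind_le_one _ _) (ind_le_one _ _))))
        · rw [ind_of_not_mem hl, nonpos_iff_eq_zero]
          simp only [hF]
          by_cases j0 : l ∈ G
          swap
          · rw [ind_of_not_mem j0, zero_mul]
          by_cases j1 : t1 ∈ tau E l
          swap
          · rw [ind_of_not_mem (S := I3 ∩ tau E l) (fun h => j1 h.2), zero_mul, mul_zero]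
          by_cases j2 : b ∈ tau E l
          swap
          · rw [ind_of_not_mem (S := I2 ∩ tau E l) (fun h => j2 h.2)]; simp
          by_cases j3 : b' ∈ tau E l
          swap
          · rw [ind_of_not_mem (S := I2 ∩ tau E l) (x := b') (fun h => j3 h.2)]; simp
          by_cases j4 : a ∈ tau E l
          swap
          · rw [ind_of_not_mem (S := I1 ∩ tau E l) (x := a) (fun h => j4 h.2)]; simp
          by_cases j5 : a' ∈ tau E l
          swap
          · rw [ind_of_not_mem (S := I1 ∩ tau E l) (x := a') (fun h => j5 h.2)]; simp
          exact absurd ⟨j0, j1, j2, j3, j4, j5⟩ hl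
      refine e.trans ?_
      have hbb : |b - b'| < 1 := by
        have := s2 k2; have := s2 k3
        rw [abs_lt]; constructor <;> linarith [(s2 k2).1, (s2 k2).2, (s2 k3).1, (s2 k3).2]
      have := sigma_bound hn Gs mGs E hE μ
        (fun v => (measure_mono fun z hz => hz.1).trans (hμ v)) ℓ δ hℓ hδ0 t1 b b' κ a a' ha ha'
        (d23 _ k2 _ k1) (d23 _ k3 _ k1) (d13 _ k4 _ k1) (d12 _ k4 _ k2)
        (d12 _ k4 _ k3) (d12 _ k5 _ k3) k6 hbb ?_
      · simp only [hg1, hg2, hg3, ind_of_mem k1, ind_of_mem k2, ind_of_mem k3, ind_of_mem k4,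
          ind_of_mem k5, one_mul, mul_one]
        exact this
      · rintro l ⟨_, j1, j2, j3, j4, j5⟩ t ht
        simp only [Set.mem_insert_iff, Set.mem_singleton_iff] at ht
        rcases ht with rfl | rfl | rfl | rfl | rfl
        · exact j1
        · exact j2
        · exact j3
        · exact j4
        · exact j5
    · have : ∀ l, F l t1 b b' κ = 0 := by
        intro l
        simp only [hF]
        by_cases j1 : t1 ∈ I3
        swap
        · rw [ind_of_not_mem (S := I3 ∩ tau E l) (fun h => j1 h.1), zero_mul, mul_zero]
        by_cases j2 : b ∈ I2
        swap
        · rw [ind_of_not_mem (S := I2 ∩ tau E l) (fun h => j2 h.1)]; simp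
        by_cases j3 : b' ∈ I2
        swap
        · rw [ind_of_not_mem (S := I2 ∩ tau E l) (x := b') (fun h => j3 h.1)]; simp
        by_cases j4 : a ∈ I1
        swap
        · rw [ind_of_not_mem (S := I1 ∩ tau E l) (x := a) (fun h => j4 h.1)]; simp
        by_cases j5 : a' ∈ I1
        swap
        · rw [ind_of_not_mem (S := I1 ∩ tau E l) (x := a') (fun h => j5 h.1)]; simp
        have j6 : ¬ δ ≤ |b - b'| := fun h => hS ⟨j1, j2, j3, j4, j5, h⟩
        have : far δ b b' = 0 := ind_of_not_mem (S := {p : ℝ × ℝ | δ ≤ |p.1 - p.2|}) j6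
        rw [this]; simp
      simp only [this, lintegral_zero]
      exact zero_le
  set R := ENNReal.ofReal (1/ℓ) with hR
  set X := volume E ^ (3/4:ℝ) with hX
  have iκ1 : ∀ t1 ∈ I3, ∀ b ∈ I2, ∫⁻ κ, g1 (t1 + κ * (b - t1)) ≤ R * X := by
    intro t1 h3 b h2
    have hd := d23 b h2 t1 h3
    have hc : b - t1 ≠ 0 := by intro h; rw [h, abs_zero] at hd; linarith
    have := lint_aff1 g1 mg1 (b - t1) hc t1
    calc ∫⁻ κ, g1 (t1 + κ * (b - t1)) = R * (ENNReal.ofReal ℓ * ∫⁻ κ, g1 (t1 + (b - t1) * κ)) := by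
          rw [← mul_assoc, hR, ← ENNReal.ofReal_mul (by positivity), one_div_mul_cancel hℓ.ne']
          simp only [ENNReal.ofReal_one, one_mul]
          refine lintegral_congr fun x => by rw [mul_comm]
      _ ≤ R * (ENNReal.ofReal |b - t1| * ∫⁻ κ, g1 (t1 + (b - t1) * κ)) := by gcongr
      _ ≤ _ := by rw [this]; gcongr
  have iκ : ∀ t1 b b', ∫⁻ κ, C1 * (ker (b - b') * (g3 t1 * (g2 b + g2 b') *
      ind I2 b * ind I2 b' * (g1 (t1 + κ * (b - t1)) + g1 (t1 + κ * (b' - t1))))) ≤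
      C1 * (2 * R * X) * (g3 t1 * (ker (b - b') * g2 b + ker (b - b') * g2 b')) := by
    intro t1 b b'
    by_cases j1 : t1 ∈ I3
    swap
    · simp only [hg3, ind_of_not_mem j1]; simp
    by_cases j2 : b ∈ I2
    swap
    · simp only [ind_of_not_mem j2]; simp
    by_cases j3 : b' ∈ I2
    swap
    · simp only [ind_of_not_mem j3]; simp
    simp only [ind_of_mem j2, ind_of_mem j3, mul_one]
    rw [lintegral_const_mul _ (by fun_prop), lintegral_const_mul _ (by fun_prop),
      lintegral_const_mul _ (by fun_prop), lintegral_add_left (by fun_prop)]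
    calc _ ≤ C1 * (ker (b - b') * (g3 t1 * (g2 b + g2 b') * (R * X + R * X))) := by
          gcongr
          · exact iκ1 t1 j1 b j2
          · exact iκ1 t1 j1 b' j3
      _ = _ := by ring
  calc ∫⁻ t1, ∫⁻ b, ∫⁻ b', ∫⁻ κ, ∫⁻ l, F l t1 b b' κ 
      ≤ ∫⁻ t1, ∫⁻ b, ∫⁻ b', C1 * (2 * R * X) *
        (g3 t1 * (ker (b - b') * g2 b + ker (b - b') * g2 b')) := by
        refine lintegral_mono fun t1 => lintegral_mono fun b => lintegral_mono fun b' => ?_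
        exact (lintegral_mono fun κ => pw t1 b b' κ).trans (iκ t1 b b')
    _ = ∫⁻ t1, C1 * (2 * R * X) * (g3 t1 * (∫⁻ b, ∫⁻ b', (ker (b - b') * g2 b + ker (b - b') * g2 b'))) := by
        refine lintegral_congr fun t1 => ?_
        have mk2 : Measurable fun p : ℝ × ℝ => ker (p.1 - p.2) * g2 p.1 + ker (p.1 - p.2) * g2 p.2 := by
          fun_prop
        rw [← lintegral_const_mul _ mk2.lintegral_prod_right', ← lintegral_const_mul _
          ((mk2.lintegral_prod_right').const_mul _)]
        refine lintegral_congr fun b => ?_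
        have mk3 : Measurable fun b' => ker (b - b') * g2 b + ker (b - b') * g2 b' := by fun_prop
        rw [← lintegral_const_mul _ mk3, ← lintegral_const_mul _ (mk3.const_mul _)]
    _ ≤ ∫⁻ t1, C1 * (2 * R * X) * (g3 t1 * (2 * W0 * X)) := by
        gcongr with t1
        have mk2 : Measurable fun p : ℝ × ℝ => ker (p.1 - p.2) * g2 p.1 := by
          fun_prop
        have mk3 : Measurable fun p : ℝ × ℝ => ker (p.1 - p.2) * g2 p.2 := by
          fun_prop
        have e1 : ∀ b, ∫⁻ b', (ker (b - b') * g2 b + ker (b - b') * g2 b') =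
            (∫⁻ b', ker (b - b') * g2 b) + ∫⁻ b', ker (b - b') * g2 b' := fun b =>
          lintegral_add_left (f := fun b' => ker (b - b') * g2 b) (by fun_prop) _
        simp only [e1]
        rw [lintegral_add_left mk2.lintegral_prod_right']
        have e2 : ∫⁻ b, ∫⁻ b', ker (b - b') * g2 b ≤ W0 * X := by
          have : ∀ b, ∫⁻ b', ker (b - b') * g2 b = W0 * g2 b := by
            intro b
            rw [lintegral_mul_const _ (by fun_prop), lintegral_sub_left_eq_self ker b]
          simp only [this]
          rw [lintegral_const_mul _ mg2]
          gcongr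
        have e3 : ∫⁻ b, ∫⁻ b', ker (b - b') * g2 b' ≤ W0 * X := by
          rw [lintegral_lintegral_swap mk3.aemeasurable]
          have : ∀ b', ∫⁻ b, ker (b - b') * g2 b' = W0 * g2 b' := by
            intro b'
            rw [lintegral_mul_const _ (by fun_prop), lintegral_sub_right_eq_self ker b']
          simp only [this]
          rw [lintegral_const_mul _ mg2]
          gcongr
        calc _ ≤ W0 * X + W0 * X := add_le_add e2 e3
          _ = _ := by ring
    _ = C1 * (2 * R * X) * ((∫⁻ t1, g3 t1) * (2 * W0 * X)) := by
        rw [lintegral_const_mul _ (by fun_prop), lintegral_mul_const _ mg3]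
    _ ≤ C1 * (2 * R * X) * (volume E ^ (1/4:ℝ) * (2 * W0 * X)) := by gcongr
    _ = C1 * (4 * R * W0) * (volume E ^ (1/4:ℝ) * X * X) := by ring
    _ = _ := by
        rw [hX, ← ENNReal.rpow_add_of_nonneg _ _ (by norm_num) (by norm_num),
          ← ENNReal.rpow_add_of_nonneg _ _ (by norm_num) (by norm_num)]
        norm_num


lemma triple {n : ℕ} (hn : 2 ≤ n) (ℓ : ℝ) (hℓ : 0 < ℓ) : ∃ K : ℝ, 0 < K ∧ ∀ 
    (I1 I2 I3 : Set ℝ) (_ : MeasurableSet I1) (_ : MeasurableSet I2)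
    (_ : MeasurableSet I3) (_ : I1 ⊆ Set.Ico 0 1) (_ : I2 ⊆ Set.Ico 0 1) (_ : I3 ⊆ Set.Ico 0 1)
    (_ : ∀ x ∈ I1, ∀ y ∈ I2, ℓ ≤ |x - y|) (_ : ∀ x ∈ I1, ∀ y ∈ I3, ℓ ≤ |x - y|)
    (_ : ∀ x ∈ I2, ∀ y ∈ I3, ℓ ≤ |x - y|)
    (E : Set (Euc n × ℝ)) (_ : MeasurableSet E) (G : Set (Euc n × Euc n)) (_ : MeasurableSet G)
    (μ : ℝ≥0∞) (lam : ℝ) (_ : 0 < lam) (_ : ∀ v, volume {z | (v, z) ∈ G} ≤ μ)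
    (_ : ∀ l ∈ G, ENNReal.ofReal lam ≤ volume (I1 ∩ tau E l))
    (_ : ∀ l ∈ G, ENNReal.ofReal lam ≤ volume (I2 ∩ tau E l))
    (_ : ∀ l ∈ G, ENNReal.ofReal lam ≤ volume (I3 ∩ tau E l)),
    volume G ≤ ENNReal.ofReal (K * lam ^ (-((n:ℝ)/2 + 4))) * μ ^ (1/4:ℝ) * volume E ^ (7/4:ℝ) := by
  set W := (∫⁻ x, ker x).toReal with hW
  have eW : ∫⁻ x, ker x = ENNReal.ofReal W := (ENNReal.ofReal_toReal ker_fin).symm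
  have hW0 : 0 ≤ W := ENNReal.toReal_nonneg
  refine ⟨(4 / ℓ) * ((ℓ / 8) ^ (-((n:ℝ)/4 - 1/2)) * ℓ ^ (-(3 * (n:ℝ)/4))) * (4 * (1/ℓ) * W) + 1,
    by positivity, ?_⟩
  intro I1 I2 I3 hI1 hI2 hI3 s1 s2 s3 d12 d13 d23 E hE G hG μ lam hlam hμ m1 m2 m3
  have h := triple_aux hn ℓ hℓ I1 I2 I3 hI1 hI2 hI3 s1 s2 s3 d12 d13 d23 E hE G hG μ lam hlam hμ m1 m2 m3
  have hc : 0 < lam ^ 5 * ℓ / 4 := by positivity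
  rw [← ENNReal.mul_le_mul_iff_right (ENNReal.ofReal_pos.mpr hc).ne' ofReal_ne_top]
  refine h.trans ?_
  rw [eW]
  have e4 : (4:ℝ≥0∞) = ENNReal.ofReal 4 := by simp
  rw [e4, ← ENNReal.ofReal_mul (by norm_num), ← ENNReal.ofReal_mul (by positivity)]
  rw [mul_right_comm (ENNReal.ofReal _), ← ENNReal.ofReal_mul (by positivity)]
  have assoc : ∀ a b c d : ℝ≥0∞, a * (b * c * d) = a * b * c * d := by intros; ring
  rw [assoc, ← ENNReal.ofReal_mul (by positivity)]
  refine mul_le_mul' (mul_le_mul' (ENNReal.ofReal_le_ofReal ?_) le_rfl) le_rfl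
  have e1 : (lam ^ 2 * ℓ / 8) ^ (-((n:ℝ)/4 - 1/2)) = lam ^ (-((n:ℝ)/2 - 1)) * (ℓ/8) ^ (-((n:ℝ)/4 - 1/2)) := by
    rw [mul_div_assoc, Real.mul_rpow (by positivity) (by positivity), ← Real.rpow_natCast,
      ← Real.rpow_mul hlam.le]
    congr 2
    push_cast; ring
  have e2 : lam ^ (-((n:ℝ)/2 - 1)) = lam ^ 5 * lam ^ (-((n:ℝ)/2 + 4)) := by
    rw [← Real.rpow_natCast, ← Real.rpow_add hlam]; congr 1; push_cast; ring
  rw [e1, e2]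
  have hp : 0 ≤ lam ^ 5 * ℓ / 4 * lam ^ (-((n:ℝ)/2 + 4)) := by positivity
  calc _ = lam ^ 5 * ℓ / 4 * lam ^ (-((n:ℝ)/2 + 4)) * ((4 / ℓ) * ((ℓ / 8) ^ (-((n:ℝ)/4 - 1/2)) * ℓ ^ (-(3 * (n:ℝ)/4))) * (4 * (1/ℓ) * W)) := by
        generalize ℓ ^ (-(3 * (n:ℝ)/4)) = q1
        generalize (ℓ / 8) ^ (-((n:ℝ)/4 - 1/2)) = q2
        field_simp
    _ ≤ lam ^ 5 * ℓ / 4 * lam ^ (-((n:ℝ)/2 + 4)) * ((4 / ℓ) * ((ℓ / 8) ^ (-((n:ℝ)/4 - 1/2)) * ℓ ^ (-(3 * (n:ℝ)/4))) * (4 * (1/ℓ) * W) + 1) :=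
        mul_le_mul_of_nonneg_left (by linarith) hp
    _ = _ := by ring

lemma pigeon (B : ℕ) (hB : 0 < B) (m : ℕ → ℝ) (lam : ℝ) (hlam : 0 < lam)
    (h : lam ≤ ∑ j ∈ Finset.range B, m j) :
    (∃ j < B, lam / 12 ≤ m j) ∨ ∃ j1 j2 j3, j1 + 2 ≤ j2 ∧ j2 + 2 ≤ j3 ∧ j3 < B ∧
      lam / (2 * B) ≤ m j1 ∧ lam / (2 * B) ≤ m j2 ∧ lam / (2 * B) ≤ m j3 := by
  by_cases h1 : ∃ j < B, lam / 12 ≤ m j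
  · exact Or.inl h1
  right
  push Not at h1
  set Hv := (Finset.range B).filter (fun j => lam / (2 * B) ≤ m j) with hHv
  have hB' : (0:ℝ) < B := by exact_mod_cast hB
  have hs := Finset.sum_filter_add_sum_filter_not (Finset.range B) (fun j => lam / (2 * B) ≤ m j) m
  have hl : ∑ j ∈ (Finset.range B).filter (fun j => ¬ lam / (2 * B) ≤ m j), m j ≤ lam / 2 := by
    calc _ ≤ ∑ j ∈ (Finset.range B).filter (fun j => ¬ lam / (2 * B) ≤ m j), lam / (2 * B) := by
          apply Finset.sum_le_sum
          intro j hj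
          exact (not_le.mp (Finset.mem_filter.mp hj).2).le
      _ = _ * (lam / (2 * B)) := by rw [Finset.sum_const, nsmul_eq_mul]
      _ ≤ B * (lam / (2 * B)) := by
          gcongr
          exact (Finset.card_filter_le _ _).trans (by simp)
      _ = lam / 2 := by field_simp
  have hh : ∑ j ∈ Hv, m j ≤ Hv.card * (lam / 12) := by
    rw [← nsmul_eq_mul, ← Finset.sum_const]
    apply Finset.sum_le_sum
    intro j hj
    exact (h1 j (Finset.mem_range.mp (Finset.mem_filter.mp hj).1)).le
  have hc : 5 ≤ Hv.card := by
    by_contra hc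
    have : (Hv.card : ℝ) ≤ 4 := by
      have : Hv.card ≤ 4 := by omega
      exact_mod_cast this
    nlinarith
  obtain ⟨S, hS, hSc⟩ := Finset.exists_subset_card_eq hc
  set f := S.orderEmbOfFin hSc
  have hf : ∀ i, f i < B ∧ lam / (2 * B) ≤ m (f i) := by
    intro i
    have := hS (S.orderEmbOfFin_mem hSc i)
    have := Finset.mem_filter.mp this
    exact ⟨Finset.mem_range.mp this.1, this.2⟩
  have hlt : ∀ i j : Fin 5, i < j → f i < f j := fun i j hij => f.strictMono hij
  refine ⟨f 0, f 2, f 4, ?_, ?_, (hf 4).1, (hf 0).2, (hf 2).2, (hf 4).2⟩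
  · have := hlt 0 1 (by decide); have := hlt 1 2 (by decide); omega
  · have := hlt 2 3 (by decide); have := hlt 3 4 (by decide); omega

/-- the weak-type estimate at density `lam` with constant `K` -/
def Weak (n : ℕ) (K : ℝ≥0∞) (lam : ℝ) : Prop :=
  ∀ (E : Set (Euc n × ℝ)) (_ : MeasurableSet E) (G : Set (Euc n × Euc n)) (_ : MeasurableSet G)
    (μ : ℝ≥0∞) (_ : ∀ v, volume {z | (v, z) ∈ G} ≤ μ)
    (_ : ∀ l ∈ G, ENNReal.ofReal lam ≤ volume (Set.Ico 0 1 ∩ tau E l)),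
    volume G ≤ K * μ ^ (1/4:ℝ) * volume E ^ (7/4:ℝ)

lemma rescale {n : ℕ} (K : ℝ≥0∞) (lam B j : ℝ) (hB : 0 < B) (hW : Weak n K (B * lam))
    (E : Set (Euc n × ℝ)) (hE : MeasurableSet E) (G : Set (Euc n × Euc n)) (hG : MeasurableSet G)
    (μ : ℝ≥0∞) (hμ : ∀ v, volume {z | (v, z) ∈ G} ≤ μ)
    (hl : ∀ l ∈ G, ENNReal.ofReal lam ≤ volume (Set.Ico (j/B) ((j+1)/B) ∩ tau E l)) :
    volume G ≤ ENNReal.ofReal (B ^ n) * (K * μ ^ (1/4:ℝ) *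
      (ENNReal.ofReal B * volume (E ∩ Set.univ ×ˢ Set.Ico (j/B) ((j+1)/B))) ^ (7/4:ℝ)) := by
  set J := Set.Ico (j/B) ((j+1)/B) with hJ
  set EJ := E ∩ Set.univ ×ˢ J with hEJ
  have mEJ : MeasurableSet EJ := hE.inter (MeasurableSet.univ.prod measurableSet_Ico)
  set E' : Set (Euc n × ℝ) := (fun p : Euc n × ℝ => (p.1, j/B + 1/B * p.2)) ⁻¹' EJ with hE'
  have mE' : MeasurableSet E' := (by fun_prop : Measurable fun p : Euc n × ℝ => (p.1, j/B + 1/B * p.2)) mEJ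
  set G' : Set (Euc n × Euc n) := (fun p : Euc n × Euc n => (B • p.1, p.2 - j • p.1)) ⁻¹' G with hG'
  have mG' : MeasurableSet G' :=
    (by fun_prop : Measurable fun p : Euc n × Euc n => (B • p.1, p.2 - j • p.1)) hG
  have fib : ∀ v', volume {z | (v', z) ∈ G'} = volume {z | (B • v', z) ∈ G} := by
    intro v'
    have := measure_preimage_add_right volume (-(j • v')) {z | (B • v', z) ∈ G}
    simp only [← sub_eq_add_neg] at this
    exact this
  have iB : ENNReal.ofReal B * ENNReal.ofReal (1/B) = 1 := by
    rw [← ENNReal.ofReal_mul hB.le, mul_one_div_cancel hB.ne', ENNReal.ofReal_one]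
  have aB : |1/B| = 1/B := abs_of_pos (by positivity)
  have volE : volume E' = ENNReal.ofReal B * volume EJ := by
    rw [← sl_int mE', ← sl_int mEJ, ← lint_aff1 (sl EJ) (sl_meas mEJ) (1/B) (by positivity) (j/B),
      ← mul_assoc, aB, iB, one_mul]
    rfl
  have volG : volume G = ENNReal.ofReal (B ^ n) * volume G' := by
    rw [Measure.volume_eq_prod, Measure.prod_apply hG, Measure.prod_apply mG']
    have := lint_aff (fun v => volume (Prod.mk v ⁻¹' G)) (measurable_measure_prodMk_left hG) B hB.ne' 0
    rw [← this, abs_of_pos hB]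
    congr 1
    refine lintegral_congr fun v => ?_
    rw [zero_add]
    exact (fib v).symm
  have key := hW E' mE' G' mG' μ (fun v => (fib v).trans_le (hμ _)) ?_
  · rw [volG, ← volE]
    gcongr
  · intro l' hl'
    have h1 := hl _ hl'
    set l : Euc n × Euc n := (B • l'.1, l'.2 - j • l'.1) with hldef
    have mt : MeasurableSet (J ∩ tau E l) := measurableSet_Ico.inter (tau_meas hE l)
    rw [← lint_ind volume mt, ← lint_aff1 _ (ind_meas mt) (1/B) (by positivity) (j/B), aB] at h1
    have h2 : ENNReal.ofReal (B * lam) ≤ ∫⁻ s, ind (J ∩ tau E l) (j/B + 1/B * s) := by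
      rw [ENNReal.ofReal_mul hB.le]
      calc _ ≤ ENNReal.ofReal B * (ENNReal.ofReal (1/B) * ∫⁻ s, ind (J ∩ tau E l) (j/B + 1/B * s)) := by gcongr
        _ = _ := by rw [← mul_assoc, iB, one_mul]
    refine h2.trans ?_
    rw [← lint_ind volume (measurableSet_Ico.inter (tau_meas mE' l'))]
    refine lintegral_mono fun s => ?_
    by_cases hs : j/B + 1/B * s ∈ J ∩ tau E l
    · have : s ∈ Set.Ico 0 1 ∩ tau E' l' := by
        obtain ⟨⟨a1, a2⟩, a3⟩ := hs
        refine ⟨⟨?_, ?_⟩, ?_⟩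
        · have : 0 ≤ 1/B * s := by linarith
          exact (mul_nonneg_iff_of_pos_left (by positivity)).mp this
        · have e : (j+1)/B = j/B + 1/B * 1 := by ring
          rw [e] at a2
          exact lt_of_mul_lt_mul_left (by linarith) (by positivity : 0 ≤ 1/B)
        · refine ⟨?_, ⟨trivial, a1, a2⟩⟩
          change (l.2 + (j/B + 1/B * s) • l.1, j/B + 1/B * s) ∈ E at a3
          change (l'.2 + s • l'.1, j/B + 1/B * s) ∈ E
          convert a3 using 2
          simp only [hldef, smul_smul]
          have : (j / B + 1 / B * s) * B = j + s := by field_simp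
          rw [this]
          module
      rw [ind_of_mem this]; exact ind_le_one _ _
    · rw [ind_of_not_mem hs]; exact zero_le


lemma vt_meas {n : ℕ} {E : Set (Euc n × ℝ)} (hE : MeasurableSet E) {I : Set ℝ}
    (hI : MeasurableSet I) : Measurable fun l : Euc n × Euc n => volume (I ∩ tau E l) := by
  have : (fun l : Euc n × Euc n => volume (I ∩ tau E l)) = fun l => ∫⁻ t, ind (I ∩ tau E l) t := by
    funext l
    rw [lint_ind volume (hI.inter (tau_meas hE l))]
  rw [this]
  exact (tau_ind_meas hE hI (fun x : (Euc n × Euc n) × ℝ => x.1) (fun x => x.2) measurable_fst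
    measurable_snd).lintegral_prod_right'

lemma sum_rpow_le {ι : Type*} (s : Finset ι) (f : ι → ℝ≥0∞) (p : ℝ) (hp : 1 ≤ p) :
    ∑ i ∈ s, f i ^ p ≤ (∑ i ∈ s, f i) ^ p := by
  classical
  induction s using Finset.induction_on with
  | empty => simp
  | insert a s ha ih =>
    rw [Finset.sum_insert ha, Finset.sum_insert ha]
    exact (add_le_add le_rfl ih).trans (ENNReal.add_rpow_le_rpow_add _ _ hp)

lemma weak_big {n : ℕ} (K : ℝ≥0∞) (lam : ℝ) (h : 1 < lam) : Weak n K lam := by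
  intro E hE G hG μ hμ hl
  have : G = ∅ := by
    by_contra hne
    obtain ⟨l, hlG⟩ := Set.nonempty_iff_ne_empty.mpr hne
    have h1 := hl l hlG
    have h2 : volume (Set.Ico 0 1 ∩ tau E l) ≤ 1 := by
      refine (measure_mono Set.inter_subset_left).trans ?_
      simp
    have h3 := h1.trans h2
    rw [ENNReal.ofReal_le_one] at h3
    linarith
  simp [this]

lemma Ico_cover (B : ℕ) (hB : 0 < B) :
    Set.Ico (0:ℝ) 1 ⊆ ⋃ j ∈ Finset.range B, Set.Ico ((j:ℝ)/B) (((j:ℝ)+1)/B) := by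
  intro t ht
  have hB' : (0:ℝ) < B := by exact_mod_cast hB
  simp only [Set.mem_iUnion, Finset.mem_range]
  have h0 : 0 ≤ t * B := mul_nonneg ht.1 hB'.le
  refine ⟨⌊t * B⌋₊, ?_, ?_, ?_⟩
  · rw [Nat.floor_lt h0]
    have := ht.2
    nlinarith
  · rw [div_le_iff₀ hB']; exact Nat.floor_le h0
  · rw [lt_div_iff₀ hB']; exact Nat.lt_floor_add_one _

lemma step_cover {n : ℕ} (B : ℕ) (hB : 0 < B) (lam : ℝ) (hlam : 0 < lam) (E : Set (Euc n × ℝ))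
    (l : Euc n × Euc n) 
    (h : ENNReal.ofReal lam ≤ volume (Set.Ico 0 1 ∩ tau E l)) :
    (∃ j < B, ENNReal.ofReal (lam / 12) ≤ volume (Set.Ico ((j:ℝ)/B) (((j:ℝ)+1)/B) ∩ tau E l)) ∨
    ∃ j1 j2 j3 : ℕ, j1 + 2 ≤ j2 ∧ j2 + 2 ≤ j3 ∧ j3 < B ∧
      ENNReal.ofReal (lam / (2 * B)) ≤ volume (Set.Ico ((j1:ℝ)/B) (((j1:ℝ)+1)/B) ∩ tau E l) ∧
      ENNReal.ofReal (lam / (2 * B)) ≤ volume (Set.Ico ((j2:ℝ)/B) (((j2:ℝ)+1)/B) ∩ tau E l) ∧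
      ENNReal.ofReal (lam / (2 * B)) ≤ volume (Set.Ico ((j3:ℝ)/B) (((j3:ℝ)+1)/B) ∩ tau E l) := by
  have fin : ∀ j : ℕ, volume (Set.Ico ((j:ℝ)/B) (((j:ℝ)+1)/B) ∩ tau E l) ≠ ⊤ := fun j =>
    ((measure_mono Set.inter_subset_left).trans_lt (by simp)).ne
  have key := pigeon B hB (fun j => (volume (Set.Ico ((j:ℝ)/B) (((j:ℝ)+1)/B) ∩ tau E l)).toReal) lam hlam ?_
  · simpa only [ENNReal.ofReal_le_iff_le_toReal (fin _)] using key
  · rw [← ENNReal.toReal_sum (fun j _ => fin j), ← ENNReal.ofReal_le_iff_le_toReal]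
    · refine h.trans (le_trans (measure_mono ?_) (measure_biUnion_finset_le _ _))
      intro t ht
      have := Ico_cover B hB ht.1
      simp only [Set.mem_iUnion] at this ⊢
      obtain ⟨j, hj, h⟩ := this
      exact ⟨j, hj, h, ht.2⟩
    · exact (ENNReal.sum_lt_top.mpr fun j _ => (fin j).lt_top).ne

lemma Ico_sub (B : ℕ) (hB : 0 < B) (j : ℕ) (hj : j < B) : 
    Set.Ico ((j:ℝ)/B) (((j:ℝ)+1)/B) ⊆ Set.Ico 0 1 := by
  have hB' : (0:ℝ) < B := by exact_mod_cast hB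
  refine Set.Ico_subset_Ico (by positivity) ?_
  rw [div_le_one hB']
  exact_mod_cast hj

lemma Ico_sep (B : ℕ) (hB : 0 < B) (j j' : ℕ) (h : j + 2 ≤ j') :
    ∀ x ∈ Set.Ico ((j:ℝ)/B) (((j:ℝ)+1)/B), ∀ y ∈ Set.Ico ((j':ℝ)/B) (((j':ℝ)+1)/B), 1/(B:ℝ) ≤ |x - y| := by
  have hB' : (0:ℝ) < B := by exact_mod_cast hB
  have h' : (j:ℝ) + 2 ≤ j' := by exact_mod_cast h
  intro x hx y hy
  rw [abs_sub_comm]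
  refine le_trans ?_ (le_abs_self _)
  have h1 := hx.2.le
  have h2 := hy.1
  have : (j:ℝ)/B + 2/B ≤ j'/B := by rw [← add_div]; gcongr
  have e : ((j:ℝ)+1)/B = j/B + 1/B := by ring
  have e2 : (2:ℝ)/B = 1/B + 1/B := by ring
  linarith

lemma Ico_disj (B : ℕ) (hB : 0 < B) (j j' : ℕ) (h : j ≠ j') :
    Disjoint (Set.Ico ((j:ℝ)/B) (((j:ℝ)+1)/B)) (Set.Ico ((j':ℝ)/B) (((j':ℝ)+1)/B)) := by
  have hB' : (0:ℝ) < B := by exact_mod_cast hB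
  rw [Set.disjoint_left]
  rintro x ⟨h1, h2⟩ ⟨h3, h4⟩
  rw [div_le_iff₀ hB'] at h1 h3
  rw [lt_div_iff₀ hB'] at h2 h4
  apply h
  have a : j < j' + 1 := by exact_mod_cast h1.trans_lt h4
  have b : j' < j + 1 := by exact_mod_cast h3.trans_lt h2
  omega

lemma sum_slab {n : ℕ} (B : ℕ) (hB : 0 < B) (E : Set (Euc n × ℝ)) (hE : MeasurableSet E) :
    ∑ j ∈ Finset.range B, volume (E ∩ Set.univ ×ˢ Set.Ico ((j:ℝ)/B) (((j:ℝ)+1)/B)) ^ (7/4:ℝ)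
      ≤ volume E ^ (7/4:ℝ) := by
  refine (sum_rpow_le _ _ _ (by norm_num)).trans ?_
  refine ENNReal.rpow_le_rpow ?_ (by norm_num)
  rw [← measure_biUnion_finset]
  · exact measure_mono (Set.iUnion₂_subset fun j _ => Set.inter_subset_left)
  · intro j _ j' _ hne
    refine Disjoint.mono Set.inter_subset_right Set.inter_subset_right ?_
    exact Set.disjoint_prod.mpr (Or.inr (Ico_disj B hB j j' hne))
  · exact fun j _ => hE.inter (MeasurableSet.univ.prod measurableSet_Ico)

lemma step {n : ℕ} (hn : 5 ≤ n) (η : ℝ) (hη : 0 < η) (B : ℕ) (hB : 0 < B)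
    (hBη : (12:ℝ) ^ ((n:ℝ) + 7/4 + η) * (B:ℝ) ^ (-η) ≤ 1/2) :
    ∃ M : ℝ, 0 < M ∧ ∀ lam : ℝ, 0 < lam → lam ≤ 1 →
      Weak n (ENNReal.ofReal (M * (B * (lam / 12)) ^ (-((n:ℝ) + 7/4 + η)))) (B * (lam / 12)) →
      Weak n (ENNReal.ofReal (M * lam ^ (-((n:ℝ) + 7/4 + η)))) lam := by
  have hB' : (0:ℝ) < B := by exact_mod_cast hB
  obtain ⟨K, hK, htr⟩ := triple (n := n) (by omega) (1/(B:ℝ)) (by positivity)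
  set s := (n:ℝ) + 7/4 + η with hs
  set C0 := (B:ℝ)^3 * (K * (1 / (2 * B)) ^ (-((n:ℝ)/2 + 4))) with hC0
  have hC0' : 0 < C0 := by positivity
  refine ⟨2 * C0, by positivity, ?_⟩
  intro lam hlam hlam1 hW E hE G hG μ hμ hl
  set I : ℕ → Set ℝ := fun j => Set.Ico ((j:ℝ)/B) (((j:ℝ)+1)/B) with hI
  have mI : ∀ j, MeasurableSet (I j) := fun j => measurableSet_Ico
  set Gj : ℕ → Set (Euc n × Euc n) := fun j =>
    G ∩ {l | ENNReal.ofReal (lam / 12) ≤ volume (I j ∩ tau E l)} with hGj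
  set H : ℕ → Set (Euc n × Euc n) := fun j =>
    {l | ENNReal.ofReal (lam / (2 * B)) ≤ volume (I j ∩ tau E l)} with hH
  have mH : ∀ j, MeasurableSet (H j) := fun j => measurableSet_le measurable_const (vt_meas hE (mI j))
  have mGj : ∀ j, MeasurableSet (Gj j) := fun j =>
    hG.inter (measurableSet_le measurable_const (vt_meas hE (mI j)))
  set Tr := (Finset.range B ×ˢ Finset.range B ×ˢ Finset.range B).filter
    (fun t => t.1 + 2 ≤ t.2.1 ∧ t.2.1 + 2 ≤ t.2.2) with hTr
  have cover : G ⊆ (⋃ t ∈ Tr, G ∩ (H t.1 ∩ H t.2.1 ∩ H t.2.2)) ∪ ⋃ j ∈ Finset.range B, Gj j := by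
    intro l hlG
    rcases step_cover B hB lam hlam E l (hl l hlG) with ⟨j, hj, h⟩ | ⟨j1, j2, j3, h1, h2, h3, a1, a2, a3⟩
    · right
      simp only [Set.mem_iUnion]
      exact ⟨j, Finset.mem_range.mpr hj, hlG, h⟩
    · left
      simp only [Set.mem_iUnion]
      refine ⟨(j1, j2, j3), ?_, hlG, ⟨a1, a2⟩, a3⟩
      simp only [hTr, Finset.mem_filter, Finset.mem_product, Finset.mem_range]
      omega
  have hmono : ∀ S, S ⊆ G → ∀ v, volume {z | (v, z) ∈ S} ≤ μ := fun S hS v =>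
    (measure_mono (show {z | (v, z) ∈ S} ⊆ {z | (v, z) ∈ G} from fun z hz => hS hz)).trans (hμ v)
  set X := μ ^ (1/4:ℝ) * volume E ^ (7/4:ℝ) with hX
  have b1 : ∀ t ∈ Tr, volume (G ∩ (H t.1 ∩ H t.2.1 ∩ H t.2.2)) ≤
      ENNReal.ofReal (K * (lam / (2 * B)) ^ (-((n:ℝ)/2 + 4))) * X := by
    intro t ht
    simp only [hTr, Finset.mem_filter, Finset.mem_product, Finset.mem_range] at ht
    have := htr (I t.1) (I t.2.1) (I t.2.2) (mI _) (mI _) (mI _)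
      (Ico_sub B hB _ (by omega)) (Ico_sub B hB _ (by omega)) (Ico_sub B hB _ (by omega))
      (Ico_sep B hB _ _ (by omega)) (Ico_sep B hB _ _ (by omega)) (Ico_sep B hB _ _ (by omega))
      E hE (G ∩ (H t.1 ∩ H t.2.1 ∩ H t.2.2)) (hG.inter (((mH _).inter (mH _)).inter (mH _)))
      μ (lam / (2 * B)) (by positivity) (hmono _ Set.inter_subset_left)
      (fun l hl => hl.2.1.1) (fun l hl => hl.2.1.2) (fun l hl => hl.2.2)
    rwa [mul_assoc] at this
  have B1 : volume (⋃ t ∈ Tr, G ∩ (H t.1 ∩ H t.2.1 ∩ H t.2.2)) ≤ ENNReal.ofReal (C0 * lam ^ (-s)) * X := by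
    refine (measure_biUnion_finset_le _ _).trans ((Finset.sum_le_sum b1).trans ?_)
    rw [Finset.sum_const, nsmul_eq_mul, ← mul_assoc, ← ENNReal.ofReal_natCast,
      ← ENNReal.ofReal_mul (by positivity)]
    refine mul_le_mul' (ENNReal.ofReal_le_ofReal ?_) le_rfl
    have c : (Tr.card : ℝ) ≤ (B:ℝ)^3 := by
      have : Tr.card ≤ B^3 := by
        refine (Finset.card_filter_le _ _).trans ?_
        simp only [Finset.card_product, Finset.card_range]
        apply le_of_eq; ring
      exact_mod_cast this
    have e : (lam / (2 * B)) ^ (-((n:ℝ)/2 + 4)) = (1 / (2 * B)) ^ (-((n:ℝ)/2 + 4)) * lam ^ (-((n:ℝ)/2 + 4)) := by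
      rw [← Real.mul_rpow (by positivity) hlam.le]; congr 1; ring
    have e2 : lam ^ (-((n:ℝ)/2 + 4)) ≤ lam ^ (-s) := by
      apply Real.rpow_le_rpow_of_exponent_ge hlam hlam1
      have : (5:ℝ) ≤ n := by exact_mod_cast hn
      rw [hs]; linarith
    rw [e]
    calc _ ≤ (B:ℝ)^3 * (K * ((1 / (2 * B)) ^ (-((n:ℝ)/2 + 4)) * lam ^ (-s))) := by gcongr
      _ = _ := by rw [hC0]; ring
  have b2 : ∀ j ∈ Finset.range B, volume (Gj j) ≤ ENNReal.ofReal (C0 * lam ^ (-s)) * (μ ^ (1/4:ℝ) *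
      volume (E ∩ Set.univ ×ˢ I j) ^ (7/4:ℝ)) := by
    intro j hj
    have := rescale _ (lam/12) B j hB' hW E hE (Gj j) (mGj j) μ (hmono _ Set.inter_subset_left)
      (fun l hl => hl.2)
    refine this.trans ?_
    rw [ENNReal.mul_rpow_of_nonneg _ _ (by norm_num : (0:ℝ) ≤ 7/4), ENNReal.ofReal_rpow_of_pos hB']
    have assoc : ∀ a b c d e : ℝ≥0∞, a * (b * c * (d * e)) = a * b * d * (c * e) := by intros; ring
    rw [assoc, ← ENNReal.ofReal_mul (by positivity), ← ENNReal.ofReal_mul (by positivity)]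
    refine mul_le_mul' (ENNReal.ofReal_le_ofReal ?_) le_rfl
    have e : ((B:ℝ) * (lam/12)) ^ (-s) = (B:ℝ) ^ (-s) * (12:ℝ) ^ s * lam ^ (-s) := by
      rw [Real.mul_rpow hB'.le (by positivity), Real.div_rpow hlam.le (by norm_num),
        Real.rpow_neg (by norm_num : (0:ℝ) ≤ 12)]
      field_simp
    have e3 : (B:ℝ) ^ n * (B:ℝ) ^ (7/4:ℝ) * (B:ℝ) ^ (-s) = (B:ℝ) ^ (-η) := by
      rw [← Real.rpow_natCast, ← Real.rpow_add hB', ← Real.rpow_add hB']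
      congr 1; rw [hs]; ring
    rw [e]
    calc _ = 2 * C0 * (12 ^ s * ((B:ℝ) ^ n * (B:ℝ) ^ (7/4:ℝ) * (B:ℝ) ^ (-s))) * lam ^ (-s) := by ring
      _ ≤ 2 * C0 * (1/2) * lam ^ (-s) := by rw [e3]; gcongr
      _ = _ := by ring
  have B2 : volume (⋃ j ∈ Finset.range B, Gj j) ≤ ENNReal.ofReal (C0 * lam ^ (-s)) * X := by
    refine (measure_biUnion_finset_le _ _).trans ((Finset.sum_le_sum b2).trans ?_)
    rw [← Finset.mul_sum, ← Finset.mul_sum]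
    exact mul_le_mul' le_rfl (mul_le_mul' le_rfl (sum_slab B hB E hE))
  calc volume G ≤ _ := measure_mono cover
    _ ≤ _ := measure_union_le _ _
    _ ≤ ENNReal.ofReal (C0 * lam ^ (-s)) * X + ENNReal.ofReal (C0 * lam ^ (-s)) * X := add_le_add B1 B2
    _ = _ := by
      rw [← add_mul, ← ENNReal.ofReal_add (by positivity) (by positivity), mul_assoc (ENNReal.ofReal _)]
      congr 2; ring

/-- the weak-type estimate -/
lemma weak {n : ℕ} (hn : 5 ≤ n) (η : ℝ) (hη : 0 < η) : ∃ M : ℝ, 0 < M ∧ ∀ lam : ℝ, 0 < lam →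
    Weak n (ENNReal.ofReal (M * lam ^ (-((n:ℝ) + 7/4 + η)))) lam := by
  set s := (n:ℝ) + 7/4 + η with hs
  have lim : Filter.Tendsto (fun B : ℕ => (12:ℝ) ^ s * (B:ℝ) ^ (-η)) Filter.atTop (nhds (12 ^ s * 0)) :=
    ((tendsto_rpow_neg_atTop hη).comp tendsto_natCast_atTop_atTop).const_mul _
  rw [mul_zero] at lim
  obtain ⟨B, h1, h2⟩ := ((lim.eventually_le_const (by norm_num : (0:ℝ) < 1/2)).and
    (Filter.eventually_ge_atTop 13)).exists
  obtain ⟨M, hM, hst⟩ := step hn η hη B (by omega) h1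
  refine ⟨M, hM, ?_⟩
  have hB' : (13:ℝ) ≤ B := by exact_mod_cast h2
  have main : ∀ k : ℕ, ∀ lam : ℝ, 0 < lam → 1 < lam * ((B:ℝ)/12)^k →
      Weak n (ENNReal.ofReal (M * lam ^ (-s))) lam := by
    intro k
    induction k with
    | zero => intro lam h0 h; exact weak_big _ _ (by simpa using h)
    | succ k ih =>
      intro lam h0 h
      rcases lt_or_ge 1 lam with h3 | h3
      · exact weak_big _ _ h3
      · refine hst lam h0 h3 (ih _ (by positivity) ?_)
        calc 1 < _ := h
          _ = _ := by ring
  intro lam hlam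
  obtain ⟨k, hk⟩ := pow_unbounded_of_one_lt (1/lam) (by linarith : (1:ℝ) < (B:ℝ)/12)
  refine main k lam hlam ?_
  rw [div_lt_iff₀ hlam] at hk
  linarith


/-- the model operator after projective change of variables -/
def V {n : ℕ} (g : Euc n × ℝ → ℝ≥0∞) (v z : Euc n) : ℝ≥0∞ :=
  ∫⁻ s in Set.Ico (0:ℝ) 1, g (z + (1 + s) • v, s)

lemma V_meas {n : ℕ} (g : Euc n × ℝ → ℝ≥0∞) (hg : Measurable g) :
    Measurable fun l : Euc n × Euc n => V g l.1 l.2 := by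
  unfold V
  have : Measurable fun p : (Euc n × Euc n) × ℝ => g (p.1.2 + (1 + p.2) • p.1.1, p.2) :=
    hg.comp (by fun_prop)
  exact this.lintegral_prod_right'

lemma V_mono {n : ℕ} {g h : Euc n × ℝ → ℝ≥0∞} (H : ∀ x, g x ≤ h x) (v z : Euc n) : V g v z ≤ V h v z :=
  lintegral_mono fun _ => H _

lemma V_ind {n : ℕ} {E : Set (Euc n × ℝ)} (hE : MeasurableSet E) (v z : Euc n) :
    V (ind E) v z = volume (Set.Ico 0 1 ∩ tau E (v, z + v)) := by
  unfold V
  have : ∀ s : ℝ, ind E (z + (1 + s) • v, s) = ind (tau E (v, z + v)) s := by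
    intro s
    have : z + (1 + s) • v = z + v + s • v := by module
    rw [this]; rfl
  simp_rw [this]
  rw [lint_ind _ (tau_meas hE _), Measure.restrict_apply (tau_meas hE _), Set.inter_comm]

lemma V_fub {n : ℕ} (g : Euc n × ℝ → ℝ≥0∞) (hg : Measurable g) (v : Euc n) :
    ∫⁻ z, V g v z ≤ ∫⁻ x, g x := by
  unfold V
  rw [lintegral_lintegral_swap]
  · rw [Measure.volume_eq_prod, lintegral_prod_symm' _ hg]
    calc _ = ∫⁻ s in Set.Ico (0:ℝ) 1, ∫⁻ z, g (z, s) := by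
          refine lintegral_congr fun s => ?_
          exact lintegral_add_right_eq_self (fun z => g (z, s)) _
      _ ≤ _ := setLIntegral_le_lintegral _ _
  · have : Measurable fun p : Euc n × ℝ => g (p.1 + (1 + p.2) • v, p.2) := hg.comp (by fun_prop)
    exact this.aemeasurable

lemma weakV {n : ℕ} {K : ℝ≥0∞} {lam : ℝ} (hW : Weak n K lam) 
    (E : Set (Euc n × ℝ)) (hE : MeasurableSet E) (G : Set (Euc n × Euc n)) (hG : MeasurableSet G)
    (μ : ℝ≥0∞) (hμ : ∀ v, volume {z | (v, z) ∈ G} ≤ μ)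
    (hl : ∀ l ∈ G, ENNReal.ofReal lam ≤ V (ind E) l.1 l.2) :
    volume G ≤ K * μ ^ (1/4:ℝ) * volume E ^ (7/4:ℝ) := by
  set G' : Set (Euc n × Euc n) := (fun p : Euc n × Euc n => (p.1, p.2 - p.1)) ⁻¹' G with hG'
  have mG' : MeasurableSet G' :=
    (by fun_prop : Measurable fun p : Euc n × Euc n => (p.1, p.2 - p.1)) hG
  have fib : ∀ v', volume {z | (v', z) ∈ G'} = volume {z | (v', z) ∈ G} := by
    intro v'
    have := measure_preimage_add_right volume (-v') {z | (v', z) ∈ G}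
    simp only [← sub_eq_add_neg] at this
    exact this
  have vol : volume G' = volume G := by
    rw [Measure.volume_eq_prod, Measure.prod_apply hG, Measure.prod_apply mG']
    exact lintegral_congr fib
  rw [← vol]
  refine hW E hE G' mG' μ (fun v => (fib v).trans_le (hμ v)) ?_
  intro l hl'
  have := hl _ hl'
  rw [V_ind hE] at this
  simpa using this

lemma layer (x : ℝ≥0∞) (c : ℝ) (hc : 0 < c) (hx : x ≤ ENNReal.ofReal c) (s : ℝ) (hs : 0 < s) :
    x ^ s ≤ ∑' m : ℕ, ENNReal.ofReal (c * (1/2)^m) ^ s *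
      ind {y : ℝ≥0∞ | ENNReal.ofReal (c * (1/2)^(m+1)) < y ∧ y ≤ ENNReal.ofReal (c * (1/2)^m)} x := by
  rcases eq_or_ne x 0 with h0 | h0
  · rw [h0, ENNReal.zero_rpow_of_pos hs]; exact zero_le
  have ht : x ≠ ⊤ := (hx.trans_lt ofReal_lt_top).ne
  have hp : 0 < x.toReal := ENNReal.toReal_pos h0 ht
  have hle : x.toReal ≤ c := ENNReal.toReal_le_of_le_ofReal hc.le hx
  obtain ⟨m, h1, h2⟩ := exists_nat_pow_near_of_lt_one (x := x.toReal / c) (y := (1/2:ℝ)) (by positivity)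
    ((div_le_one hc).mpr hle) (by norm_num) (by norm_num)
  rw [lt_div_iff₀ hc] at h1
  rw [div_le_iff₀ hc] at h2
  have a1 : ENNReal.ofReal (c * (1/2)^(m+1)) < x := by
    rw [ENNReal.ofReal_lt_iff_lt_toReal (by positivity) ht]; linarith
  have a2 : x ≤ ENNReal.ofReal (c * (1/2)^m) := by
    rw [← ENNReal.ofReal_toReal ht]; exact ENNReal.ofReal_le_ofReal (by linarith)
  refine le_trans ?_ (ENNReal.le_tsum m)
  rw [ind_of_mem (show x ∈ {y : ℝ≥0∞ | ENNReal.ofReal (c * (1/2)^(m+1)) < y ∧ y ≤ ENNReal.ofReal (c * (1/2)^m)} from ⟨a1, a2⟩), mul_one]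
  exact ENNReal.rpow_le_rpow a2 hs.le

lemma tsum_rpow_le {ι : Type*} (f : ι → ℝ≥0∞) (p : ℝ) (h0 : 0 < p) (hp : p ≤ 1) :
    (∑' i, f i) ^ p ≤ ∑' i, f i ^ p := by
  classical
  have fin : ∀ s : Finset ι, (∑ i ∈ s, f i) ^ p ≤ ∑ i ∈ s, f i ^ p := by
    intro s
    induction s using Finset.induction_on with
    | empty => simp [h0]
    | insert a s ha ih =>
      rw [Finset.sum_insert ha, Finset.sum_insert ha]
      exact (ENNReal.rpow_add_le_add_rpow _ _ h0.le hp).trans (add_le_add le_rfl ih)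
  have lim : Filter.Tendsto (fun s : Finset ι => (∑ i ∈ s, f i) ^ p) Filter.atTop (nhds ((∑' i, f i) ^ p)) :=
    (ENNReal.continuous_rpow_const.tendsto _).comp ENNReal.summable.hasSum
  exact le_of_tendsto' lim fun s => (fin s).trans (ENNReal.sum_le_tsum s)

lemma interp (x E k1 k2 k3 : ℝ≥0∞) (a b c : ℝ) (ha : 0 ≤ a) (hb : 0 ≤ b) (hc : 0 ≤ c) (h : a + b + c = 1)
    (h1 : x ≤ k1 * E ^ (7/4:ℝ)) (h2 : x ≤ k2 * E) (h3 : x ≤ k3) :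
    x ≤ k1 ^ a * k2 ^ b * k3 ^ c * E ^ (7 * a / 4 + b) := by
  calc x = x ^ (a + b + c) := by rw [h, ENNReal.rpow_one]
    _ = x ^ a * x ^ b * x ^ c := by
      rw [ENNReal.rpow_add_of_nonneg _ _ (by positivity) hc, ENNReal.rpow_add_of_nonneg _ _ ha hb]
    _ ≤ (k1 * E ^ (7/4:ℝ)) ^ a * (k2 * E) ^ b * k3 ^ c := by gcongr
    _ = _ := by
      rw [ENNReal.mul_rpow_of_nonneg _ _ ha, ENNReal.mul_rpow_of_nonneg _ _ hb, ← ENNReal.rpow_mul,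
        ENNReal.rpow_add_of_nonneg _ _ (by positivity) hb]
      have : 7 / 4 * a = 7 * a / 4 := by ring
      rw [this]; ring


/-- superlevel set -/
def Sv {n : ℕ} (C : ℝ) (E : Set (Euc n × ℝ)) (lam : ℝ) : Set (Euc n × Euc n) :=
  {l | l.2 ∈ Metric.ball (0 : Euc n) C ∧ ENNReal.ofReal lam ≤ V (ind E) l.1 l.2}

/-- fibre measure -/
def hv {n : ℕ} (C : ℝ) (E : Set (Euc n × ℝ)) (lam : ℝ) (v : Euc n) : ℝ≥0∞ :=
  volume {z | (v, z) ∈ Sv C E lam}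

lemma Sv_meas {n : ℕ} (C : ℝ) {E : Set (Euc n × ℝ)} (hE : MeasurableSet E) (lam : ℝ) :
    MeasurableSet (Sv C E lam) := by
  refine MeasurableSet.inter (s₁ := {l : Euc n × Euc n | l.2 ∈ Metric.ball (0 : Euc n) C})
    (s₂ := {l : Euc n × Euc n | ENNReal.ofReal lam ≤ V (ind E) l.1 l.2}) ?_ ?_
  · exact measurable_snd measurableSet_ball
  · exact measurableSet_le measurable_const (V_meas _ (ind_meas hE))

lemma hv_meas {n : ℕ} (C : ℝ) {E : Set (Euc n × ℝ)} (hE : MeasurableSet E) (lam : ℝ) :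
    Measurable (hv C E lam) := measurable_measure_prodMk_left (Sv_meas C hE lam)

/-- dyadic set of directions -/
def Xv {n : ℕ} (C : ℝ) (E : Set (Euc n × ℝ)) (lam a b : ℝ) : Set (Euc n) :=
  Metric.ball 0 1 ∩ {v | ENNReal.ofReal a < hv C E lam v ∧ hv C E lam v ≤ ENNReal.ofReal b}

lemma Xv_meas {n : ℕ} (C : ℝ) {E : Set (Euc n × ℝ)} (hE : MeasurableSet E) (lam a b : ℝ) :
    MeasurableSet (Xv C E lam a b) := by
  refine measurableSet_ball.inter (MeasurableSet.inter (s₁ := {v | ENNReal.ofReal a < hv C E lam v}) 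
    (s₂ := {v | hv C E lam v ≤ ENNReal.ofReal b}) ?_ ?_)
  · exact measurableSet_lt measurable_const (hv_meas C hE lam)
  · exact measurableSet_le (hv_meas C hE lam) measurable_const

lemma X_bound1 {n : ℕ} (C : ℝ) {E : Set (Euc n × ℝ)} (hE : MeasurableSet E) (lam a b : ℝ) (K : ℝ≥0∞)
    (hW : Weak n K lam) :
    ENNReal.ofReal a * volume (Xv C E lam a b) ≤ K * ENNReal.ofReal b ^ (1/4:ℝ) * volume E ^ (7/4:ℝ) := by
  set X := Xv C E lam a b with hX
  have mX : MeasurableSet X := Xv_meas C hE lam a b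
  set G := Sv C E lam ∩ X ×ˢ Set.univ with hG
  have mG : MeasurableSet G := (Sv_meas C hE lam).inter (mX.prod MeasurableSet.univ)
  have fib : ∀ v, volume {z | (v, z) ∈ G} = X.indicator (hv C E lam) v := by
    intro v
    by_cases h : v ∈ X
    · rw [Set.indicator_of_mem h]
      simp only [hG, hv, Set.mem_inter_iff, Set.mem_prod, h, Set.mem_univ, and_true]
    · rw [Set.indicator_of_notMem h]
      simp only [hG, Set.mem_inter_iff, Set.mem_prod, h, false_and, and_false, Set.ofPred_false, measure_empty]
  have key := weakV hW E hE G mG (ENNReal.ofReal b) ?_ (fun l hl => hl.1.2)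
  · refine le_trans ?_ key
    have e : volume G = ∫⁻ v, X.indicator (hv C E lam) v := by
      rw [Measure.volume_eq_prod, Measure.prod_apply mG]
      exact lintegral_congr fib
    rw [e, lintegral_indicator mX, ← setLIntegral_const]
    exact setLIntegral_mono (hv_meas C hE lam) fun v hv => hv.2.1.le
  · intro v
    rw [fib]
    by_cases h : v ∈ X
    · rw [Set.indicator_of_mem h]; exact h.2.2
    · rw [Set.indicator_of_notMem h]; exact zero_le

lemma X_bound2 {n : ℕ} (C : ℝ) {E : Set (Euc n × ℝ)} (hE : MeasurableSet E) (lam a b : ℝ) :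
    ENNReal.ofReal lam * (ENNReal.ofReal a * volume (Xv C E lam a b)) ≤
      volume (Metric.ball (0 : Euc n) 1) * volume E := by
  have h1 : ∀ v, ENNReal.ofReal lam * hv C E lam v ≤ volume E := by
    intro v
    have m : MeasurableSet {z | (v, z) ∈ Sv C E lam} := measurable_prodMk_left (Sv_meas C hE lam)
    calc _ = ∫⁻ z in {z | (v, z) ∈ Sv C E lam}, ENNReal.ofReal lam := (setLIntegral_const _ _).symm
      _ ≤ ∫⁻ z in {z | (v, z) ∈ Sv C E lam}, V (ind E) v z := by
        refine setLIntegral_mono ((V_meas _ (ind_meas hE)).comp measurable_prodMk_left) fun z hz => hz.2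
      _ ≤ ∫⁻ z, V (ind E) v z := setLIntegral_le_lintegral _ _
      _ ≤ _ := V_fub _ (ind_meas hE) v
      _ = _ := lint_ind _ hE
  calc _ = ∫⁻ v in Xv C E lam a b, ENNReal.ofReal lam * ENNReal.ofReal a := by
        rw [setLIntegral_const, mul_assoc]
    _ ≤ ∫⁻ v in Xv C E lam a b, volume E := by
        refine setLIntegral_mono measurable_const fun v hv => ?_
        refine le_trans ?_ (h1 v)
        gcongr
        exact hv.2.1.le
    _ ≤ _ := by
        rw [setLIntegral_const, mul_comm]
        gcongr
        exact Set.inter_subset_left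

lemma le_of_ofReal_mul (k : ℝ) (hk : 0 < k) (x y : ℝ≥0∞) (h : ENNReal.ofReal k * x ≤ y) :
    x ≤ ENNReal.ofReal k⁻¹ * y := by
  calc x = ENNReal.ofReal k⁻¹ * (ENNReal.ofReal k * x) := by
        rw [← mul_assoc, ← ENNReal.ofReal_mul (by positivity), inv_mul_cancel₀ hk.ne', ENNReal.ofReal_one, one_mul]
    _ ≤ _ := by gcongr

lemma decomp {n : ℕ} (C : ℝ) (hC : 0 < C) (q r : ℝ) (hq : 0 < q) (hr : 0 < r) (hqr : q ≤ r)
    (E : Set (Euc n × ℝ)) (hE : MeasurableSet E) (c : ℝ) (hc : 0 < c)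
    (hcv : volume (Metric.ball (0 : Euc n) C) = ENNReal.ofReal c) :
    ∫⁻ v in Metric.ball (0 : Euc n) 1, (∫⁻ z in Metric.ball (0 : Euc n) C, V (ind E) v z ^ r) ^ (q/r) ≤
      ∑' i : ℕ, ∑' m : ℕ, ENNReal.ofReal ((1/2)^i) ^ q * ENNReal.ofReal (c * (1/2)^m) ^ (q/r) *
        volume (Xv C E ((1/2)^(i+1)) (c * (1/2)^(m+1)) (c * (1/2)^m)) := by
  have p1 : ∀ v, ∫⁻ z in Metric.ball (0 : Euc n) C, V (ind E) v z ^ r ≤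
      ∑' i : ℕ, ENNReal.ofReal ((1/2)^i) ^ r * hv C E ((1/2)^(i+1)) v := by
    intro v
    have pt : ∀ z ∈ Metric.ball (0 : Euc n) C, V (ind E) v z ^ r ≤
        ∑' i : ℕ, ENNReal.ofReal ((1/2)^i) ^ r * ind {z | (v, z) ∈ Sv C E ((1/2)^(i+1))} z := by
      intro z hz
      have := layer (V (ind E) v z) 1 one_pos ?_ r hr
      · refine this.trans (ENNReal.tsum_le_tsum fun i => ?_)
        simp only [one_mul]
        gcongr
        by_cases h : V (ind E) v z ∈ {y : ℝ≥0∞ | ENNReal.ofReal ((1/2)^(i+1)) < y ∧ y ≤ ENNReal.ofReal ((1/2)^i)}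
        · have h' : z ∈ {z | (v, z) ∈ Sv C E ((1/2)^(i+1))} := ⟨hz, h.1.le⟩
          rw [ind_of_mem h']; exact ind_le_one _ _
        · rw [ind_of_not_mem h]; exact zero_le
      · rw [V_ind hE, ENNReal.ofReal_one]
        exact (measure_mono Set.inter_subset_left).trans (by simp)
    have m : ∀ i : ℕ, MeasurableSet {z | (v, z) ∈ Sv C E ((1/2)^(i+1))} := fun i =>
      measurable_prodMk_left (Sv_meas C hE _)
    calc _ ≤ ∫⁻ z in Metric.ball (0 : Euc n) C, 
          ∑' i : ℕ, ENNReal.ofReal ((1/2)^i) ^ r * ind {z | (v, z) ∈ Sv C E ((1/2)^(i+1))} z :=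
          setLIntegral_mono' measurableSet_ball pt
      _ ≤ ∫⁻ z, ∑' i : ℕ, ENNReal.ofReal ((1/2)^i) ^ r * ind {z | (v, z) ∈ Sv C E ((1/2)^(i+1))} z :=
          setLIntegral_le_lintegral _ _
      _ = _ := by
          rw [lintegral_tsum fun i => ((ind_meas (m i)).const_mul _).aemeasurable]
          refine tsum_congr fun i => ?_
          rw [lintegral_const_mul _ (ind_meas (m i)), lint_ind _ (m i)]; rfl
  have hqr0 : 0 < q / r := by positivity
  have p2 : ∀ v ∈ Metric.ball (0 : Euc n) 1, (∫⁻ z in Metric.ball (0 : Euc n) C, V (ind E) v z ^ r) ^ (q/r) ≤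
      ∑' i : ℕ, ∑' m : ℕ, ENNReal.ofReal ((1/2)^i) ^ q * ENNReal.ofReal (c * (1/2)^m) ^ (q/r) *
        ind (Xv C E ((1/2)^(i+1)) (c * (1/2)^(m+1)) (c * (1/2)^m)) v := by
    intro v hv1
    refine (ENNReal.rpow_le_rpow (p1 v) hqr0.le).trans ((tsum_rpow_le _ _ hqr0 ((div_le_one hr).mpr hqr)).trans ?_)
    refine ENNReal.tsum_le_tsum fun i => ?_
    rw [ENNReal.mul_rpow_of_nonneg _ _ hqr0.le, ← ENNReal.rpow_mul, mul_div_cancel₀ _ hr.ne']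
    have := layer (hv C E ((1/2)^(i+1)) v) c hc ?_ (q/r) hqr0
    · refine (mul_le_mul' le_rfl this).trans ?_
      rw [← ENNReal.tsum_mul_left]
      refine ENNReal.tsum_le_tsum fun m => ?_
      rw [← mul_assoc]
      gcongr
      by_cases h : hv C E ((1/2)^(i+1)) v ∈ {y : ℝ≥0∞ | ENNReal.ofReal (c * (1/2)^(m+1)) < y ∧ y ≤ ENNReal.ofReal (c * (1/2)^m)}
      · have h' : v ∈ Xv C E ((1/2)^(i+1)) (c * (1/2)^(m+1)) (c * (1/2)^m) := ⟨hv1, h⟩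
        rw [ind_of_mem h']; exact ind_le_one _ _
      · rw [ind_of_not_mem h]; exact zero_le
    · rw [← hcv]
      exact measure_mono fun z hz => hz.1
  have mx : ∀ i m : ℕ, MeasurableSet (Xv C E ((1/2)^(i+1)) (c * (1/2)^(m+1)) (c * (1/2)^m)) := fun i m =>
    Xv_meas C hE _ _ _
  refine (setLIntegral_mono' measurableSet_ball p2).trans ((setLIntegral_le_lintegral _ _).trans ?_)
  rw [lintegral_tsum fun i => (Measurable.tsum fun m => (ind_meas (mx i m)).const_mul _).aemeasurable]
  refine ENNReal.tsum_le_tsum fun i => ?_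
  rw [lintegral_tsum fun m => ((ind_meas (mx i m)).const_mul _).aemeasurable]
  refine ENNReal.tsum_le_tsum fun m => ?_
  rw [lintegral_const_mul _ (ind_meas (mx i m)), lint_ind _ (mx i m)]

lemma strong_sets {n : ℕ} (hn : 5 ≤ n) (C : ℝ) (hC : 0 < C) (q r : ℝ) (hq : 0 < q) (hr : 0 < r) (hqr : q ≤ r)
    (a b c η : ℝ) (ha : 0 ≤ a) (hb : 0 ≤ b) (hc : 0 ≤ c) (habc : a + b + c = 1) (hη : 0 < η)
    (e1 : 0 < q - a * ((n:ℝ) + 7/4 + η) - b) (e2 : 0 < q / r - 3 * a / 4 - b) :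
    ∃ A : ℝ≥0∞, A ≠ ⊤ ∧ ∀ E : Set (Euc n × ℝ), MeasurableSet E →
      ∫⁻ v in Metric.ball (0 : Euc n) 1, (∫⁻ z in Metric.ball (0 : Euc n) C, V (ind E) v z ^ r) ^ (q/r) ≤
        A * volume E ^ (7 * a / 4 + b) := by
  obtain ⟨M, hM, hW⟩ := weak hn η hη
  set s := (n:ℝ) + 7/4 + η with hs
  set κ := (volume (Metric.ball (0 : Euc n) C)).toReal with hκ
  have hκv : volume (Metric.ball (0 : Euc n) C) = ENNReal.ofReal κ :=
    (ENNReal.ofReal_toReal measure_ball_lt_top.ne).symm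
  have hκ0 : 0 < κ := ENNReal.toReal_pos (Metric.measure_ball_pos _ _ hC).ne' measure_ball_lt_top.ne
  set ω := (volume (Metric.ball (0 : Euc n) 1)).toReal with hω
  have hωv : volume (Metric.ball (0 : Euc n) 1) = ENNReal.ofReal ω :=
    (ENNReal.ofReal_toReal measure_ball_lt_top.ne).symm
  have hω0 : 0 < ω := ENNReal.toReal_pos (Metric.measure_ball_pos _ _ one_pos).ne' measure_ball_lt_top.ne
  set K1 := (κ / 2)⁻¹ * (M * (1/2:ℝ) ^ (-s) * κ ^ (1/4:ℝ)) with hK1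
  set K2 := (κ / 4)⁻¹ * ω with hK2
  have hK1p : 0 < K1 := by positivity
  have hK2p : 0 < K2 := by positivity
  set K := κ ^ (q/r) * (K1 ^ a * K2 ^ b * ω ^ c) with hK
  have hKp : 0 < K := by positivity
  set α := (1/2:ℝ) ^ (q - a * s - b) with hα
  set β := (1/2:ℝ) ^ (q / r - 3 * a / 4 - b) with hβ
  have hα1 : α < 1 := Real.rpow_lt_one (by norm_num) (by norm_num) e1
  have hβ1 : β < 1 := Real.rpow_lt_one (by norm_num) (by norm_num) e2
  have term : ∀ E : Set (Euc n × ℝ), MeasurableSet E → ∀ i m : ℕ, 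
      ENNReal.ofReal ((1/2)^i) ^ q * ENNReal.ofReal (κ * (1/2)^m) ^ (q/r) *
        volume (Xv C E ((1/2)^(i+1)) (κ * (1/2)^(m+1)) (κ * (1/2)^m)) ≤ 
      ENNReal.ofReal K * volume E ^ (7 * a / 4 + b) * (ENNReal.ofReal α ^ i * ENNReal.ofReal β ^ m) := by
    intro E hE i m
    set u := (1/2:ℝ)^i with hu
    set w := (1/2:ℝ)^m with hw
    have hu0 : 0 < u := by positivity
    have hw0 : 0 < w := by positivity
    have eu : (1/2:ℝ)^(i+1) = u / 2 := by rw [pow_succ]; ring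
    have ew : κ * (1/2:ℝ)^(m+1) = κ * w / 2 := by rw [pow_succ]; ring
    rw [eu, ew]
    set x := volume (Xv C E (u/2) (κ * w/2) (κ * w)) with hx
    have x1 : x ≤ ENNReal.ofReal (K1 * (u ^ (-s) * w ^ (-(3/4):ℝ))) * volume E ^ (7/4:ℝ) := by
      have := le_of_ofReal_mul _ (by positivity) _ _ (X_bound1 C hE (u/2) (κ*w/2) (κ*w) _ (hW (u/2) (by positivity)))
      rw [ENNReal.ofReal_rpow_of_pos (by positivity), ← ENNReal.ofReal_mul (by positivity), ← mul_assoc,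
        ← ENNReal.ofReal_mul (by positivity)] at this
      refine this.trans (le_of_eq ?_)
      congr 2
      have f1 : (u/2) ^ (-s) = (1/2) ^ (-s) * u ^ (-s) := by
        rw [← Real.mul_rpow (by positivity) (by positivity)]; congr 1; ring
      have f2 : (κ * w) ^ (1/4:ℝ) = κ ^ (1/4:ℝ) * w ^ (1/4:ℝ) := Real.mul_rpow hκ0.le hw0.le
      have f3 : w ^ (-(3/4):ℝ) = w⁻¹ * w ^ (1/4:ℝ) := by
        rw [← Real.rpow_neg_one, ← Real.rpow_add hw0]; norm_num
      rw [f1, f2, f3, hK1]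
      field_simp
    have x2 : x ≤ ENNReal.ofReal (K2 * (u⁻¹ * w⁻¹)) * volume E := by
      have := X_bound2 C hE (u/2) (κ*w/2) (κ*w)
      rw [← mul_assoc, ← ENNReal.ofReal_mul (by positivity)] at this
      have := le_of_ofReal_mul _ (by positivity) _ _ this
      rw [hωv, ← mul_assoc, ← ENNReal.ofReal_mul (by positivity)] at this
      refine this.trans (le_of_eq ?_)
      congr 2
      rw [hK2]
      field_simp
      norm_num
    have x3 : x ≤ ENNReal.ofReal ω := by
      rw [← hωv]; exact measure_mono Set.inter_subset_left
    have x4 := interp x _ _ _ _ a b c ha hb hc habc x1 x2 x3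
    rw [ENNReal.ofReal_rpow_of_pos (by positivity), ENNReal.ofReal_rpow_of_pos (by positivity),
      ENNReal.ofReal_rpow_of_pos (by positivity), ← ENNReal.ofReal_mul (by positivity),
      ← ENNReal.ofReal_mul (by positivity)] at x4
    refine (mul_le_mul' le_rfl x4).trans (le_of_eq ?_)
    rw [ENNReal.ofReal_rpow_of_pos (by positivity), ENNReal.ofReal_rpow_of_pos (by positivity),
      ← ENNReal.ofReal_mul (by positivity), ← mul_assoc, ← ENNReal.ofReal_mul (by positivity),
      ← ENNReal.ofReal_pow (by positivity), ← ENNReal.ofReal_pow (by positivity),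
      ← ENNReal.ofReal_mul (by positivity), mul_right_comm (ENNReal.ofReal K), ← ENNReal.ofReal_mul (by positivity)]
    congr 2
    have g1 : α ^ i = u ^ (q - a * s - b) := by
      rw [hα, hu, ← Real.rpow_natCast, ← Real.rpow_natCast, ← Real.rpow_mul (by norm_num),
        ← Real.rpow_mul (by norm_num), mul_comm]
    have g2 : β ^ m = w ^ (q / r - 3 * a / 4 - b) := by
      rw [hβ, hw, ← Real.rpow_natCast, ← Real.rpow_natCast, ← Real.rpow_mul (by norm_num),
        ← Real.rpow_mul (by norm_num), mul_comm]
    have g3 : u ^ (q - a * s - b) = u ^ q * ((u ^ (-s)) ^ a * u⁻¹ ^ b) := by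
      rw [← Real.rpow_mul hu0.le, Real.inv_rpow hu0.le, ← Real.rpow_neg hu0.le, ← Real.rpow_add hu0,
        ← Real.rpow_add hu0]
      congr 1; ring
    have g4 : w ^ (q / r - 3 * a / 4 - b) = w ^ (q/r) * ((w ^ (-(3/4):ℝ)) ^ a * w⁻¹ ^ b) := by
      rw [← Real.rpow_mul hw0.le, Real.inv_rpow hw0.le, ← Real.rpow_neg hw0.le, ← Real.rpow_add hw0,
        ← Real.rpow_add hw0]
      congr 1; ring
    rw [g1, g2, g3, g4, hK, Real.mul_rpow hκ0.le hw0.le, Real.mul_rpow hK1p.le (by positivity),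
      Real.mul_rpow (x := u ^ (-s)) (by positivity) (by positivity), 
      Real.mul_rpow hK2p.le (by positivity), Real.mul_rpow (x := u⁻¹) (by positivity) (by positivity)]
    ring
  refine ⟨ENNReal.ofReal K * ((1 - ENNReal.ofReal α)⁻¹ * (1 - ENNReal.ofReal β)⁻¹), ?_, ?_⟩
  · refine ENNReal.mul_ne_top ofReal_ne_top (ENNReal.mul_ne_top ?_ ?_)
    · rw [ENNReal.inv_ne_top]
      exact (tsub_pos_of_lt (by rwa [ENNReal.ofReal_lt_one])).ne'
    · rw [ENNReal.inv_ne_top]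
      exact (tsub_pos_of_lt (by rwa [ENNReal.ofReal_lt_one])).ne'
  · intro E hE
    refine (decomp C hC q r hq hr hqr E hE κ hκ0 hκv).trans ?_
    calc _ ≤ ∑' i : ℕ, ∑' m : ℕ, 
          ENNReal.ofReal K * volume E ^ (7 * a / 4 + b) * (ENNReal.ofReal α ^ i * ENNReal.ofReal β ^ m) :=
          ENNReal.tsum_le_tsum fun i => ENNReal.tsum_le_tsum fun m => term E hE i m
      _ = _ := by
        simp_rw [ENNReal.tsum_mul_left, ENNReal.tsum_mul_right, ENNReal.tsum_geometric]
        ring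


lemma wsum (a w : ℕ → ℝ≥0∞) (hw0 : ∀ k, w k ≠ 0) (hwt : ∀ k, w k ≠ ⊤) (r : ℝ) (hr : 0 < r) :
    (∑' k, a k) ^ r ≤ (∑' k, w k) ^ r * ∑' k, ((w k)⁻¹ * a k) ^ r := by
  have h1 : ∀ k, (w k)⁻¹ * a k ≤ (∑' k, ((w k)⁻¹ * a k) ^ r) ^ (1/r) := by
    intro k
    calc _ = (((w k)⁻¹ * a k) ^ r) ^ (1/r) := by
          rw [← ENNReal.rpow_mul, mul_one_div_cancel hr.ne', ENNReal.rpow_one]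
      _ ≤ _ := ENNReal.rpow_le_rpow (ENNReal.le_tsum k) (by positivity)
  set S := (∑' k, ((w k)⁻¹ * a k) ^ r) ^ (1/r) with hS
  have h2 : ∑' k, a k ≤ (∑' k, w k) * S := by
    rw [← ENNReal.tsum_mul_right]
    refine ENNReal.tsum_le_tsum fun k => ?_
    calc a k = w k * ((w k)⁻¹ * a k) := by
          rw [← mul_assoc, ENNReal.mul_inv_cancel (hw0 k) (hwt k), one_mul]
      _ ≤ _ := by gcongr; exact h1 k
  calc _ ≤ ((∑' k, w k) * S) ^ r := ENNReal.rpow_le_rpow h2 hr.le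
    _ = _ := by
      rw [ENNReal.mul_rpow_of_nonneg _ _ hr.le, hS, ← ENNReal.rpow_mul, one_div_mul_cancel hr.ne', ENNReal.rpow_one]

lemma quasi {α β : Type*} [MeasurableSpace α] [MeasurableSpace β] (μ : Measure α) (ν : Measure β) [SFinite ν]
    (F : ℕ → α → β → ℝ≥0∞) (hF : ∀ k, Measurable fun x : α × β => F k x.1 x.2)
    (w : ℕ → ℝ≥0∞) (hw0 : ∀ k, w k ≠ 0) (hwt : ∀ k, w k ≠ ⊤) (q r : ℝ) (hq : 0 < q) (hr : 0 < r) (hqr : q ≤ r) :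
    ∫⁻ a, (∫⁻ b, (∑' k, F k a b) ^ r ∂ν) ^ (q/r) ∂μ ≤
      (∑' k, w k) ^ q * ∑' k, (w k)⁻¹ ^ q * ∫⁻ a, (∫⁻ b, F k a b ^ r ∂ν) ^ (q/r) ∂μ := by
  have hqr0 : 0 < q / r := by positivity
  have e : ∀ x : ℝ≥0∞, (x ^ r) ^ (q/r) = x ^ q := fun x => by
    rw [← ENNReal.rpow_mul, mul_div_cancel₀ _ hr.ne']
  have mb : ∀ k a, Measurable fun b => F k a b := fun k a => (hF k).comp measurable_prodMk_left
  have ma : ∀ k, Measurable fun a => (∫⁻ b, F k a b ^ r ∂ν) ^ (q/r) := fun k =>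
    (((hF k).pow_const r).lintegral_prod_right').pow_const _
  have p1 : ∀ a, (∫⁻ b, (∑' k, F k a b) ^ r ∂ν) ^ (q/r) ≤
      (∑' k, w k) ^ q * ∑' k, (w k)⁻¹ ^ q * (∫⁻ b, F k a b ^ r ∂ν) ^ (q/r) := by
    intro a
    calc _ ≤ (∫⁻ b, (∑' k, w k) ^ r * ∑' k, ((w k)⁻¹ * F k a b) ^ r ∂ν) ^ (q/r) :=
          ENNReal.rpow_le_rpow (lintegral_mono fun b => wsum _ w hw0 hwt r hr) hqr0.le
      _ = ((∑' k, w k) ^ r * ∑' k, (w k)⁻¹ ^ r * ∫⁻ b, F k a b ^ r ∂ν) ^ (q/r) := by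
          congr 1
          have m1 : ∀ k, Measurable fun b => ((w k)⁻¹ * F k a b) ^ r := fun k =>
            ((mb k a).const_mul _).pow_const _
          rw [lintegral_const_mul _ (Measurable.tsum m1), lintegral_tsum fun k => (m1 k).aemeasurable]
          congr 1
          refine tsum_congr fun k => ?_
          rw [← lintegral_const_mul _ ((mb k a).pow_const r)]
          refine lintegral_congr fun b => ENNReal.mul_rpow_of_nonneg _ _ hr.le
      _ = (∑' k, w k) ^ q * (∑' k, (w k)⁻¹ ^ r * ∫⁻ b, F k a b ^ r ∂ν) ^ (q/r) := by
          rw [ENNReal.mul_rpow_of_nonneg _ _ hqr0.le, e]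
      _ ≤ _ := by
          gcongr
          refine (tsum_rpow_le _ _ hqr0 ((div_le_one hr).mpr hqr)).trans (le_of_eq ?_)
          refine tsum_congr fun k => ?_
          rw [ENNReal.mul_rpow_of_nonneg _ _ hqr0.le, e]
  refine (lintegral_mono p1).trans (le_of_eq ?_)
  rw [lintegral_const_mul _ (Measurable.tsum fun k => (ma k).const_mul _),
    lintegral_tsum fun k => ((ma k).const_mul _).aemeasurable]
  congr 1
  refine tsum_congr fun k => ?_
  rw [lintegral_const_mul _ (ma k)]

/-- the local mixed norm -/
def Phi {n : ℕ} (C q r : ℝ) (g : Euc n × ℝ → ℝ≥0∞) : ℝ≥0∞ :=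
  ∫⁻ v in Metric.ball (0 : Euc n) 1, (∫⁻ z in Metric.ball (0 : Euc n) C, V g v z ^ r) ^ (q/r)

lemma Phi_mono {n : ℕ} (C q r : ℝ) (hq : 0 < q) (hr : 0 < r) {g h : Euc n × ℝ → ℝ≥0∞} (H : ∀ x, g x ≤ h x) :
    Phi C q r g ≤ Phi C q r h := by
  unfold Phi
  gcongr with v z
  exact V_mono H _ _

lemma Phi_smul {n : ℕ} (C q r : ℝ) (hq : 0 < q) (hr : 0 < r) (g : Euc n × ℝ → ℝ≥0∞) (hg : Measurable g) (c : ℝ≥0∞) :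
    Phi C q r (fun x => c * g x) = c ^ q * Phi C q r g := by
  have hqr0 : 0 < q / r := by positivity
  have e : ∀ x : ℝ≥0∞, (x ^ r) ^ (q/r) = x ^ q := fun x => by
    rw [← ENNReal.rpow_mul, mul_div_cancel₀ _ hr.ne']
  have hV : ∀ v z, V (fun x => c * g x) v z = c * V g v z := by
    intro v z
    unfold V
    rw [lintegral_const_mul]
    exact hg.comp (by fun_prop)
  unfold Phi
  simp_rw [hV, ENNReal.mul_rpow_of_nonneg _ _ hr.le]
  have m := (V_meas g hg).pow_const r
  have : ∀ v, ∫⁻ z in Metric.ball (0 : Euc n) C, c ^ r * V g v z ^ r =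
      c ^ r * ∫⁻ z in Metric.ball (0 : Euc n) C, V g v z ^ r := fun v =>
    lintegral_const_mul _ (m.comp measurable_prodMk_left)
  simp_rw [this, ENNReal.mul_rpow_of_nonneg _ _ hqr0.le, e]
  rw [lintegral_const_mul]
  exact (m.lintegral_prod_right').pow_const _

lemma Phi_tsum {n : ℕ} (C q r : ℝ) (hq : 0 < q) (hr : 0 < r) (hqr : q ≤ r) (g : ℕ → Euc n × ℝ → ℝ≥0∞)
    (hg : ∀ k, Measurable (g k)) 
    (w : ℕ → ℝ≥0∞) (hw0 : ∀ k, w k ≠ 0) (hwt : ∀ k, w k ≠ ⊤) :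
    Phi C q r (fun x => ∑' k, g k x) ≤ (∑' k, w k) ^ q * ∑' k, (w k)⁻¹ ^ q * Phi C q r (g k) := by
  have hV : ∀ v z, V (fun x => ∑' k, g k x) v z = ∑' k, V (g k) v z := by
    intro v z
    unfold V
    rw [lintegral_tsum]
    exact fun k => ((hg k).comp (by fun_prop)).aemeasurable
  unfold Phi
  simp_rw [hV]
  exact quasi _ _ (fun k => V (g k)) (fun k => V_meas _ (hg k)) w hw0 hwt q r hq hr hqr

/-- superlevel sets -/
def Ek {n : ℕ} (K0 : Set (Euc n × ℝ)) (g : Euc n × ℝ → ℝ≥0∞) (N : ℝ) : ℕ → Set (Euc n × ℝ)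
  | 0 => K0
  | k + 1 => {x | ENNReal.ofReal (N * 2 ^ k) < g x}

lemma Ek_meas {n : ℕ} {K0 : Set (Euc n × ℝ)} (hK0 : MeasurableSet K0) {g : Euc n × ℝ → ℝ≥0∞} (hg : Measurable g)
    (N : ℝ) (k : ℕ) : MeasurableSet (Ek K0 g N k) := by
  cases k with
  | zero => exact hK0
  | succ k => exact measurableSet_lt measurable_const hg

lemma g_le {n : ℕ} {K0 : Set (Euc n × ℝ)} {g : Euc n × ℝ → ℝ≥0∞} (hs : ∀ x, x ∉ K0 → g x = 0) (N : ℝ) (hN : 0 < N) 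
    (x : Euc n × ℝ) : g x ≤ ∑' k : ℕ, ENNReal.ofReal (N * 2 ^ k) * ind (Ek K0 g N k) x := by
  by_cases hx : x ∈ K0
  swap
  · rw [hs x hx]; exact zero_le
  rcases le_or_gt (g x) (ENNReal.ofReal N) with h | h
  · refine le_trans ?_ (ENNReal.le_tsum 0)
    rw [ind_of_mem (show x ∈ Ek K0 g N 0 from hx)]
    simpa using h
  rcases eq_or_ne (g x) ⊤ with ht | ht
  · rw [ht, top_le_iff]
    refine ENNReal.eq_top_of_forall_nnreal_le fun y => ?_
    obtain ⟨k, hk⟩ := pow_unbounded_of_one_lt ((y:ℝ)/N) (by norm_num : (1:ℝ) < 2)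
    refine le_trans ?_ (ENNReal.le_tsum (k+1))
    rw [ind_of_mem (show x ∈ Ek K0 g N (k+1) by simp [Ek, ht])]
    rw [div_lt_iff₀ hN] at hk
    rw [mul_one, ← ENNReal.ofReal_coe_nnreal]
    apply ENNReal.ofReal_le_ofReal
    rw [pow_succ]
    have : 0 < 2 ^ k * N := by positivity
    linarith
  · have h1 : N < (g x).toReal := (ENNReal.ofReal_lt_iff_lt_toReal hN.le ht).mp h
    obtain ⟨k, h2, h3⟩ := exists_nat_pow_near (x := (g x).toReal / N) (y := (2:ℝ)) 
      ((one_le_div hN).mpr h1.le) (by norm_num)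
    by_cases h4 : x ∈ Ek K0 g N (k+1)
    · refine le_trans ?_ (ENNReal.le_tsum (k+1))
      rw [ind_of_mem h4, mul_one, ← ENNReal.ofReal_toReal ht]
      apply ENNReal.ofReal_le_ofReal
      rw [div_lt_iff₀ hN] at h3
      linarith
    · have h5 : g x ≤ ENNReal.ofReal (N * 2 ^ k) := not_lt.mp h4
      cases k with
      | zero => rw [pow_zero, mul_one] at h5; exact absurd h5 (not_le.mpr h)
      | succ j =>
        refine le_trans ?_ (ENNReal.le_tsum (j+1))
        have : x ∈ Ek K0 g N (j+1) := by
          change ENNReal.ofReal (N * 2 ^ j) < g x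
          rw [ENNReal.ofReal_lt_iff_lt_toReal (by positivity) ht]
          rw [le_div_iff₀ hN, pow_succ] at h2
          have : 0 < 2 ^ j * N := by positivity
          linarith
        rw [ind_of_mem this, mul_one]
        exact h5

lemma Ek_vol {n : ℕ} {K0 : Set (Euc n × ℝ)} {g : Euc n × ℝ → ℝ≥0∞} (hg : Measurable g) (N : ℝ) (hN : 0 < N) 
    (p : ℝ) (hp : 0 < p) (hI : ∫⁻ x, g x ^ p ≤ ENNReal.ofReal (N ^ p)) (D : ℝ) (hD : (2:ℝ) ^ p ≤ D)
    (hD2 : volume K0 ≤ ENNReal.ofReal D) (k : ℕ) :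
    volume (Ek K0 g N k) ≤ ENNReal.ofReal (D * ((2:ℝ) ^ (-p)) ^ k) := by
  cases k with
  | zero => simpa [Ek] using hD2
  | succ k =>
    have h1 : ENNReal.ofReal ((N * 2 ^ k) ^ p) * volume (Ek K0 g N (k+1)) ≤ ENNReal.ofReal (N ^ p) := by
      refine le_trans ?_ hI
      refine le_trans ?_ (mul_meas_ge_le_lintegral (hg.pow_const p) (ENNReal.ofReal ((N * 2 ^ k) ^ p)))
      gcongr
      intro x hx
      have : ENNReal.ofReal (N * 2 ^ k) < g x := hx
      change ENNReal.ofReal ((N * 2 ^ k) ^ p) ≤ g x ^ p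
      rw [← ENNReal.ofReal_rpow_of_pos (by positivity)]
      exact ENNReal.rpow_le_rpow this.le hp.le
    refine (le_of_ofReal_mul _ (by positivity) _ _ h1).trans ?_
    rw [← ENNReal.ofReal_mul (by positivity)]
    apply ENNReal.ofReal_le_ofReal
    have e : ((2:ℝ) ^ (-p)) ^ (k+1) = ((2:ℝ)^p)⁻¹ * (((2:ℝ) ^ k) ^ p)⁻¹ := by
      rw [pow_succ, Real.rpow_neg (by norm_num), inv_pow, ← Real.rpow_natCast, ← Real.rpow_natCast, ← Real.rpow_mul (by norm_num),
        ← Real.rpow_mul (by norm_num), mul_comm p]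
      ring
    rw [e, Real.mul_rpow hN.le (by positivity)]
    have h2 : 0 < (2:ℝ)^p := by positivity
    have h3 : 0 < ((2:ℝ)^k)^p := by positivity
    have h4 : 0 < N^p := by positivity
    calc _ = 1 * (((2:ℝ) ^ k) ^ p)⁻¹ := by field_simp
      _ ≤ (D * ((2:ℝ)^p)⁻¹) * (((2:ℝ) ^ k) ^ p)⁻¹ := by
        gcongr
        rw [← div_eq_mul_inv, one_le_div h2]; exact hD
      _ = _ := by ring

lemma strong_fun {n : ℕ} (C q r p e : ℝ) (hq : 0 < q) (hr : 0 < r) (hqr : q ≤ r) (hp : 0 < p) (he : q < p * e)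
    (A : ℝ≥0∞) (hA : A ≠ ⊤) (HS : ∀ E : Set (Euc n × ℝ), MeasurableSet E → Phi C q r (ind E) ≤ A * volume E ^ e)
    (K0 : Set (Euc n × ℝ)) (hK0 : MeasurableSet K0) (hK0v : volume K0 ≠ ⊤) :
    ∃ A' : ℝ≥0∞, A' ≠ ⊤ ∧ ∀ g : Euc n × ℝ → ℝ≥0∞, Measurable g → (∀ x, x ∉ K0 → g x = 0) →
      Phi C q r g ≤ A' * (∫⁻ x, g x ^ p) ^ (q/p) := by
  set D := (2:ℝ) ^ p + (volume K0).toReal with hD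
  have hD0 : 0 < D := by positivity
  have hD1 : (2:ℝ)^p ≤ D := by rw [hD]; linarith [ENNReal.toReal_nonneg (a := volume K0)]
  have hD2 : volume K0 ≤ ENNReal.ofReal D := by
    rw [← ENNReal.ofReal_toReal hK0v]
    apply ENNReal.ofReal_le_ofReal
    have : 0 < (2:ℝ)^p := by positivity
    rw [hD]; linarith
  have he0 : 0 < e := by
    by_contra h
    push Not at h
    nlinarith
  set σ := p * e - q with hσ
  have hσ0 : 0 < σ := by rw [hσ]; linarith
  set ρ := (2:ℝ) ^ (-(σ / (2 * q))) with hρ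
  have hρ0 : 0 < ρ := by positivity
  have hρ1 : ρ < 1 := Real.rpow_lt_one_of_one_lt_of_neg (by norm_num) (by have : 0 < σ / (2*q) := by positivity
                                                                          linarith)
  set τ := (2:ℝ) ^ (-(σ / 2)) with hτ
  have hτ0 : 0 < τ := by positivity
  have hτ1 : τ < 1 := Real.rpow_lt_one_of_one_lt_of_neg (by norm_num) (by linarith)
  set w : ℕ → ℝ≥0∞ := fun k => ENNReal.ofReal ρ ^ k with hw
  have hw0 : ∀ k, w k ≠ 0 := fun k => pow_ne_zero _ (ENNReal.ofReal_pos.mpr hρ0).ne'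
  have hwt : ∀ k, w k ≠ ⊤ := fun k => ENNReal.pow_ne_top ofReal_ne_top
  set A' := (1 - ENNReal.ofReal ρ)⁻¹ ^ q * (A * ENNReal.ofReal (D ^ e) * (1 - ENNReal.ofReal τ)⁻¹) with hA'
  have fin1 : (1 - ENNReal.ofReal ρ)⁻¹ ≠ ⊤ := by
    rw [ENNReal.inv_ne_top]
    exact (tsub_pos_of_lt (by rwa [ENNReal.ofReal_lt_one])).ne'
  have fin2 : (1 - ENNReal.ofReal τ)⁻¹ ≠ ⊤ := by
    rw [ENNReal.inv_ne_top]
    exact (tsub_pos_of_lt (by rwa [ENNReal.ofReal_lt_one])).ne'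
  have hA't : A' ≠ ⊤ := ENNReal.mul_ne_top (ENNReal.rpow_ne_top_of_nonneg hq.le fin1)
    (ENNReal.mul_ne_top (ENNReal.mul_ne_top hA ofReal_ne_top) fin2)
  have main : ∀ g : Euc n × ℝ → ℝ≥0∞, Measurable g → (∀ x, x ∉ K0 → g x = 0) → ∀ N : ℝ, 0 < N →
      ∫⁻ x, g x ^ p ≤ ENNReal.ofReal (N ^ p) → Phi C q r g ≤ A' * ENNReal.ofReal N ^ q := by
    intro g hg hs N hN hI
    have m := Ek_meas hK0 hg N
    refine (Phi_mono C q r hq hr (g_le hs N hN)).trans ?_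
    refine (Phi_tsum C q r hq hr hqr (fun k x => ENNReal.ofReal (N * 2 ^ k) * ind (Ek K0 g N k) x)
      (fun k => (ind_meas (m k)).const_mul _) w hw0 hwt).trans ?_
    have t1 : ∑' k, w k = (1 - ENNReal.ofReal ρ)⁻¹ := ENNReal.tsum_geometric _
    rw [t1, hA', mul_assoc]
    refine mul_le_mul' le_rfl ?_
    calc _ ≤ ∑' k : ℕ, A * ENNReal.ofReal (D ^ e) * ENNReal.ofReal N ^ q * ENNReal.ofReal τ ^ k := by
          refine ENNReal.tsum_le_tsum fun k => ?_
          rw [Phi_smul C q r hq hr _ (ind_meas (m k))]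
          have b1 := (HS _ (m k)).trans (mul_le_mul' le_rfl (ENNReal.rpow_le_rpow (Ek_vol hg N hN p hp hI D hD1 hD2 k) he0.le))
          refine (mul_le_mul' le_rfl (mul_le_mul' le_rfl b1)).trans (le_of_eq ?_)
          have b2 : (w k)⁻¹ = ENNReal.ofReal ((ρ ^ k)⁻¹) := by
            rw [hw, ENNReal.ofReal_inv_of_pos (by positivity), ENNReal.ofReal_pow hρ0.le]
          rw [b2, ENNReal.ofReal_rpow_of_pos (by positivity), ENNReal.ofReal_rpow_of_pos (by positivity),
            ENNReal.ofReal_rpow_of_pos (by positivity), ENNReal.ofReal_rpow_of_pos (by positivity), 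
            ← ENNReal.ofReal_pow hτ0.le]
          have assoc : ∀ a b c d : ℝ≥0∞, a * (b * (c * d)) = c * (a * b * d) := by intros; ring
          rw [assoc, mul_assoc A, mul_assoc A, ← ENNReal.ofReal_mul (by positivity), ← ENNReal.ofReal_mul (by positivity),
            ← ENNReal.ofReal_mul (by positivity), ← ENNReal.ofReal_mul (by positivity)]
          congr 2
          rw [Real.mul_rpow hN.le (by positivity), Real.mul_rpow hD0.le (by positivity)]
          have c1 : ((ρ ^ k)⁻¹) ^ q = (2:ℝ) ^ (σ / 2 * k) := by
            rw [hρ, ← Real.rpow_natCast, ← Real.rpow_mul (by norm_num), ← Real.rpow_neg (by norm_num), ← Real.rpow_mul (by norm_num)]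
            congr 1; field_simp
          have c2 : (((2:ℝ) ^ k)) ^ q = (2:ℝ) ^ (k * q) := by
            rw [← Real.rpow_natCast, ← Real.rpow_mul (by norm_num)]
          have c3 : (((2:ℝ) ^ (-p)) ^ k) ^ e = (2:ℝ) ^ (-p * k * e) := by
            rw [← Real.rpow_natCast, ← Real.rpow_mul (by norm_num) (-p), ← Real.rpow_mul (by norm_num) (-p * k)]
          have c4 : τ ^ k = (2:ℝ) ^ (σ / 2 * k) * (2:ℝ) ^ (k * q) * (2:ℝ) ^ (-p * k * e) := by
            rw [hτ, ← Real.rpow_natCast, ← Real.rpow_mul (by norm_num), ← Real.rpow_add (by norm_num), ← Real.rpow_add (by norm_num)]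
            congr 1; rw [hσ]; ring
          rw [c1, c2, c3, c4]
          ring
      _ = _ := by
          rw [ENNReal.tsum_mul_left, ENNReal.tsum_geometric]
          ring
  refine ⟨A' + 1, by simp [hA't], ?_⟩
  intro g hg hs
  set I := ∫⁻ x, g x ^ p with hI
  rcases eq_or_ne I ⊤ with ht | ht
  · rw [ht, ENNReal.top_rpow_of_pos (by positivity), ENNReal.mul_top (by simp)]; exact le_top
  set N0 := (I ^ (1/p)).toReal with hN0
  have hIt : I ^ (1/p) ≠ ⊤ := ENNReal.rpow_ne_top_of_nonneg (by positivity) ht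
  have hN0' : ENNReal.ofReal N0 = I ^ (1/p) := ENNReal.ofReal_toReal hIt
  have hN00 : 0 ≤ N0 := ENNReal.toReal_nonneg
  have hIN : ENNReal.ofReal N0 ^ p = I := by
    rw [hN0', ← ENNReal.rpow_mul, one_div_mul_cancel hp.ne', ENNReal.rpow_one]
  have lim : Filter.Tendsto (fun N : ℝ => A' * ENNReal.ofReal N ^ q) (nhdsWithin N0 (Set.Ioi N0))
      (nhds (A' * ENNReal.ofReal N0 ^ q)) := by
    refine ENNReal.Tendsto.const_mul ?_ (Or.inr hA't)
    refine Filter.Tendsto.mono_left ?_ nhdsWithin_le_nhds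
    exact (ENNReal.continuous_rpow_const.comp ENNReal.continuous_ofReal).tendsto N0
  have fin : Phi C q r g ≤ A' * ENNReal.ofReal N0 ^ q := by
    refine ge_of_tendsto lim ?_
    filter_upwards [self_mem_nhdsWithin] with N hN
    have hN' : N0 < N := hN
    refine main g hg hs N (by linarith) ?_
    rw [← hI, ← hIN, ← ENNReal.ofReal_rpow_of_pos (by linarith)]
    exact ENNReal.rpow_le_rpow (ENNReal.ofReal_le_ofReal hN'.le) hp.le
  refine fin.trans ?_
  rw [hN0', ← ENNReal.rpow_mul, one_div_mul_eq_div]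
  gcongr
  exact le_self_add


/-- Galilean-shifted and localized function -/
def gc {n : ℕ} (K0 : Set (Euc n × ℝ)) (g : Euc n × ℝ → ℝ≥0∞) (c : Euc n) (x : Euc n × ℝ) : ℝ≥0∞ :=
  ind K0 x * g (x.1 + (1 + x.2) • c, x.2)

lemma gc_meas {n : ℕ} {K0 : Set (Euc n × ℝ)} (hK0 : MeasurableSet K0) {g : Euc n × ℝ → ℝ≥0∞} (hg : Measurable g) :
    Measurable fun y : Euc n × (Euc n × ℝ) => gc K0 g y.1 y.2 := by
  unfold gc
  refine Measurable.mul ((ind_meas hK0).comp measurable_snd) (hg.comp (by fun_prop))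

lemma gc_V {n : ℕ} (C : ℝ) (g : Euc n × ℝ → ℝ≥0∞) (c v z : Euc n) (hv : v ∈ Metric.ball (0 : Euc n) 1)
    (hz : z ∈ Metric.ball (0 : Euc n) C) :
    V (gc (Metric.ball 0 (C+2) ×ˢ Set.Ico 0 1) g c) v z = V g (v + c) z := by
  unfold V
  refine setLIntegral_congr_fun measurableSet_Ico fun s hs => ?_
  have : (z + (1 + s) • v, s) ∈ Metric.ball (0 : Euc n) (C+2) ×ˢ Set.Ico (0:ℝ) 1 := by
    refine ⟨?_, hs⟩
    rw [mem_ball_zero_iff] at hv hz ⊢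
    have h0 : 0 < 1 + s := by linarith [hs.1]
    calc ‖z + (1 + s) • v‖ ≤ ‖z‖ + ‖(1 + s) • v‖ := norm_add_le _ _
      _ = ‖z‖ + (1 + s) * ‖v‖ := by rw [norm_smul, Real.norm_eq_abs, abs_of_pos h0]
      _ < C + 2 := by
        have := hs.2
        nlinarith [norm_nonneg v]
  simp only [gc]
  rw [ind_of_mem this, one_mul]
  congr 2
  module

lemma gc_int {n : ℕ} {K0 : Set (Euc n × ℝ)} (hK0 : MeasurableSet K0) {g : Euc n × ℝ → ℝ≥0∞} (hg : Measurable g)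
    (p : ℝ) (hp : 0 < p) (c : Euc n) : ∫⁻ x, gc K0 g c x ^ p ≤ ∫⁻ x, g x ^ p := by
  have m : Measurable fun x => gc K0 g c x ^ p := ((gc_meas hK0 hg).comp measurable_prodMk_left).pow_const p
  rw [Measure.volume_eq_prod, lintegral_prod_symm' _ m, lintegral_prod_symm' _ (hg.pow_const p)]
  refine lintegral_mono fun s => ?_
  calc _ ≤ ∫⁻ w : Euc n, g (w + (1 + s) • c, s) ^ p := by
        refine lintegral_mono fun w => ?_
        refine ENNReal.rpow_le_rpow ?_ hp.le
        exact mul_le_of_le_one_left' (ind_le_one _ _)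
    _ = _ := lintegral_add_right_eq_self (fun w => g (w, s) ^ p) _

lemma gc_int2 {n : ℕ} (R : ℝ) {g : Euc n × ℝ → ℝ≥0∞} (hg : Measurable g)
    (p : ℝ) (hp : 0 < p) : 
    ∫⁻ c, ∫⁻ x, gc (Metric.ball 0 R ×ˢ Set.Ico 0 1) g c x ^ p ≤ volume (Metric.ball (0 : Euc n) R) * ∫⁻ x, g x ^ p := by
  set K0 : Set (Euc n × ℝ) := Metric.ball 0 R ×ˢ Set.Ico 0 1 with hK
  have hK0 : MeasurableSet K0 := measurableSet_ball.prod measurableSet_Ico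
  have hL : Measurable fun s : ℝ => ∫⁻ u, g (u, s) ^ p := (hg.pow_const p).lintegral_prod_left'
  rw [lintegral_lintegral_swap ((gc_meas hK0 hg).pow_const p).aemeasurable]
  have pt : ∀ x : Euc n × ℝ, ∫⁻ c, gc K0 g c x ^ p ≤ ind (Metric.ball 0 R) x.1 * ∫⁻ u, g (u, x.2) ^ p := by
    intro x
    by_cases hx : x ∈ K0
    · rw [ind_of_mem hx.1, one_mul]
      have h0 : 1 ≤ 1 + x.2 := by linarith [hx.2.1]
      rw [← lint_aff (fun u => g (u, x.2) ^ p) ((hg.comp measurable_prodMk_right).pow_const p) (1 + x.2) (by linarith) x.1]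
      have : 1 ≤ ENNReal.ofReal (|1 + x.2| ^ n) := by
        rw [ENNReal.one_le_ofReal, abs_of_pos (by linarith)]
        exact one_le_pow₀ h0
      refine le_trans ?_ (le_mul_of_one_le_left' this)
      refine lintegral_mono fun c => ?_
      simp only [gc]
      rw [ind_of_mem hx, one_mul]
    · simp [gc, ind_of_not_mem hx, hp]
  refine (lintegral_mono pt).trans ?_
  rw [Measure.volume_eq_prod, lintegral_prod_symm' _ (hg.pow_const p), ← lintegral_const_mul _ hL]
  rw [lintegral_prod_symm']
  · refine lintegral_mono fun s => ?_
    simp only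
    rw [lintegral_mul_const _ (ind_meas measurableSet_ball), lint_ind _ measurableSet_ball]
  · exact ((ind_meas measurableSet_ball).comp measurable_fst).mul (hL.comp measurable_snd)

lemma glob {n : ℕ} (C q r p : ℝ) (hq : 0 < q) (hr : 0 < r) (hp : 0 < p) (hpq : p ≤ q)
    (A' : ℝ≥0∞) (HF : ∀ g : Euc n × ℝ → ℝ≥0∞, Measurable g → 
      (∀ x, x ∉ (Metric.ball (0 : Euc n) (C+2) ×ˢ Set.Ico (0:ℝ) 1) → g x = 0) →
      Phi C q r g ≤ A' * (∫⁻ x, g x ^ p) ^ (q/p)) 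
    (g : Euc n × ℝ → ℝ≥0∞) (hg : Measurable g) :
    volume (Metric.ball (0 : Euc n) 1) * ∫⁻ v, (∫⁻ z in Metric.ball (0 : Euc n) C, V g v z ^ r) ^ (q/r) ≤
      A' * volume (Metric.ball (0 : Euc n) (C+2)) * (∫⁻ x, g x ^ p) ^ (q/p) := by
  set K0 : Set (Euc n × ℝ) := Metric.ball 0 (C+2) ×ˢ Set.Ico 0 1 with hK
  have hK0 : MeasurableSet K0 := measurableSet_ball.prod measurableSet_Ico
  set H : Euc n → ℝ≥0∞ := fun v => (∫⁻ z in Metric.ball (0 : Euc n) C, V g v z ^ r) ^ (q/r) with hH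
  have mH : Measurable H := (((V_meas g hg).pow_const r).lintegral_prod_right').pow_const _
  set I := ∫⁻ x, g x ^ p with hI
  have e1 : volume (Metric.ball (0 : Euc n) 1) * ∫⁻ v, H v = ∫⁻ c, ∫⁻ v in Metric.ball (0 : Euc n) 1, H (v + c) := by
    rw [lintegral_lintegral_swap]
    · rw [mul_comm, ← setLIntegral_const]
      refine lintegral_congr fun v => ?_
      exact (lintegral_add_left_eq_self H v).symm
    · have : Measurable fun x : Euc n × Euc n => H (x.2 + x.1) := mH.comp (by fun_prop)
      exact this.aemeasurable
  rw [e1]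
  have mJ : Measurable fun c => ∫⁻ x, gc K0 g c x ^ p := ((gc_meas hK0 hg).pow_const p).lintegral_prod_right'
  have e2 : ∀ c, ∫⁻ v in Metric.ball (0 : Euc n) 1, H (v + c) ≤ A' * (I ^ (q/p - 1) * ∫⁻ x, gc K0 g c x ^ p) := by
    intro c
    have : ∫⁻ v in Metric.ball (0 : Euc n) 1, H (v + c) = Phi C q r (gc K0 g c) := by
      unfold Phi
      refine setLIntegral_congr_fun measurableSet_ball fun v hv => ?_
      simp only [hH]
      congr 1
      refine setLIntegral_congr_fun measurableSet_ball fun z hz => ?_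
      rw [gc_V C g c v z hv hz]
    rw [this]
    refine (HF _ ((gc_meas hK0 hg).comp measurable_prodMk_left) ?_).trans ?_
    · intro x hx
      simp [gc, ind_of_not_mem hx]
    · gcongr
      have h1 : (1:ℝ) ≤ q / p := (one_le_div hp).mpr hpq
      calc (∫⁻ x, gc K0 g c x ^ p) ^ (q/p) = (∫⁻ x, gc K0 g c x ^ p) ^ ((q/p - 1) + 1) := by
            rw [sub_add_cancel]
        _ = (∫⁻ x, gc K0 g c x ^ p) ^ (q/p - 1) * ∫⁻ x, gc K0 g c x ^ p := by
            rw [ENNReal.rpow_add_of_nonneg _ _ (by linarith) (by norm_num), ENNReal.rpow_one]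
        _ ≤ _ := by
            refine mul_le_mul' (ENNReal.rpow_le_rpow (gc_int hK0 hg p hp c) (by linarith)) le_rfl
  refine (lintegral_mono e2).trans ?_
  rw [lintegral_const_mul _ (mJ.const_mul _), lintegral_const_mul _ mJ]
  have h1 : (1:ℝ) ≤ q / p := (one_le_div hp).mpr hpq
  calc _ ≤ A' * (I ^ (q/p - 1) * (volume (Metric.ball (0 : Euc n) (C+2)) * I)) := by
        gcongr
        exact gc_int2 (C+2) hg p hp
    _ = A' * volume (Metric.ball (0 : Euc n) (C+2)) * I ^ ((q/p - 1) + 1) := by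
        rw [ENNReal.rpow_add_of_nonneg _ _ (by linarith) (by norm_num), ENNReal.rpow_one]; ring
    _ = _ := by rw [sub_add_cancel]


/-- projective change of variables -/
def gp {n : ℕ} (f : Euc n × ℝ → ℝ≥0∞) (h : ℝ) (x : Euc n × ℝ) : ℝ≥0∞ :=
  ind (Set.Ico (0:ℝ) 1) x.2 * (ENNReal.ofReal (h / (1 + x.2)^2) * f ((h / (1 + x.2)) • x.1, h / (1 + x.2)))

lemma gp_meas {n : ℕ} {f : Euc n × ℝ → ℝ≥0∞} (hf : Measurable f) (h : ℝ) : Measurable (gp f h) := by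
  unfold gp
  refine ((ind_meas measurableSet_Ico).comp measurable_snd).mul (Measurable.mul (by fun_prop) (hf.comp (by fun_prop)))

lemma cov (φ : ℝ → ℝ≥0∞) (h : ℝ) (hh : 0 < h) :
    ∫⁻ t in (fun s => h / (1 + s)) '' Set.Ico (0:ℝ) 1, φ t = 
      ∫⁻ s in Set.Ico (0:ℝ) 1, ENNReal.ofReal (h / (1 + s)^2) * φ (h / (1 + s)) := by
  rw [lintegral_image_eq_lintegral_abs_deriv_mul (f' := fun s => - (h / (1 + s)^2)) measurableSet_Ico]
  · refine setLIntegral_congr_fun measurableSet_Ico fun s hs => ?_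
    have h0 : 0 < 1 + s := by linarith [hs.1]
    simp only [abs_neg]
    rw [abs_of_pos (by positivity)]
  · intro s hs
    have h0 : 1 + s ≠ 0 := by linarith [hs.1]
    have := ((hasDerivAt_id s).const_add 1).inv h0 |>.const_mul h
    refine HasDerivAt.hasDerivWithinAt ?_
    have e : -(h / (1 + s)^2) = h * (-1 / (1 + s)^2) := by ring
    rw [e]
    exact this
  · intro s hs s' hs' heq
    have h0 : 0 < 1 + s := by linarith [hs.1]
    have h0' : 0 < 1 + s' := by linarith [hs'.1]
    simp only at heq
    rw [div_eq_div_iff h0.ne' h0'.ne'] at heq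
    have := mul_left_cancel₀ hh.ne' heq
    linarith

lemma gp_V {n : ℕ} (f : Euc n × ℝ → ℝ≥0∞) (h : ℝ) (hh : 0 < h) (ξ x : Euc n) :
    ∫⁻ t in Set.Ioc (h/2) h, f (x + t • ξ, t) ≤ V (gp f h) (h⁻¹ • x) ξ := by
  have sub : Set.Ioc (h/2) h ⊆ (fun s => h / (1 + s)) '' Set.Ico (0:ℝ) 1 := by
    intro t ht
    have ht0 : 0 < t := by linarith [ht.1]
    refine ⟨h / t - 1, ⟨?_, ?_⟩, ?_⟩
    · rw [sub_nonneg, one_le_div ht0]; exact ht.2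
    · rw [sub_lt_iff_lt_add, div_lt_iff₀ ht0]; linarith [ht.1]
    · show h / (1 + (h / t - 1)) = t
      rw [add_sub_cancel, div_div_cancel₀ hh.ne']
  refine (lintegral_mono_set sub).trans ?_
  rw [cov _ h hh]
  unfold V
  refine le_of_eq (setLIntegral_congr_fun measurableSet_Ico fun s hs => ?_)
  have h0 : 0 < 1 + s := by linarith [hs.1]
  simp only [gp]
  rw [ind_of_mem hs, one_mul]
  congr 3
  rw [smul_add, smul_smul, smul_smul, add_comm]
  congr 1
  have : h / (1 + s) * ((1 + s) * h⁻¹) = 1 := by field_simp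
  rw [← smul_smul, ← smul_smul] 
  rw [smul_smul, smul_smul, mul_assoc, this, one_smul]

lemma xrayT_le {n : ℕ} (f : Euc n × ℝ → ℝ≥0∞) (ξ x : Euc n) :
    xrayT f ξ x ≤ ∑' k : ℕ, V (gp f ((1/2)^k)) (((1/2:ℝ)^k)⁻¹ • x) ξ := by
  have sub : Set.Ioc (0:ℝ) 1 ⊆ ⋃ k : ℕ, Set.Ioc ((1/2:ℝ)^k/2) ((1/2)^k) := by
    intro t ht
    obtain ⟨k, h1, h2⟩ := exists_nat_pow_near_of_lt_one ht.1 ht.2 (by norm_num : (0:ℝ) < 1/2) (by norm_num)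
    refine Set.mem_iUnion.mpr ⟨k, ?_, h2⟩
    rw [pow_succ] at h1; linarith
  unfold xrayT
  refine (lintegral_mono_set sub).trans ((lintegral_iUnion_le _ _).trans ?_)
  exact ENNReal.tsum_le_tsum fun k => gp_V f _ (by positivity) ξ x

lemma gp_int {n : ℕ} {f : Euc n × ℝ → ℝ≥0∞} (hf : Measurable f) (h : ℝ) (hh : 0 < h) (p : ℝ) (hp : 1 ≤ p) :
    ∫⁻ x, gp f h x ^ p ≤ ENNReal.ofReal (2 ^ n * h ^ (p - 1 - n)) * ∫⁻ x, f x ^ p := by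
  have hp0 : 0 < p := by linarith
  set L : ℝ → ℝ≥0∞ := fun s => ∫⁻ u, f (u, s) ^ p with hL
  have mL : Measurable L := (hf.pow_const p).lintegral_prod_left'
  set c := ENNReal.ofReal (2 ^ n * h ^ (p - 1 - n)) with hc
  have pt : ∀ s, ∫⁻ w : Euc n, gp f h (w, s) ^ p ≤ 
      (Set.Ico (0:ℝ) 1).indicator (fun s => c * (ENNReal.ofReal (h / (1 + s)^2) * L (h / (1 + s)))) s := by
    intro s
    by_cases hs : s ∈ Set.Ico (0:ℝ) 1
    · rw [Set.indicator_of_mem hs]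
      have h0 : 0 < 1 + s := by linarith [hs.1]
      have h1 : 1 ≤ 1 + s := by linarith [hs.1]
      have h2 : 1 + s ≤ 2 := by linarith [hs.2]
      set t := h / (1 + s) with ht
      have ht0 : 0 < t := by positivity
      set a := h / (1 + s)^2 with ha
      have ha0 : 0 < a := by positivity
      have e1 : ∫⁻ w : Euc n, gp f h (w, s) ^ p = ENNReal.ofReal (a ^ p) * ∫⁻ w : Euc n, f (0 + t • w, t) ^ p := by
        rw [← lintegral_const_mul]
        · refine lintegral_congr fun w => ?_
          simp only [gp]
          rw [ind_of_mem hs, one_mul, ENNReal.mul_rpow_of_nonneg _ _ hp0.le, ENNReal.ofReal_rpow_of_pos ha0, zero_add]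
        · exact (hf.comp (by fun_prop)).pow_const p
      have e2 := lint_aff (fun u => f (u, t) ^ p) ((hf.comp measurable_prodMk_right).pow_const p) t ht0.ne' 0
      rw [abs_of_pos ht0] at e2
      have e3 := le_of_ofReal_mul _ (by positivity) _ _ e2.le
      rw [e1]
      refine (mul_le_mul' le_rfl e3).trans ?_
      rw [← mul_assoc, ← mul_assoc, hc, ← ENNReal.ofReal_mul (by positivity), ← ENNReal.ofReal_mul (by positivity)]
      refine mul_le_mul' (ENNReal.ofReal_le_ofReal ?_) le_rfl
      have f1 : a ^ p = a ^ (p - 1) * a := by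
        rw [← Real.rpow_add_one ha0.ne', sub_add_cancel]
      have f2 : a ≤ h := by
        rw [ha, div_le_iff₀ (by positivity)]
        exact le_mul_of_one_le_right hh.le (one_le_pow₀ h1)
      have f3 : (t ^ n)⁻¹ ≤ 2 ^ n * h ^ (-(n:ℝ)) := by
        rw [Real.rpow_neg hh.le, Real.rpow_natCast, ← div_eq_mul_inv, ← div_pow, ← inv_pow]
        refine pow_le_pow_left₀ (by positivity) ?_ n
        rw [ht, inv_div]
        gcongr
      have f4 : h ^ (p - 1 - n) = h ^ (p - 1) * h ^ (-(n:ℝ)) := by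
        rw [← Real.rpow_add hh]; congr 1
      calc a ^ p * (t ^ n)⁻¹ ≤ (h ^ (p-1) * a) * (2 ^ n * h ^ (-(n:ℝ))) := by
            rw [f1]
            have : a ^ (p-1) ≤ h ^ (p-1) := Real.rpow_le_rpow ha0.le f2 (by linarith)
            gcongr
        _ = _ := by rw [f4]; ring
    · rw [Set.indicator_of_notMem hs]
      simp [gp, ind_of_not_mem hs, hp0]
  have mm : Measurable fun s : ℝ => ENNReal.ofReal (h / (1 + s)^2) * L (h / (1 + s)) :=
    Measurable.mul (by fun_prop) (mL.comp (by fun_prop))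
  rw [Measure.volume_eq_prod, lintegral_prod_symm' _ ((gp_meas hf h).pow_const p), lintegral_prod_symm' _ (hf.pow_const p)]
  refine (lintegral_mono pt).trans ?_
  rw [lintegral_indicator measurableSet_Ico, lintegral_const_mul _ mm, ← cov L h hh]
  exact mul_le_mul' le_rfl (setLIntegral_le_lintegral _ _)

/-- rescaled pieces -/
def Fk {n : ℕ} (f : Euc n × ℝ → ℝ≥0∞) (k : ℕ) (x ξ : Euc n) : ℝ≥0∞ :=
  V (gp f ((1/2)^k)) (((1/2:ℝ)^k)⁻¹ • x) ξ

lemma Fk_meas {n : ℕ} {f : Euc n × ℝ → ℝ≥0∞} (hf : Measurable f) (k : ℕ) :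
    Measurable fun y : Euc n × Euc n => Fk f k y.1 y.2 := by
  have h1 : Measurable fun y : Euc n × Euc n => (((((1/2:ℝ)^k)⁻¹ • y.1, y.2)) : Euc n × Euc n) := by fun_prop
  have h2 := (V_meas _ (gp_meas hf ((1/2)^k))).comp h1
  exact h2

lemma Fk_int {n : ℕ} {f : Euc n × ℝ → ℝ≥0∞} (hf : Measurable f) (C q r p : ℝ) (hq : 0 < q)
    (hp : 1 ≤ p) (A : ℝ≥0∞) (HG : ∀ g : Euc n × ℝ → ℝ≥0∞, Measurable g →
      ∫⁻ v, (∫⁻ z in Metric.ball (0 : Euc n) C, V g v z ^ r) ^ (q/r) ≤ A * (∫⁻ x, g x ^ p) ^ (q/p)) (k : ℕ)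
    (h : ℝ) (hh : h = (1/2)^k) :
    ∫⁻ x : Euc n, (∫⁻ ξ in Metric.ball (0 : Euc n) C, Fk f k x ξ ^ r) ^ (q/r) ≤
      ENNReal.ofReal (h⁻¹ ^ n)⁻¹ * (A * (ENNReal.ofReal (2 ^ n * h ^ (p - 1 - n)) * ∫⁻ x, f x ^ p) ^ (q/p)) := by
  have hh0 : 0 < h := by rw [hh]; positivity
  have hqp : 0 ≤ q / p := by positivity
  set H : Euc n → ℝ≥0∞ := fun v => (∫⁻ z in Metric.ball (0 : Euc n) C, V (gp f h) v z ^ r) ^ (q/r) with hH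
  have mH : Measurable H := (((V_meas _ (gp_meas hf h)).pow_const r).lintegral_prod_right').pow_const _
  have b1 := lint_aff H mH h⁻¹ (by positivity) 0
  rw [abs_of_pos (by positivity)] at b1
  have b2 := le_of_ofReal_mul _ (by positivity) _ _ b1.le
  have b3 : ∫⁻ x : Euc n, (∫⁻ ξ in Metric.ball (0 : Euc n) C, Fk f k x ξ ^ r) ^ (q/r) = ∫⁻ x, H (0 + h⁻¹ • x) := by
    refine lintegral_congr fun x => ?_
    rw [zero_add, hH, hh]
    rfl
  have b4 := (HG _ (gp_meas hf h)).trans (mul_le_mul' le_rfl (ENNReal.rpow_le_rpow (gp_int hf h hh0 p hp) hqp))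
  rw [b3]
  exact b2.trans (mul_le_mul' le_rfl b4)

set_option maxHeartbeats 1000000 in
lemma final {n : ℕ} (C q r p : ℝ) (hq : 0 < q) (hr : 0 < r) (hqr : q ≤ r) (hp : 1 ≤ p)
    (θ : ℝ) (hθ : θ = n + (p - 1 - n) * (q / p)) (hθ0 : 0 < θ)
    (A : ℝ≥0∞) (hA : A ≠ ⊤) (HG : ∀ g : Euc n × ℝ → ℝ≥0∞, Measurable g →
      ∫⁻ v, (∫⁻ z in Metric.ball (0 : Euc n) C, V g v z ^ r) ^ (q/r) ≤ A * (∫⁻ x, g x ^ p) ^ (q/p)) :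
    ∃ A' : ℝ, 0 < A' ∧ ∀ f : Euc n × ℝ → ℝ≥0∞, Measurable f →
      nikodymMixedNorm q r C f ≤ ENNReal.ofReal A' * lpNorm p f := by
  have hp0 : 0 < p := by linarith
  have hqp : 0 < q / p := by positivity
  have hqr0 : 0 < q / r := by positivity
  set ρ := (1/2:ℝ) ^ (θ / (2 * q)) with hρ
  have hρ0 : 0 < ρ := by positivity
  have hρ1 : ρ < 1 := Real.rpow_lt_one (by norm_num) (by norm_num) (by positivity)
  set τ := (1/2:ℝ) ^ (θ / 2) with hτ
  have hτ0 : 0 < τ := by positivity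
  have hτ1 : τ < 1 := Real.rpow_lt_one (by norm_num) (by norm_num) (by positivity)
  set w : ℕ → ℝ≥0∞ := fun k => ENNReal.ofReal ρ ^ k with hw
  have hw0 : ∀ k, w k ≠ 0 := fun k => pow_ne_zero _ (ENNReal.ofReal_pos.mpr hρ0).ne'
  have hwt : ∀ k, w k ≠ ⊤ := fun k => ENNReal.pow_ne_top ofReal_ne_top
  set A1 := (1 - ENNReal.ofReal ρ)⁻¹ ^ q * (A * ENNReal.ofReal ((2 ^ n) ^ (q/p)) * (1 - ENNReal.ofReal τ)⁻¹) with hA1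
  have fin1 : (1 - ENNReal.ofReal ρ)⁻¹ ≠ ⊤ := by
    rw [ENNReal.inv_ne_top]
    exact (tsub_pos_of_lt (by rwa [ENNReal.ofReal_lt_one])).ne'
  have fin2 : (1 - ENNReal.ofReal τ)⁻¹ ≠ ⊤ := by
    rw [ENNReal.inv_ne_top]
    exact (tsub_pos_of_lt (by rwa [ENNReal.ofReal_lt_one])).ne'
  have hA1t : A1 ≠ ⊤ := ENNReal.mul_ne_top (ENNReal.rpow_ne_top_of_nonneg hq.le fin1)
    (ENNReal.mul_ne_top (ENNReal.mul_ne_top hA ofReal_ne_top) fin2)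
  have hA1r : A1 ^ (1/q) ≠ ⊤ := ENNReal.rpow_ne_top_of_nonneg (by positivity) hA1t
  refine ⟨(A1 ^ (1/q)).toReal + 1, by positivity, ?_⟩
  intro f hf
  set I := ∫⁻ x, f x ^ p with hI
  have main : ∫⁻ x : Euc n, (∫⁻ ξ in Metric.ball (0 : Euc n) C, xrayT f ξ x ^ r) ^ (q / r) ≤ A1 * I ^ (q/p) := by
    calc _ ≤ ∫⁻ x : Euc n, (∫⁻ ξ in Metric.ball (0 : Euc n) C, (∑' k, Fk f k x ξ) ^ r) ^ (q / r) := by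
          gcongr with x ξ
          exact xrayT_le f ξ x
      _ ≤ (∑' k, w k) ^ q * ∑' k, (w k)⁻¹ ^ q * ∫⁻ x : Euc n, (∫⁻ ξ in Metric.ball (0 : Euc n) C, Fk f k x ξ ^ r) ^ (q/r) :=
          quasi _ _ (Fk f) (Fk_meas hf) w hw0 hwt q r hq hr hqr
      _ ≤ (1 - ENNReal.ofReal ρ)⁻¹ ^ q * ∑' k : ℕ, A * ENNReal.ofReal ((2 ^ n) ^ (q/p)) * I ^ (q/p) * ENNReal.ofReal τ ^ k := by
          have t1 : ∑' k, w k = (1 - ENNReal.ofReal ρ)⁻¹ := ENNReal.tsum_geometric _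
          rw [t1]
          refine mul_le_mul' le_rfl (ENNReal.tsum_le_tsum fun k => ?_)
          set h := (1/2:ℝ)^k with hh
          have hh0 : 0 < h := by positivity
          refine (mul_le_mul' le_rfl (Fk_int hf C q r p hq hp A HG k h hh)).trans (le_of_eq ?_)
          have c0 : (w k)⁻¹ = ENNReal.ofReal ((ρ ^ k)⁻¹) := by
            rw [hw, ENNReal.ofReal_inv_of_pos (by positivity), ENNReal.ofReal_pow hρ0.le]
          rw [c0, ENNReal.ofReal_rpow_of_pos (by positivity), ENNReal.mul_rpow_of_nonneg _ _ hqp.le,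
            ENNReal.ofReal_rpow_of_pos (by positivity), ← ENNReal.ofReal_pow hτ0.le]
          have assoc : ∀ a b c d e : ℝ≥0∞, a * (b * (c * (d * e))) = c * e * (a * b * d) := by intros; ring
          have assoc2 : ∀ a b c d : ℝ≥0∞, a * b * c * d = a * c * (b * d) := by intros; ring
          rw [assoc, assoc2, ← ENNReal.ofReal_mul (by positivity), ← ENNReal.ofReal_mul (by positivity),
            ← ENNReal.ofReal_mul (by positivity)]
          congr 2
          rw [Real.mul_rpow (by positivity) (by positivity)]
          have c1 : ((ρ ^ k)⁻¹) ^ q = h ^ (-(θ / 2)) := by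
            have : ρ ^ k = h ^ (θ / (2 * q)) := by
              rw [hρ, hh, ← Real.rpow_natCast, ← Real.rpow_natCast, ← Real.rpow_mul (by norm_num),
                ← Real.rpow_mul (by norm_num), mul_comm]
            rw [this, ← Real.rpow_neg hh0.le, ← Real.rpow_mul hh0.le]
            congr 1; field_simp
          have c2 : (h⁻¹ ^ n)⁻¹ = h ^ (n:ℝ) := by
            rw [Real.rpow_natCast, inv_pow, inv_inv]
          have c3 : (h ^ (p - 1 - n)) ^ (q/p) = h ^ ((p - 1 - n) * (q/p)) := by
            rw [← Real.rpow_mul hh0.le]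
          have c4 : τ ^ k = h ^ (-(θ/2)) * h ^ (n:ℝ) * h ^ ((p - 1 - n) * (q/p)) := by
            have : τ ^ k = h ^ (θ / 2) := by
              rw [hτ, hh, ← Real.rpow_natCast, ← Real.rpow_natCast, ← Real.rpow_mul (by norm_num),
                ← Real.rpow_mul (by norm_num), mul_comm]
            rw [this, ← Real.rpow_add hh0, ← Real.rpow_add hh0]
            congr 1; linarith
          rw [c1, c2, c3, c4]
          ring
      _ = _ := by
          rw [ENNReal.tsum_mul_left, ENNReal.tsum_geometric, hA1]
          ring
  unfold nikodymMixedNorm _root_.lpNorm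
  refine (ENNReal.rpow_le_rpow main (by positivity)).trans ?_
  rw [ENNReal.mul_rpow_of_nonneg _ _ (by positivity), ← ENNReal.rpow_mul]
  have : q / p * (1 / q) = 1 / p := by field_simp
  rw [this]
  gcongr
  conv_lhs => rw [← ENNReal.ofReal_toReal hA1r]
  apply ENNReal.ofReal_le_ofReal
  linarith


lemma params (n Q ε p q r : ℝ) (hn : 5 ≤ n) (hQ : Q = n + 7/4) (h0 : 0 < ε) (h1 : ε < 1)
    (hp : p = 4 * Q / 7) (hq : q = Q - ε) (hr : r = 4 * Q / 3 - ε) :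
    ∃ a b c η : ℝ, 0 ≤ a ∧ 0 ≤ b ∧ 0 ≤ c ∧ a + b + c = 1 ∧ 0 < η ∧
      0 < q - a * (n + 7/4 + η) - b ∧ 0 < q / r - 3 * a / 4 - b ∧ q < p * (7 * a / 4 + b) := by
  have hQ0 : 27/4 ≤ Q := by linarith
  have hQp : 0 < Q := by linarith
  have hq0 : 0 < q := by linarith
  have hr0 : 0 < r := by linarith
  have hp1 : 1 < p := by rw [hp]; linarith
  set κ := (1 + p) / 2 with hκ
  have hκ1 : 1 < κ := by linarith
  have hκp : κ < p := by linarith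
  set δ := q / r - 3 * q / (4 * Q) with hδ
  have hδ0 : 0 < δ := by
    rw [hδ, sub_pos, div_lt_div_iff₀ (by positivity) hr0]
    have : 3 * r < 4 * Q := by linarith
    nlinarith
  obtain ⟨b, hb0, hb⟩ : ∃ b : ℝ, 0 < b ∧ b < min (ε / Q) (min δ (q / κ)) := by
    have : 0 < min (ε / Q) (min δ (q / κ)) := by
      refine lt_min (by positivity) (lt_min hδ0 (by positivity))
    exact ⟨_, half_pos this, half_lt_self this⟩
  rw [lt_min_iff, lt_min_iff, lt_div_iff₀ (by linarith), lt_div_iff₀ (by linarith)] at hb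
  obtain ⟨b1, b2, b3⟩ := hb
  have hκb : 0 < κ * b := by positivity
  set a := (q - κ * b) / Q with ha
  have ha0 : 0 ≤ a := div_nonneg (by nlinarith) hQp.le
  have haQ : a * Q = q - κ * b := by rw [ha]; field_simp
  have ha1 : a < 1 := by rw [ha, div_lt_one hQp]; linarith
  refine ⟨a, b, 1 - a - b, b * (κ - 1) / 2, ha0, hb0.le, ?_, by ring, ?_, ?_, ?_, ?_⟩
  · have : 0 < (1 - a - b) * Q := by nlinarith
    exact (pos_of_mul_pos_left this hQp.le).le
  · have : 0 < b * (κ - 1) := mul_pos hb0 (by linarith)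
    linarith
  · have h3 : 0 < b * (κ - 1) := mul_pos hb0 (by linarith)
    have : a * (n + 7/4 + b * (κ - 1) / 2) = q - κ * b + a * (b * (κ - 1)) / 2 := by
      rw [← hQ, ← haQ]; ring
    rw [this]
    nlinarith
  · have : 3 * a / 4 = 3 * q / (4 * Q) - 3 * κ * b / (4 * Q) := by
      rw [ha]; field_simp
    have h4 : 0 < 3 * κ * b / (4 * Q) := by positivity
    linarith
  · have : p * (7 * a / 4 + b) = q + (p - κ) * b := by
      rw [mul_add, sub_mul]
      have : p * (7 * a / 4) = a * Q := by rw [hp]; ring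
      rw [this, haQ]; ring
    rw [this]
    have : 0 < (p - κ) * b := mul_pos (by linarith) hb0
    linarith

/-- Corollary: for `d ≥ 6`, `(p,q,r) = ((4d+3)/7, (4d+3)/4 - ε, (4d+3)/3 - ε)`,
the Nikodym-order mixed norm bound `‖T[f]‖_{L^q(L^r),N} ≲ ‖f‖_{L^p(ℝ^d)}` holds. -/
theorem statement5 (d : ℕ) (hd : 6 ≤ d) (ε : ℝ) (hε : ε ∈ Set.Ioo (0:ℝ) 1)
    (p q r : ℝ) (hp : p = (4 * (d:ℝ) + 3) / 7) (hq : q = (4 * (d:ℝ) + 3) / 4 - ε)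
    (hr : r = (4 * (d:ℝ) + 3) / 3 - ε) (C : ℝ) (hC : 0 < C) :
    ∃ A : ℝ, 0 < A ∧ ∀ f : Euc (d - 1) × ℝ → ℝ≥0∞, Measurable f →
      nikodymMixedNorm q r C f ≤ ENNReal.ofReal A * lpNorm p f := by
  obtain ⟨h0, h1⟩ := hε
  obtain ⟨n, rfl⟩ : ∃ n, d = n + 1 := ⟨d - 1, by omega⟩
  rw [Nat.add_sub_cancel]
  have hn : 5 ≤ n := by omega
  have hn' : (5:ℝ) ≤ n := by exact_mod_cast hn
  push_cast at hp hq hr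
  set Q : ℝ := n + 7/4 with hQ
  have hp' : p = 4 * Q / 7 := by rw [hp, hQ]; ring
  have hq' : q = Q - ε := by rw [hq, hQ]; ring
  have hr' : r = 4 * Q / 3 - ε := by rw [hr, hQ]; ring
  have hQ0 : 27/4 ≤ Q := by linarith
  have hq0 : 0 < q := by linarith
  have hr0 : 0 < r := by linarith
  have hp0 : 0 < p := by linarith
  have hqr : q ≤ r := by linarith
  obtain ⟨a, b, c, η, ha, hb, hc, habc, hη, e1, e2, e3⟩ := params n Q ε p q r hn' hQ h0 h1 hp' hq' hr'
  obtain ⟨A, hA, HS⟩ := strong_sets hn C hC q r hq0 hr0 hqr a b c η ha hb hc habc hη e1 e2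
  obtain ⟨A', hA', HF⟩ := strong_fun C q r p _ hq0 hr0 hqr hp0 e3 A hA HS
    (Metric.ball (0 : Euc n) (C+2) ×ˢ Set.Ico (0:ℝ) 1) (measurableSet_ball.prod measurableSet_Ico) (by
      rw [Measure.volume_eq_prod, Measure.prod_prod]
      exact ENNReal.mul_ne_top measure_ball_lt_top.ne (by simp))
  have HG := glob C q r p hq0 hr0 hp0 (by linarith) A' HF
  have v0 : volume (Metric.ball (0 : Euc n) 1) ≠ 0 := (Metric.measure_ball_pos _ _ one_pos).ne'
  have v1 : volume (Metric.ball (0 : Euc n) 1) ≠ ⊤ := measure_ball_lt_top.ne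
  refine final C q r p hq0 hr0 hqr (by linarith) _ rfl ?_
    ((volume (Metric.ball (0 : Euc n) 1))⁻¹ * (A' * volume (Metric.ball (0 : Euc n) (C+2)))) ?_ ?_
  · have : (n:ℝ) + (p - 1 - n) * (q / p) = (n * p - (n + 1 - p) * q) / p := by field_simp; ring
    rw [this]
    refine div_pos ?_ hp0
    rw [hp', hq', hQ]
    nlinarith
  · exact ENNReal.mul_ne_top (ENNReal.inv_ne_top.mpr v0) (ENNReal.mul_ne_top hA' measure_ball_lt_top.ne)
  · intro g hg
    have := HG g hg
    rw [mul_assoc]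
    have h2 := mul_le_mul' (le_refl (volume (Metric.ball (0 : Euc n) 1))⁻¹) this
    rwa [← mul_assoc, ENNReal.inv_mul_cancel v0 v1, one_mul] at h2

end
end

section
/- Let d ≥ 2 be an integer, let p, q, r ∈ [1,∞), let C ≥ 1, and let A > 0. If ‖T[f]‖_{L^q(L^r),K} ≤ A ‖f‖_{L^p(ℝ^d)} holds for every nonnegative measurable function f on ℝ^d, then necessarily 1 + (d−1)/r ≥ d/p and 1/q + 1/r ≥ 1/p. -/
open MeasureTheory ENNReal

noncomputable section

/-- The Kakeya-order mixed norm `‖T[f]‖_{L^q(L^r),K}`. -/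
def kakeyaMixedNorm {n : ℕ} (q r C : ℝ) (f : Euc n × ℝ → ℝ≥0∞) : ℝ≥0∞ :=
  (∫⁻ ξ in Metric.ball (0 : Euc n) C, (∫⁻ x, xrayT f ξ x ^ r) ^ (q / r)) ^ (1 / q)

/-- Testing the bound on the indicator of `B(0,2s) × (0,h]`. -/
lemma xray_test {n : ℕ} (p q r : ℝ)
    (hp : 1 ≤ p) (hq : 1 ≤ q) (hr : 1 ≤ r) (C : ℝ) (A : ℝ) (hA : 0 < A)
    (hbound : ∀ f : Euc n × ℝ → ℝ≥0∞, Measurable f →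
      kakeyaMixedNorm q r C f ≤ ENNReal.ofReal A * lpNorm p f)
    (s h ρ : ℝ) (hs : 0 < s) (hh : 0 < h) (hh1 : h ≤ 1) (hρ : 0 < ρ) (hρC : ρ ≤ C)
    (hρh : ρ * h ≤ s) :
    (volume (Metric.ball (0 : Euc n) ρ)) ^ (1 / q) *
      (ENNReal.ofReal h * (volume (Metric.ball (0 : Euc n) s)) ^ (1 / r)) ≤
      ENNReal.ofReal A *
        (volume (Metric.ball (0 : Euc n) (2 * s)) * ENNReal.ofReal h) ^ (1 / p) := by
  have hp0 : 0 < p := by linarith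
  have hq0 : 0 < q := by linarith
  have hr0 : 0 < r := by linarith
  set S : Set (Euc n × ℝ) := Metric.ball (0 : Euc n) (2 * s) ×ˢ Set.Ioc 0 h with hS
  have hSm : MeasurableSet S := measurableSet_ball.prod measurableSet_Ioc
  set f : Euc n × ℝ → ℝ≥0∞ := S.indicator 1 with hf
  have hfm : Measurable f := measurable_one.indicator hSm
  have hT : ∀ ξ ∈ Metric.ball (0 : Euc n) ρ, ∀ x ∈ Metric.ball (0 : Euc n) s,
      ENNReal.ofReal h ≤ xrayT f ξ x := by
    intro ξ hξ x hx
    rw [mem_ball_zero_iff] at hξ hx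
    calc ENNReal.ofReal h = ∫⁻ t in Set.Ioc (0:ℝ) h, 1 := by simp
      _ ≤ ∫⁻ t in Set.Ioc (0:ℝ) h, f (x + t • ξ, t) := by
        refine setLIntegral_mono' measurableSet_Ioc ?_
        intro t ht
        have hmem : (x + t • ξ, t) ∈ S := by
          refine Set.mk_mem_prod ?_ ht
          rw [mem_ball_zero_iff]
          have h1 : ‖t • ξ‖ ≤ h * ρ := by
            rw [norm_smul, Real.norm_of_nonneg ht.1.le]
            exact mul_le_mul ht.2 hξ.le (norm_nonneg _) hh.le
          have h2 := norm_add_le x (t • ξ)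
          nlinarith
        simp [hf, Set.indicator_of_mem hmem]
      _ ≤ xrayT f ξ x := lintegral_mono_set (Set.Ioc_subset_Ioc_right hh1)
  have hlow : (volume (Metric.ball (0 : Euc n) ρ)) ^ (1 / q) *
      (ENNReal.ofReal h * (volume (Metric.ball (0 : Euc n) s)) ^ (1 / r)) ≤
      kakeyaMixedNorm q r C f := by
    set V := volume (Metric.ball (0 : Euc n) ρ)
    set W := volume (Metric.ball (0 : Euc n) s) with hW
    have hin : ∀ ξ ∈ Metric.ball (0 : Euc n) ρ,
        ENNReal.ofReal h ^ r * W ≤ ∫⁻ x, xrayT f ξ x ^ r := by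
      intro ξ hξ
      calc ENNReal.ofReal h ^ r * W
          = ∫⁻ x in Metric.ball (0 : Euc n) s, ENNReal.ofReal h ^ r := by
            rw [setLIntegral_const]
        _ ≤ ∫⁻ x in Metric.ball (0 : Euc n) s, xrayT f ξ x ^ r :=
            setLIntegral_mono' measurableSet_ball
              (fun x hx => ENNReal.rpow_le_rpow (hT ξ hξ x hx) hr0.le)
        _ ≤ ∫⁻ x, xrayT f ξ x ^ r := setLIntegral_le_lintegral _ _
    have hout : (ENNReal.ofReal h ^ r * W) ^ (q / r) * V ≤
        ∫⁻ ξ in Metric.ball (0 : Euc n) C, (∫⁻ x, xrayT f ξ x ^ r) ^ (q / r) := by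
      calc (ENNReal.ofReal h ^ r * W) ^ (q / r) * V
          = ∫⁻ ξ in Metric.ball (0 : Euc n) ρ, (ENNReal.ofReal h ^ r * W) ^ (q / r) := by
            rw [setLIntegral_const]
        _ ≤ ∫⁻ ξ in Metric.ball (0 : Euc n) ρ, (∫⁻ x, xrayT f ξ x ^ r) ^ (q / r) :=
            setLIntegral_mono' measurableSet_ball
              (fun ξ hξ => ENNReal.rpow_le_rpow (hin ξ hξ) (by positivity))
        _ ≤ _ := lintegral_mono_set (Metric.ball_subset_ball hρC)
    refine le_trans (le_of_eq ?_) (ENNReal.rpow_le_rpow hout (by positivity : 0 ≤ 1 / q))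
    rw [ENNReal.mul_rpow_of_nonneg _ _ (by positivity : 0 ≤ 1 / q), ← ENNReal.rpow_mul,
      ENNReal.mul_rpow_of_nonneg _ _ (by positivity : 0 ≤ q / r * (1 / q)), ← ENNReal.rpow_mul]
    have e1 : q / r * (1 / q) = 1 / r := by field_simp
    have e2 : r * (1 / r) = 1 := by field_simp
    rw [e1, e2, ENNReal.rpow_one, mul_comm]
  have hup : lpNorm p f =
      (volume (Metric.ball (0 : Euc n) (2 * s)) * ENNReal.ofReal h) ^ (1 / p) := by
    have e : ∀ z, f z ^ p = S.indicator 1 z := by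
      intro z
      by_cases hz : z ∈ S
      · simp [hf, hz]
      · simp [hf, hz, hp0]
    unfold _root_.lpNorm
    simp_rw [e]
    rw [lintegral_indicator_one hSm, hS, Measure.volume_eq_prod, Measure.prod_prod]
    simp
  rw [← hup]
  exact hlow.trans (hbound f hfm)

lemma exp_compare (a b c K : ℝ) (hc : 0 < c)
    (h : ∀ s : ℝ, 0 < s → s ≤ 1 → c * s ^ a ≤ K * s ^ b) : b ≤ a := by
  by_contra hab
  push Not at hab
  have ht : Filter.Tendsto (fun s : ℝ => K * s ^ (b - a)) (nhdsWithin 0 (Set.Ioi 0))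
      (nhds (K * 0)) := by
    refine Filter.Tendsto.const_mul _ ?_
    have := (Real.continuousAt_rpow_const 0 (b - a) (Or.inr (by linarith))).tendsto
    rw [Real.zero_rpow (by linarith)] at this
    exact this.mono_left nhdsWithin_le_nhds
  rw [mul_zero] at ht
  have hev : ∀ᶠ s : ℝ in nhdsWithin 0 (Set.Ioi 0), c ≤ K * s ^ (b - a) := by
    filter_upwards [Ioc_mem_nhdsGT (zero_lt_one' ℝ)] with s hs
    have h1 := h s hs.1 hs.2
    have h2 : s ^ b = s ^ (b - a) * s ^ a := by
      rw [← Real.rpow_add hs.1]; congr 1; ring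
    rw [h2, ← mul_assoc] at h1
    exact le_of_mul_le_mul_right h1 (Real.rpow_pos_of_pos hs.1 a)
  have := ge_of_tendsto ht hev
  linarith

/-- Real version of `xray_test`. -/
lemma xray_test_real {n : ℕ} (p q r : ℝ)
    (hp : 1 ≤ p) (hq : 1 ≤ q) (hr : 1 ≤ r) (C : ℝ) (A : ℝ) (hA : 0 < A)
    (hbound : ∀ f : Euc n × ℝ → ℝ≥0∞, Measurable f →
      kakeyaMixedNorm q r C f ≤ ENNReal.ofReal A * lpNorm p f) :
    ∃ w : ℝ, 0 < w ∧ ∀ s h ρ : ℝ, 0 < s → 0 < h → h ≤ 1 → 0 < ρ → ρ ≤ C → ρ * h ≤ s →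
      (ρ ^ n * w) ^ (1 / q) * (h * (s ^ n * w) ^ (1 / r)) ≤
        A * ((2 * s) ^ n * w * h) ^ (1 / p) := by
  have hvol : ∀ t : ℝ, 0 < t → volume (Metric.ball (0 : Euc n) t) =
      ENNReal.ofReal (t ^ n * (volume (Metric.ball (0 : Euc n) 1)).toReal) := by
    intro t ht
    rw [Measure.addHaar_ball_of_pos _ _ ht, ENNReal.ofReal_mul (by positivity),
      ENNReal.ofReal_toReal measure_ball_lt_top.ne]
    simp
  have hw : 0 < (volume (Metric.ball (0 : Euc n) 1)).toReal :=
    ENNReal.toReal_pos (Metric.measure_ball_pos _ _ one_pos).ne' measure_ball_lt_top.ne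
  refine ⟨_, hw, ?_⟩
  intro s h ρ hs hh hh1 hρ hρC hρh
  have key := xray_test p q r hp hq hr C A hA hbound s h ρ hs hh hh1 hρ hρC hρh
  rw [hvol _ hs, hvol _ hρ, hvol _ (by positivity : 0 < 2 * s)] at key
  set w := (volume (Metric.ball (0 : Euc n) 1)).toReal
  rw [← ENNReal.ofReal_mul (by positivity), ENNReal.ofReal_rpow_of_pos (by positivity),
    ENNReal.ofReal_rpow_of_pos (by positivity), ENNReal.ofReal_rpow_of_pos (by positivity),
    ← ENNReal.ofReal_mul (by positivity), ← ENNReal.ofReal_mul (by positivity),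
    ← ENNReal.ofReal_mul (by positivity)] at key
  exact (ENNReal.ofReal_le_ofReal_iff (by positivity)).1 key

lemma pow_rpow_aux (s : ℝ) (hs : 0 < s) (n : ℕ) (a : ℝ) : (s ^ n) ^ a = s ^ (n * a) := by
  rw [← Real.rpow_natCast, ← Real.rpow_mul hs.le]

/-- Necessary conditions for the Kakeya-order mixed norm bound:
`1 + (d-1)/r ≥ d/p` and `1/q + 1/r ≥ 1/p`. -/
theorem statement6 (d : ℕ) (hd : 2 ≤ d) (p q r : ℝ)
    (hp : 1 ≤ p) (hq : 1 ≤ q) (hr : 1 ≤ r) (C : ℝ) (hC : 1 ≤ C) (A : ℝ) (hA : 0 < A)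
    (hbound : ∀ f : Euc (d - 1) × ℝ → ℝ≥0∞, Measurable f →
      kakeyaMixedNorm q r C f ≤ ENNReal.ofReal A * lpNorm p f) :
    1 + ((d:ℝ) - 1) / r ≥ (d:ℝ) / p ∧ 1 / q + 1 / r ≥ 1 / p := by
  obtain ⟨n, rfl⟩ : ∃ n, d = n + 1 := ⟨d - 1, by omega⟩
  have hn : 0 < (n : ℝ) := by
    have : 0 < n := by omega
    exact_mod_cast this
  obtain ⟨w, hw, H⟩ := xray_test_real p q r hp hq hr C A hA hbound
  simp only [Nat.add_sub_cancel] at H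
  push_cast
  constructor
  · have := exp_compare (1 + n * (1 / r)) ((n + 1 : ℕ) * (1 / p)) (w ^ (1 / q) * w ^ (1 / r))
      (A * (2 ^ n * w) ^ (1 / p)) (by positivity) (by
        intro s hs hs1
        have h1 := H s s 1 hs hs hs1 one_pos hC (by linarith)
        have e : (2 * s) ^ n * w * s = (2 ^ n * w) * s ^ (n + 1) := by ring
        rw [e, one_pow, one_mul, Real.mul_rpow (by positivity) (by positivity),
          Real.mul_rpow (by positivity) (by positivity), pow_rpow_aux s hs,
          pow_rpow_aux s hs] at h1
        rw [Real.rpow_add hs, Real.rpow_one]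
        calc _ = _ := by ring
          _ ≤ _ := h1
          _ = _ := by ring)
    push_cast at this
    rw [ge_iff_le]
    calc _ = ((n : ℝ) + 1) * (1 / p) := by ring
      _ ≤ _ := this
      _ = _ := by ring
  · have := exp_compare (n * (1 / q) + n * (1 / r)) (n * (1 / p)) (w ^ (1 / q) * w ^ (1 / r))
      (A * (2 ^ n * w) ^ (1 / p)) (by positivity) (by
        intro s hs hs1
        have h1 := H s 1 s hs one_pos le_rfl hs (hs1.trans hC) (by linarith)
        have e : (2 * s) ^ n * w * 1 = (2 ^ n * w) * s ^ n := by ring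
        rw [e, one_mul, Real.mul_rpow (by positivity) (by positivity),
          Real.mul_rpow (by positivity) (by positivity),
          Real.mul_rpow (by positivity) (by positivity), pow_rpow_aux s hs,
          pow_rpow_aux s hs, pow_rpow_aux s hs] at h1
        rw [Real.rpow_add hs]
        calc _ = _ := by ring
          _ ≤ _ := h1
          _ = _ := by ring)
    rw [← mul_add] at this
    exact le_of_mul_le_mul_left this hn

end
end
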